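/- Let Γ be a finite Abelian group. The cycles of weight zero (with respect to Γ) have the Erdős–Pósa property: there is a function f : ℕ → ℕ such that for every Γ-labelled graph G and every k ∈ ℕ, either G contains k pairwise vertex-disjoint cycles of weight zero, or there is a set of at most f(k) vertices meeting every cycle of weight zero in G. -/

import Mathlib

/-!
Zero cycles have the Erdős–Pósa property for two reasons: a graph in which they cannot be hit by few
vertices contains a large grid-like structure, and every large grid-like structure contains many
disjoint zero cycles, whatever the labels are.

The grid-like structure is a pseudo-grid (`PGrid`): three disjoint paths, the rows, and many disjoint
connected sets, the columns, each meeting all three rows, in the same order along each of them.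

*Zero cycles in a pseudo-grid* (`exists_zero_cycle`). In every column some row `b` is joined to each of
the other two rows `a` and `c` by a rung, a path with no inner vertex on a row. Measuring labels along
the rows gives each rung three group elements: its weight and the potentials of its two ends. As `Γ`
is finite, by pigeonhole many columns have the same rows `a`, `b`, `c` and the same six elements. Two
disjoint strands run along the rows and change rows by means of rungs; in a round in which every rung
type is used once in each direction the potentials cancel, and the round adds a fixed element
`2ρ + 2σ`. Starting with an `a`–`b` rung and closing with another one after the right number of rounds
gives a cycle of weight `|Γ| (2ρ + 2σ) = 0` (`homogeneous`). Disjoint blocks of columns give disjoint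
zero cycles (`exists_packs_of_pgrid`).

*Finding a pseudo-grid* (`exists_pgrid`). Let `𝓒` be a family of connected sets that cannot be hit by
few vertices and of which no two remaining members are separated by few vertices. A minimal choice
of a connected set `C` containing a member of `𝓒`, with its neighbours on a subcubic connected graph
outside `C`, yields a large set of terminals any two small subsets of which are linked through `C`
(`exists_mesh`, by Menger's theorem `linked_or_sep`). The subcubic graph is split into many connected
pieces with many terminals each (`split_many`), and linkages through `C` between pieces are made
disjoint, unless two of them cross so much that they contain a pseudo-grid (`disjoint_links`,
`region`). Disjoint connectors between the pieces form a pseudo-grid (`assemble`).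

*The Erdős–Pósa argument* (`erdosPosa`), by induction on `k`. If no small set hits all zero cycles, the
vertex sets of zero cycles form such a family `𝓒`: if a small set `S` separated two of them, then
either one side would contain `k` disjoint zero cycles, which together with the cycle on the other
side make `k + 1`, or both sides would have small hitting sets, whose union with `S` hits every zero
cycle. So there is a large pseudo-grid, and with it `k + 1` disjoint zero cycles.
-/

open SimpleGraph

/-- A cycle in a graph `G`. -/
structure GraphCycle {V : Type} (G : SimpleGraph V) where
  base : V
  walk : G.Walk base base
  isCycle : walk.IsCycle

/-- The weight of a cycle under an edge labelling `lab`. -/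
def GraphCycle.weight {V Γ : Type} [AddCommGroup Γ] {G : SimpleGraph V}
    (lab : Sym2 V → Γ) (C : GraphCycle G) : Γ :=
  (C.walk.edges.map lab).sum

namespace ZeroCycles

/-! ### Connectivity inside a vertex set, and paths as lists -/

/-- `u` and `v` are joined by a walk of `G` all of whose vertices lie in `S`. -/
def Conn {V : Type} (G : SimpleGraph V) (S : Set V) (u v : V) : Prop :=
  ∃ p : G.Walk u v, ∀ x ∈ p.support, x ∈ S

/-- `S` induces a connected (possibly empty) subgraph of `G`. -/
def ConnSet {V : Type} (G : SimpleGraph V) (S : Set V) : Prop :=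
  ∀ x ∈ S, ∀ y ∈ S, Conn G S x y

/-- `l` is the vertex list of a path of `G` from `u` to `v`. -/
structure LP {V : Type} (G : SimpleGraph V) (u v : V) (l : List V) : Prop where
  chain : l.IsChain G.Adj
  nodup : l.Nodup
  head : l.head? = some u
  last : l.getLast? = some v

section basics

variable {V : Type} {G G' : SimpleGraph V} {S S' : Set V} {u v w : V} {l : List V}

theorem Conn.refl (h : u ∈ S) : Conn G S u u := ⟨Walk.nil, by simpa using h⟩

theorem Conn.symm (h : Conn G S u v) : Conn G S v u := by
  obtain ⟨p, hp⟩ := h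
  exact ⟨p.reverse, by simpa using hp⟩

theorem Conn.trans (h : Conn G S u v) (h' : Conn G S v w) : Conn G S u w := by
  obtain ⟨p, hp⟩ := h
  obtain ⟨q, hq⟩ := h'
  refine ⟨p.append q, fun x hx => ?_⟩
  rcases (Walk.mem_support_append_iff p q).1 hx with h | h
  · exact hp x h
  · exact hq x h

theorem Conn.mono (hG : G ≤ G') (hS : S ⊆ S') (h : Conn G S u v) : Conn G' S' u v := by
  obtain ⟨p, hp⟩ := h
  refine ⟨p.mapLe hG, fun x hx => hS (hp x ?_)⟩
  simpa using hx

theorem Conn.left (h : Conn G S u v) : u ∈ S := by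
  obtain ⟨p, hp⟩ := h
  exact hp u p.start_mem_support

theorem Conn.right (h : Conn G S u v) : v ∈ S := h.symm.left

theorem Conn.of_adj (h : G.Adj u v) (hu : u ∈ S) (hv : v ∈ S) : Conn G S u v :=
  ⟨h.toWalk, by simp [hu, hv]⟩

/-- Induction along a walk inside `S`. -/
theorem Conn.inv (h : Conn G S u v) (P : V → Prop) (h0 : P u)
    (hs : ∀ a b, a ∈ S → P a → G.Adj a b → b ∈ S → P b) : P v := by
  obtain ⟨p, hp⟩ := h
  induction p with
  | nil => exact h0
  | cons hadj q ih =>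
    refine ih (hs _ _ (hp _ (by simp)) h0 hadj (hp _ (by simp))) fun x hx => hp x (by simp [hx])

/-- A walk inside `S` stays in its component. -/
theorem Conn.comp (h : Conn G S u v) : Conn G {z | Conn G S u z} u v := by
  have hu := h.left
  refine h.inv (fun z => Conn G {z | Conn G S u z} u z) (Conn.refl (Conn.refl hu)) ?_
  intro a b ha hPa hab hb
  have h1 : Conn G S u a := hPa.right
  exact hPa.trans (Conn.of_adj hab h1 (h1.trans (Conn.of_adj hab ha hb)))

theorem connSet_comp : ConnSet G {z | Conn G S u z} :=
  fun _ hx _ hy => (Conn.comp hx).symm.trans (Conn.comp hy)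

theorem ConnSet.mono_graph (hG : G ≤ G') (h : ConnSet G S) : ConnSet G' S :=
  fun x hx y hy => (h x hx y hy).mono hG subset_rfl

theorem ConnSet.union (h : ConnSet G S) (h' : ConnSet G S')
    (hm : ∃ x ∈ S, ∃ y ∈ S', x = y ∨ G.Adj x y) : ConnSet G (S ∪ S') := by
  obtain ⟨x, hx, y, hy, hxy⟩ := hm
  have key : Conn G (S ∪ S') x y := by
    rcases hxy with rfl | hxy
    · exact Conn.refl (Or.inl hx)
    · exact Conn.of_adj hxy (Or.inl hx) (Or.inr hy)
  have hS : ∀ z ∈ S ∪ S', Conn G (S ∪ S') x z := by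
    rintro z (hz | hz)
    · exact (h x hx z hz).mono le_rfl Set.subset_union_left
    · exact key.trans ((h' y hy z hz).mono le_rfl Set.subset_union_right)
  exact fun a ha b hb => (hS a ha).symm.trans (hS b hb)

theorem Conn.exists_LP (h : Conn G S u v) : ∃ l, LP G u v l ∧ ∀ x ∈ l, x ∈ S := by
  classical
  obtain ⟨p, hp⟩ := h
  refine ⟨p.bypass.support, ⟨p.bypass.isChain_adj_support, p.bypass_isPath.support_nodup, ?_, ?_⟩,
    fun x hx => hp x (p.support_bypass_subset_support hx)⟩
  · rw [List.head?_eq_some_head (Walk.support_ne_nil _)]; simp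
  · rw [List.getLast?_eq_some_getLast (Walk.support_ne_nil _)]; simp

theorem chain_conn_head : ∀ (l : List V) (a : V), (a :: l).IsChain G.Adj →
    ∀ x ∈ a :: l, Conn G {z | z ∈ a :: l} a x
  | [], a, _, x, hx => by
    simp only [List.mem_singleton] at hx
    subst hx
    exact Conn.refl (by simp)
  | b :: l, a, h, x, hx => by
    rw [List.isChain_cons_cons] at h
    rcases List.mem_cons.1 hx with rfl | hx
    · exact Conn.refl (by simp)
    · have := chain_conn_head l b h.2 x hx
      exact (Conn.of_adj h.1 (by simp) (by simp)).trans
        (this.mono le_rfl fun z hz => List.mem_cons_of_mem _ hz)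

theorem chain_connSet (h : l.IsChain G.Adj) : ConnSet G {z | z ∈ l} := by
  cases l with
  | nil => intro x hx; simp at hx
  | cons a l =>
    intro x hx y hy
    exact (chain_conn_head l a h x hx).symm.trans (chain_conn_head l a h y hy)

theorem LP.head_mem (h : LP G u v l) : u ∈ l := List.mem_of_mem_head? (by rw [h.head]; rfl)

theorem LP.last_mem (h : LP G u v l) : v ∈ l := List.mem_of_mem_getLast? (by rw [h.last]; rfl)

theorem LP.conn (h : LP G u v l) (hS : ∀ x ∈ l, x ∈ S) : Conn G S u v :=
  (chain_connSet h.chain u h.head_mem v h.last_mem).mono le_rfl hS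

theorem LP.single (u : V) : LP G u u [u] := ⟨by simp, by simp, rfl, rfl⟩

theorem LP.mono (h : LP G u v l) (hG : G ≤ G') : LP G' u v l :=
  ⟨h.chain.imp fun _ _ hab => hG hab, h.nodup, h.head, h.last⟩

theorem LP.reverse (h : LP G u v l) : LP G v u l.reverse :=
  ⟨List.isChain_reverse.2 (h.chain.imp fun _ _ hab => hab.symm), List.nodup_reverse.2 h.nodup,
    by simpa using h.last, by simpa using h.head⟩

theorem LP.append {a b : V} {l₁ l₂ : List V} (h₁ : LP G u a l₁) (h₂ : LP G b v l₂)
    (hab : G.Adj a b) (hd : ∀ x ∈ l₁, x ∉ l₂) : LP G u v (l₁ ++ l₂) := by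
  refine ⟨?_, ?_, ?_, ?_⟩
  · rw [List.isChain_append]
    refine ⟨h₁.chain, h₂.chain, ?_⟩
    rw [h₁.last, h₂.head]
    simpa using hab
  · rw [List.nodup_append]
    exact ⟨h₁.nodup, h₂.nodup, fun x hx y hy hxy => hd x hx (hxy ▸ hy)⟩
  · rw [List.head?_append, h₁.head]; rfl
  · rw [List.getLast?_append, h₂.last]; rfl

theorem LP.glue {a : V} {l₁ l₂ : List V} (h₁ : LP G u a l₁) (h₂ : LP G a v l₂)
    (hd : ∀ x ∈ l₁, x ∈ l₂ → x = a) :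
    ∃ l, LP G u v l ∧ ∀ x, x ∈ l → x ∈ l₁ ∨ x ∈ l₂ := by
  rcases l₂ with _ | ⟨b, l₂⟩
  · have := h₂.head; simp at this
  have hb : b = a := by have := h₂.head; simpa using this
  subst hb
  rcases l₂ with _ | ⟨c, l₂⟩
  · have hv : b = v := by have := h₂.last; simpa using this
    subst hv
    exact ⟨l₁, h₁, fun x hx => Or.inl hx⟩
  · have hch := h₂.chain
    have hnd := h₂.nodup
    rw [List.isChain_cons_cons] at hch
    rw [List.nodup_cons] at hnd
    have h₃ : LP G c v (c :: l₂) :=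
      ⟨hch.2, hnd.2, rfl, by have := h₂.last; simpa [List.getLast?_cons_cons] using this⟩
    refine ⟨l₁ ++ c :: l₂, h₁.append h₃ hch.1 ?_, ?_⟩
    · intro x hx hx'
      have := hd x hx (List.mem_cons_of_mem _ hx')
      subst this
      exact hnd.1 hx'
    · intro x hx
      rcases List.mem_append.1 hx with h | h
      · exact Or.inl h
      · exact Or.inr (List.mem_cons_of_mem _ h)

/-- Cutting a path at its first vertex in `T`. -/
theorem LP.shorten : ∀ (l : List V) {u v : V} {T : Set V}, LP G u v l → v ∈ T →
    ∃ t ∈ T, ∃ l', LP G u t l' ∧ (∀ x ∈ l', x ∈ l) ∧ ∀ x ∈ l', x ∈ T → x = t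
  | [], u, v, T, h, _ => by have := h.head; simp at this
  | a :: l, u, v, T, h, hv => by
    have ha : a = u := by have := h.head; simpa using this
    subst ha
    by_cases haT : a ∈ T
    · exact ⟨a, haT, [a], LP.single a, by simp, by simp⟩
    · rcases l with _ | ⟨b, l⟩
      · have hv' : a = v := by have := h.last; simpa using this
        subst hv'; exact absurd hv haT
      · have hch := h.chain
        have hnd := h.nodup
        rw [List.isChain_cons_cons] at hch
        rw [List.nodup_cons] at hnd
        have h₃ : LP G b v (b :: l) :=
          ⟨hch.2, hnd.2, rfl, by have := h.last; simpa [List.getLast?_cons_cons] using this⟩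
        obtain ⟨t, ht, l', hl', hsub, hT⟩ := LP.shorten (b :: l) h₃ hv
        refine ⟨t, ht, a :: l', ?_, ?_, ?_⟩
        · exact (LP.single a).append hl' hch.1 (by
            intro x hx hx'
            simp only [List.mem_singleton] at hx
            subst hx
            exact hnd.1 (hsub _ hx'))
        · intro x hx
          rcases List.mem_cons.1 hx with rfl | hx
          · simp
          · exact List.mem_cons_of_mem _ (hsub x hx)
        · intro x hx hxT
          rcases List.mem_cons.1 hx with rfl | hx
          · exact absurd hxT haT
          · exact hT x hx hxT

theorem LP.split_eq {l₁ l₂ : List V} (h : LP G u v (l₁ ++ w :: l₂)) :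
    LP G u w (l₁ ++ [w]) ∧ LP G w v (w :: l₂) := by
  constructor
  · refine ⟨(List.isChain_split.1 h.chain).1, ?_, ?_, by simp⟩
    · have := h.nodup
      rw [show l₁ ++ w :: l₂ = (l₁ ++ [w]) ++ l₂ by simp] at this
      exact (List.nodup_append.1 this).1
    · have := h.head
      rw [List.head?_append] at this ⊢
      simpa using this
  · refine ⟨(List.isChain_split.1 h.chain).2, (List.nodup_append.1 h.nodup).2.1, by simp, ?_⟩
    have := h.last
    rw [List.getLast?_append] at this
    rcases hh : (w :: l₂).getLast? with _ | z
    · simp at hh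
    · rw [hh] at this; simpa using this

/-- Splitting a path at one of its vertices. -/
theorem LP.split (h : LP G u v l) (hw : w ∈ l) :
    ∃ l₁ l₂, l = l₁ ++ w :: l₂ ∧ LP G u w (l₁ ++ [w]) ∧ LP G w v (w :: l₂) := by
  obtain ⟨l₁, l₂, rfl⟩ := List.append_of_mem hw
  exact ⟨l₁, l₂, rfl, h.split_eq⟩

end basics

/-! ### Menger's theorem -/

/-- There are `k` pairwise disjoint paths of `G` from `A` to `B`. -/
def Linked {V : Type} (G : SimpleGraph V) (A B : Set V) (k : ℕ) : Prop :=
  ∃ P : Fin k → List V, (∀ i, ∃ a ∈ A, ∃ b ∈ B, LP G a b (P i)) ∧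
    ∀ i j, i ≠ j → ∀ x ∈ P i, x ∉ P j

/-- Every walk of `G` from `A` to `B` meets `S`. -/
def Sep {V : Type} (G : SimpleGraph V) (A B S : Set V) : Prop :=
  ∀ a ∈ A, ∀ b ∈ B, ¬ Conn G Sᶜ a b

section menger

variable {V : Type} {G G' : SimpleGraph V} {A B S : Set V} {k : ℕ}

theorem Linked.mono (h : Linked G A B k) (hG : G ≤ G') : Linked G' A B k := by
  obtain ⟨P, h1, h2⟩ := h
  refine ⟨P, fun i => ?_, h2⟩
  obtain ⟨a, ha, b, hb, hl⟩ := h1 i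
  exact ⟨a, ha, b, hb, hl.mono hG⟩

theorem Linked.of_le {k' : ℕ} (h : Linked G A B k) (hk : k' ≤ k) : Linked G A B k' := by
  obtain ⟨P, h1, h2⟩ := h
  refine ⟨fun i => P (Fin.castLE hk i), fun i => h1 _, fun i j hij => h2 _ _ ?_⟩
  exact fun h => hij (Fin.castLE_injective hk h)

theorem Linked.symm (h : Linked G A B k) : Linked G B A k := by
  obtain ⟨P, h1, h2⟩ := h
  refine ⟨fun i => (P i).reverse, fun i => ?_, fun i j hij x hx hx' => ?_⟩
  · obtain ⟨a, ha, b, hb, hl⟩ := h1 i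
    exact ⟨b, hb, a, ha, hl.reverse⟩
  · exact h2 i j hij x (List.mem_reverse.1 hx) (List.mem_reverse.1 hx')

theorem Sep.symm (h : Sep G A B S) : Sep G B A S := fun b hb a ha hc => h a ha b hb hc.symm

/-- A linkage of size `|T|` into `T`, indexed by the end vertices and cut so that each path meets
`T` only in its end. -/
theorem Linked.exact {T : Finset V} (h : Linked G A (T : Set V) T.card) :
    ∃ P : V → List V, (∀ t ∈ T, (∃ a ∈ A, LP G a t (P t)) ∧ ∀ z ∈ P t, z ∈ T → z = t) ∧
      ∀ t ∈ T, ∀ t' ∈ T, t ≠ t' → ∀ x ∈ P t, x ∉ P t' := by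
  classical
  obtain ⟨P, h1, h2⟩ := h
  have : ∀ i, ∃ t ∈ T, ∃ l', (∃ a ∈ A, LP G a t l') ∧ (∀ x ∈ l', x ∈ P i) ∧
      ∀ x ∈ l', x ∈ T → x = t := by
    intro i
    obtain ⟨a, ha, b, hb, hl⟩ := h1 i
    obtain ⟨t, ht, l', hl', hs, hT⟩ := LP.shorten _ hl hb
    exact ⟨t, ht, l', ⟨a, ha, hl'⟩, hs, hT⟩
  choose e heT L hL hsub hLT using this
  have hLe : ∀ i, e i ∈ L i := fun i => by
    obtain ⟨a, _, hl⟩ := hL i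
    exact hl.last_mem
  have hinj : Function.Injective e := by
    intro i j hij
    by_contra hne
    exact h2 i j hne (e i) (hsub i _ (hLe i)) (hij ▸ hsub j _ (hLe j))
  have hsurj : ∀ t ∈ T, ∃ i, e i = t := by
    have himg : Finset.univ.image e = T := by
      apply Finset.eq_of_subset_of_card_le
      · intro x hx
        simp only [Finset.mem_image, Finset.mem_univ, true_and] at hx
        obtain ⟨i, rfl⟩ := hx
        exact heT i
      · rw [Finset.card_image_of_injective _ hinj]; simp
    intro t ht
    rw [← himg] at ht
    simpa using ht
  choose g hg using hsurj
  refine ⟨fun t => if h : t ∈ T then L (g t h) else [], fun t ht => ⟨?_, ?_⟩, ?_⟩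
  · have := hL (g t ht)
    rw [hg t ht] at this
    simpa only [dif_pos ht] using this
  · have := hLT (g t ht)
    rw [hg t ht] at this
    simpa only [dif_pos ht] using this
  · intro t ht t' ht' hne x hx hx'
    simp only [dif_pos ht, dif_pos ht'] at hx hx'
    refine h2 (g t ht) (g t' ht') (fun h => hne ?_) x (hsub _ x hx) (hsub _ x hx')
    rw [← hg t ht, ← hg t' ht', h]

/-- Every `A`–`(S+x)` separator of `G - xy` separates `A` from `B` in `G`, when `S` separates `A`
from `B` in `G - xy` but leaves `y` unreachable from `A`. -/
theorem menger_aux {S S' : Set V} {x y : V}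
    (hS : Sep (G.deleteEdges {s(x, y)}) A B S)
    (hy : ∀ a ∈ A, ¬ Conn (G.deleteEdges {s(x, y)}) Sᶜ a y)
    (hS' : Sep (G.deleteEdges {s(x, y)}) A (insert x S) S') : Sep G A B S' := by
  intro a ha b hb hab
  have ha' := hab.left
  have sub : ∀ v, Conn (G.deleteEdges {s(x, y)}) S'ᶜ a v →
      Conn (G.deleteEdges {s(x, y)}) Sᶜ a v := by
    intro v hv
    refine hv.comp.mono le_rfl fun z hz => ?_
    exact fun hzS => hS' a ha z (Or.inr hzS) hz
  have key := hab.inv (fun v => Conn (G.deleteEdges {s(x, y)}) S'ᶜ a v) (Conn.refl ha') (by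
    intro v w hv hPv hvw hw
    by_cases he : s(v, w) = s(x, y)
    · rw [Sym2.eq_iff] at he
      rcases he with ⟨rfl, rfl⟩ | ⟨rfl, rfl⟩
      · exact absurd hPv (hS' a ha _ (Or.inl rfl))
      · exact absurd (sub _ hPv) (hy a ha)
    · refine hPv.trans (Conn.of_adj ?_ hv hw)
      rw [SimpleGraph.deleteEdges_adj]
      exact ⟨hvw, by simpa using he⟩)
  exact hS a ha b hb (sub b key)

/-- Menger's theorem, by induction on the number `n` of edges: an edge is deleted, and if a smaller
separator appears, linkages to it from both sides are glued along the deleted edge. -/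
theorem menger [Finite V] (k : ℕ) : ∀ (n : ℕ) (G : SimpleGraph V) (A B : Set V),
    G.edgeSet.ncard = n → (∀ S : Finset V, Sep G A B S → k ≤ S.card) → Linked G A B k := by
  classical
  intro n
  induction n with
  | zero =>
    intro G A B hn hsep
    have hG : ∀ u v, ¬ G.Adj u v := by
      intro u v huv
      rw [Set.ncard_eq_zero (Set.toFinite _)] at hn
      have : s(u, v) ∈ G.edgeSet := huv
      rw [hn] at this
      exact this
    have hfin : (A ∩ B).Finite := Set.toFinite _
    have hk := hsep hfin.toFinset (by
      intro a ha b hb hab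
      have : a = b := hab.inv (fun v => a = v) rfl (fun v w _ _ h _ => absurd h (hG _ _))
      subst this
      exact hab.left (by simpa using ⟨ha, hb⟩))
    obtain ⟨t, ht, htk⟩ := Finset.exists_subset_card_eq hk
    refine ⟨fun i => [((t.equivFin.symm (Fin.cast htk.symm i)) : V)], fun i => ?_, ?_⟩
    · have := ht (t.equivFin.symm (Fin.cast htk.symm i)).2
      simp only [Set.Finite.mem_toFinset] at this
      exact ⟨_, this.1, _, this.2, LP.single _⟩
    · intro i j hij x hx hx'
      simp only [List.mem_singleton] at hx hx'
      rw [hx] at hx'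
      have := t.equivFin.symm.injective (Subtype.ext hx')
      exact hij (by simpa using this)
  | succ n ih =>
    intro G A B hn hsep
    have hne : G.edgeSet.Nonempty := by
      rw [← Set.ncard_pos (Set.toFinite _)]; omega
    obtain ⟨e, he⟩ := hne
    have hcard : (G.deleteEdges {e}).edgeSet.ncard = n := by
      rw [SimpleGraph.edgeSet_deleteEdges, Set.ncard_sdiff_singleton_of_mem he, hn]; rfl
    have hle : G.deleteEdges {e} ≤ G := SimpleGraph.deleteEdges_le _
    by_cases hall : ∀ S : Finset V, Sep (G.deleteEdges {e}) A B S → k ≤ S.card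
    · exact (ih _ A B hcard hall).mono hle
    push Not at hall
    obtain ⟨S, hS, hSk⟩ := hall
    -- `S` does not separate in `G`, so some end of `e` is reachable from `A` and the other from `B`
    have hnot : ¬ Sep G A B S := fun h => by have := hsep S h; omega
    unfold Sep at hnot
    push Not at hnot
    obtain ⟨a, ha, b, hb, hab⟩ := hnot
    obtain ⟨x, y, rfl, hax, hyb⟩ : ∃ x y, e = s(x, y) ∧
        Conn (G.deleteEdges {e}) (S : Set V)ᶜ a x ∧
        (∃ b ∈ B, Conn (G.deleteEdges {e}) (S : Set V)ᶜ y b) := by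
      by_contra hcon
      push Not at hcon
      have h2 : Conn (G.deleteEdges {e}) (S : Set V)ᶜ a b ∨
          ∃ x y, e = s(x, y) ∧ Conn (G.deleteEdges {e}) (S : Set V)ᶜ a x := by
        refine hab.inv (fun v => Conn (G.deleteEdges {e}) (S : Set V)ᶜ a v ∨
          ∃ x y, e = s(x, y) ∧ Conn (G.deleteEdges {e}) (S : Set V)ᶜ a x)
          (Or.inl (Conn.refl hab.left)) ?_
        rintro v w hv (hP | hP) hvw hw
        · by_cases hh : s(v, w) = e
          · exact Or.inr ⟨v, w, hh.symm, hP⟩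
          · exact Or.inl (hP.trans (Conn.of_adj (by
              rw [SimpleGraph.deleteEdges_adj]; exact ⟨hvw, by simpa using hh⟩) hv hw))
        · exact Or.inr hP
      rcases h2 with h2 | ⟨x, y, hxy, hx⟩
      · exact hS a ha b hb h2
      · have hxB : ∀ b ∈ B, ¬ Conn (G.deleteEdges {e}) (S : Set V)ᶜ y b := hcon x y hxy hx
        have h3 : Conn (G.deleteEdges {e}) (S : Set V)ᶜ b a ∨
            Conn (G.deleteEdges {e}) (S : Set V)ᶜ b x := by
          refine hab.symm.inv (fun v => Conn (G.deleteEdges {e}) (S : Set V)ᶜ b v ∨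
            Conn (G.deleteEdges {e}) (S : Set V)ᶜ b x)
            (Or.inl (Conn.refl hab.right)) ?_
          rintro v w hv (hP | hP) hvw hw
          · by_cases hh : s(v, w) = e
            · rw [hxy, Sym2.eq_iff] at hh
              rcases hh with ⟨rfl, rfl⟩ | ⟨rfl, rfl⟩
              · exact Or.inr hP
              · exact absurd hP.symm (hxB b hb)
            · exact Or.inl (hP.trans (Conn.of_adj (by
                rw [SimpleGraph.deleteEdges_adj]; exact ⟨hvw, by simpa using hh⟩) hv hw))
          · exact Or.inr hP
        rcases h3 with h3 | h3
        · exact hS a ha b hb h3.symm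
        · exact hS a ha b hb (hx.trans h3.symm)
    obtain ⟨b', hb', hyb⟩ := hyb
    have hy : ∀ a ∈ A, ¬ Conn (G.deleteEdges {s(x, y)}) (S : Set V)ᶜ a y :=
      fun a ha h => hS a ha b' hb' (h.trans hyb)
    have hx : ∀ b ∈ B, ¬ Conn (G.deleteEdges {s(x, y)}) (S : Set V)ᶜ b x :=
      fun b hb h => hS a ha b hb (hax.trans h.symm)
    have hxS : x ∉ S := fun h => hax.right h
    have hyS : y ∉ S := fun h => hyb.left h
    have hswap : G.deleteEdges {s(y, x)} = G.deleteEdges {s(x, y)} := by rw [Sym2.eq_swap]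
    have hsepx : ∀ T : Finset V, Sep (G.deleteEdges {s(x, y)}) A (insert x S : Finset V) T →
        k ≤ T.card := fun T hT => hsep T (menger_aux hS hy (by simpa using hT))
    have hsepy : ∀ T : Finset V, Sep (G.deleteEdges {s(x, y)}) B (insert y S : Finset V) T →
        k ≤ T.card := fun T hT => hsep T (Sep.symm (menger_aux (x := y) (y := x) (S := S)
          (by rw [hswap]; exact hS.symm) (by rw [hswap]; exact hx)
          (by rw [hswap]; simpa using hT)))
    have hcx : (insert x S).card = k := by
      apply le_antisymm
      · rw [Finset.card_insert_of_notMem hxS]; omega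
      · refine hsepx (insert x S) ?_
        intro a _ b hb hc
        exact hc.right hb
    have hcy : (insert y S).card = k := by
      rw [Finset.card_insert_of_notMem hyS, ← Finset.card_insert_of_notMem hxS, hcx]
    have hLx : Linked (G.deleteEdges {s(x, y)}) A (insert x S : Finset V) (insert x S).card := by
      rw [hcx]; exact ih _ _ _ hcard hsepx
    have hLy : Linked (G.deleteEdges {s(x, y)}) B (insert y S : Finset V) (insert y S).card := by
      rw [hcy]; exact ih _ _ _ hcard hsepy
    obtain ⟨P, hP, hPd⟩ := hLx.exact
    obtain ⟨Q, hQ, hQd⟩ := hLy.exact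
    -- an interior meeting of a `P`-path and a `Q`-path would bypass `S`
    have reachP : ∀ t ∈ insert x S, ∀ v ∈ P t, v ∉ S →
        ∃ a ∈ A, Conn (G.deleteEdges {s(x, y)}) (S : Set V)ᶜ a v := by
      intro t ht v hv hvS
      obtain ⟨⟨a, ha, hl⟩, hT⟩ := hP t ht
      obtain ⟨l₁, l₂, hl12, h1, h2⟩ := hl.split hv
      refine ⟨a, ha, h1.conn fun z hz hzS => ?_⟩
      have hzP : z ∈ P t := by
        rw [hl12]; simp only [List.mem_append, List.mem_cons] at hz ⊢; tauto
      have hzt := hT z hzP (Finset.mem_insert_of_mem hzS)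
      subst hzt
      have hzv : z ≠ v := fun h => hvS (h ▸ hzS)
      have hz1 : z ∈ l₁ := by
        simp only [List.mem_append, List.mem_singleton] at hz; tauto
      have hz2 := h2.last_mem
      have := hl.nodup
      rw [hl12, List.nodup_append] at this
      exact this.2.2 z hz1 z hz2 rfl
    have reachQ : ∀ t ∈ insert y S, ∀ v ∈ Q t, v ∉ S →
        ∃ a ∈ B, Conn (G.deleteEdges {s(x, y)}) (S : Set V)ᶜ a v := by
      intro t ht v hv hvS
      obtain ⟨⟨a, ha, hl⟩, hT⟩ := hQ t ht
      obtain ⟨l₁, l₂, hl12, h1, h2⟩ := hl.split hv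
      refine ⟨a, ha, h1.conn fun z hz hzS => ?_⟩
      have hzP : z ∈ Q t := by
        rw [hl12]; simp only [List.mem_append, List.mem_cons] at hz ⊢; tauto
      have hzt := hT z hzP (Finset.mem_insert_of_mem hzS)
      subst hzt
      have hzv : z ≠ v := fun h => hvS (h ▸ hzS)
      have hz1 : z ∈ l₁ := by
        simp only [List.mem_append, List.mem_singleton] at hz; tauto
      have hz2 := h2.last_mem
      have := hl.nodup
      rw [hl12, List.nodup_append] at this
      exact this.2.2 z hz1 z hz2 rfl
    have meet : ∀ t ∈ insert x S, ∀ t' ∈ insert y S, ∀ v, v ∈ P t → v ∈ Q t' →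
        v ∈ S ∧ v = t ∧ v = t' := by
      intro t ht t' ht' v hv hv'
      have hvS : v ∈ S := by
        by_contra hvS
        obtain ⟨a, ha, h1⟩ := reachP t ht v hv hvS
        obtain ⟨b, hb, h2⟩ := reachQ t' ht' v hv' hvS
        exact hS a ha b hb (h1.trans h2.symm)
      exact ⟨hvS, (hP t ht).2 v hv (Finset.mem_insert_of_mem hvS),
        (hQ t' ht').2 v hv' (Finset.mem_insert_of_mem hvS)⟩
    have hadj : G.Adj x y := he
    -- glue the path ending in `t` to the one starting in `t` (or in `y`, if `t = x`)
    have glue : ∀ t ∈ insert x S, ∃ l, (∃ a ∈ A, ∃ b ∈ B, LP G a b l) ∧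
        ∀ z ∈ l, z ∈ P t ∨ z ∈ Q (if t = x then y else t) := by
      intro t ht
      by_cases htx : t = x
      · subst htx
        obtain ⟨⟨a, ha, hl⟩, _⟩ := hP t ht
        obtain ⟨⟨b, hb, hl'⟩, _⟩ := hQ y (by simp)
        refine ⟨P t ++ (Q y).reverse, ⟨a, ha, b, hb,
          (hl.mono hle).append (hl'.mono hle).reverse hadj ?_⟩, ?_⟩
        · intro z hz hz'
          have := meet t ht y (by simp) z hz (List.mem_reverse.1 hz')
          exact hxS (this.2.1 ▸ this.1)
        · intro z hz
          simpa using hz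
      · have htS : t ∈ S := by
          rcases Finset.mem_insert.1 ht with h | h
          · exact absurd h htx
          · exact h
        obtain ⟨⟨a, ha, hl⟩, _⟩ := hP t ht
        obtain ⟨⟨b, hb, hl'⟩, _⟩ := hQ t (Finset.mem_insert_of_mem htS)
        obtain ⟨l, hl1, hl2⟩ := (hl.mono hle).glue (hl'.mono hle).reverse (by
          intro z hz hz'
          exact (meet t ht t (Finset.mem_insert_of_mem htS) z hz (List.mem_reverse.1 hz')).2.1)
        exact ⟨l, ⟨a, ha, b, hb, hl1⟩, fun z hz => by simpa [htx] using hl2 z hz⟩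
    choose! L hL hLsub using glue
    have hLd : ∀ t ∈ insert x S, ∀ t' ∈ insert x S, t ≠ t' → ∀ z ∈ L t, z ∉ L t' := by
      have hmem : ∀ t ∈ insert x S, (if t = x then y else t) ∈ insert y S := by
        intro t ht
        split_ifs with h
        · simp
        · rcases Finset.mem_insert.1 ht with h' | h'
          · exact absurd h' h
          · exact Finset.mem_insert_of_mem h'
      have hneq : ∀ t ∈ insert x S, ∀ t' ∈ insert x S, t ≠ t' →
          (if t = x then y else t) ≠ (if t' = x then y else t') := by
        intro t ht t' ht' hne
        rw [Finset.mem_insert] at ht ht'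
        split_ifs with h1 h2 h2
        · exact absurd (h1.trans h2.symm) hne
        · rintro rfl; exact hyS (ht'.resolve_left h2)
        · rintro rfl; exact hyS (ht.resolve_left h1)
        · exact hne
      intro t ht t' ht' hne z hz hz'
      rcases hLsub t ht z hz with h | h <;> rcases hLsub t' ht' z hz' with h' | h'
      · exact hPd t ht t' ht' hne z h h'
      · obtain ⟨h1, h2, h3⟩ := meet t ht _ (hmem t' ht') z h h'
        split_ifs at h3 with h4
        · exact hyS (h3 ▸ h1)
        · exact hne (h2.symm.trans h3)
      · obtain ⟨h1, h2, h3⟩ := meet t' ht' _ (hmem t ht) z h' h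
        split_ifs at h3 with h4
        · exact hyS (h3 ▸ h1)
        · exact hne (h3.symm.trans h2)
      · exact hQd _ (hmem t ht) _ (hmem t' ht') (hneq t ht t' ht' hne) z h h'
    refine ⟨fun i => L ((insert x S).equivFin.symm (Fin.cast hcx.symm i)), fun i => ?_, ?_⟩
    · exact hL _ ((insert x S).equivFin.symm (Fin.cast hcx.symm i)).2
    · intro i j hij
      refine hLd _ (Subtype.prop _) _ (Subtype.prop _) fun h => hij ?_
      have := (insert x S).equivFin.symm.injective (Subtype.ext h)
      simpa using this

/-- Menger's theorem. -/
theorem linked_or_sep [Finite V] (G : SimpleGraph V) (A B : Set V) (k : ℕ) :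
    Linked G A B k ∨ ∃ S : Finset V, S.card < k ∧ Sep G A B S := by
  by_cases h : ∀ S : Finset V, Sep G A B S → k ≤ S.card
  · exact Or.inl (menger k _ G A B rfl h)
  · push Not at h
    obtain ⟨S, h1, h2⟩ := h
    exact Or.inr ⟨S, h2, h1⟩

end menger

/-! ### Splitting a connected graph of small degree -/

section splitting

variable {V : Type} [Finite V] {H : SimpleGraph V}

/-- In a connected graph of maximum degree three one can split off a connected piece containing
at least `n` and at most `3 * n` of the terminals in `X`, with connected remainder. -/
theorem split_one (hdeg : ∀ v, (H.neighborSet v).ncard ≤ 3) {n : ℕ} (hn : 1 ≤ n) {W X : Set V}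
    (hW : ConnSet H W) (hX : n ≤ (W ∩ X).ncard) :
    ∃ D, D ⊆ W ∧ ConnSet H D ∧ ConnSet H (W \ D) ∧ n ≤ (D ∩ X).ncard ∧ (D ∩ X).ncard ≤ 3 * n := by
  classical
  obtain ⟨D, ⟨hDW, hD, hWD, hDX⟩, hmin⟩ := Set.exists_min_image
    {D : Set V | D ⊆ W ∧ ConnSet H D ∧ ConnSet H (W \ D) ∧ n ≤ (D ∩ X).ncard} (fun D => D.ncard)
    (Set.toFinite _) ⟨W, subset_rfl, hW, by simp [ConnSet], hX⟩
  refine ⟨D, hDW, hD, hWD, hDX, ?_⟩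
  have hDne : (D ∩ X).Nonempty := by
    rw [← Set.ncard_pos (Set.toFinite _)]; omega
  obtain ⟨d, hd, -⟩ := hDne
  obtain ⟨v, hvD, hv⟩ : ∃ v ∈ D, (W \ D).Nonempty → ∃ u ∈ W \ D, H.Adj v u := by
    by_cases hne : (W \ D).Nonempty
    · obtain ⟨u, hu⟩ := hne
      by_contra hcon
      push Not at hcon
      have := (hW d (hDW hd) u hu.1).inv (fun z => z ∈ D) hd (by
        intro a b _ ha hab hb
        by_contra hbD
        exact (hcon a ha).2 b ⟨hb, hbD⟩ hab)
      exact hu.2 this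
    · exact ⟨d, hd, fun h => absurd h hne⟩
  let K : V → Set V := fun w => {z | Conn H (D \ {v}) w z}
  have hKD : ∀ w, K w ⊆ D \ {v} := fun w z hz => Conn.right hz
  have hKcomp : ∀ w, ConnSet H (W \ K w) := by
    intro w
    have hvK : v ∈ W \ K w := ⟨hDW hvD, fun h => (hKD w h).2 rfl⟩
    have key : ∀ z ∈ W \ K w, Conn H (W \ K w) z v := by
      rintro z ⟨hz, hzK⟩
      by_cases hzD : z ∈ D
      · by_cases hzv : z = v
        · subst hzv; exact Conn.refl hvK
        have := (hD z hzD v hvD).inv (fun y => Conn H (W \ K w) z v ∨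
            (Conn H (W \ K w) z y ∧ Conn H (D \ {v}) z y))
          (Or.inr ⟨Conn.refl ⟨hz, hzK⟩, Conn.refl ⟨hzD, hzv⟩⟩) (by
            rintro a b ha (h | ⟨h1, h2⟩) hab hb
            · exact Or.inl h
            · by_cases hbv : b = v
              · subst hbv
                exact Or.inl (h1.trans (Conn.of_adj hab h1.right hvK))
              · have h3 : Conn H (D \ {v}) z b := h2.trans (Conn.of_adj hab h2.right ⟨hb, hbv⟩)
                refine Or.inr ⟨h1.trans (Conn.of_adj hab h1.right ⟨hDW hb, fun hbK => ?_⟩), h3⟩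
                exact hzK (Conn.trans hbK h3.symm))
        rcases this with h | h
        · exact h
        · exact absurd rfl h.2.right.2
      · obtain ⟨u, hu, hvu⟩ := hv ⟨z, hz, hzD⟩
        have hsub : W \ D ⊆ W \ K w := fun y hy => ⟨hy.1, fun h => hy.2 (hKD w h).1⟩
        exact ((hWD z ⟨hz, hzD⟩ u hu).mono le_rfl hsub).trans
          (Conn.of_adj hvu.symm (hsub hu) hvK)
    exact fun a ha b hb => (key a ha).trans (key b hb).symm
  have hKcard : ∀ w, (K w ∩ X).ncard ≤ n - 1 := by
    intro w
    by_contra hcon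
    have h1 := hmin (K w) ⟨fun z hz => hDW (hKD w hz).1, connSet_comp, hKcomp w, by omega⟩
    have h2 : (K w).ncard < D.ncard := by
      apply Set.ncard_lt_ncard _ (Set.toFinite _)
      exact ⟨fun z hz => (hKD w hz).1, fun h => (hKD w (h hvD)).2 rfl⟩
    omega
  let N : Finset V := (Set.toFinite (H.neighborSet v)).toFinset
  have hN : N.card ≤ 3 := by
    have := hdeg v
    rwa [Set.ncard_eq_toFinset_card _ (Set.toFinite _)] at this
  have hcover : D ∩ X ⊆ {v} ∪ ⋃ w ∈ N, (K w ∩ X) := by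
    rintro z ⟨hz, hzX⟩
    have := (hD v hvD z hz).inv (fun y => y = v ∨ ∃ w ∈ N, y ∈ K w) (Or.inl rfl) (by
      rintro a b ha h hab hb
      by_cases hbv : b = v
      · exact Or.inl hbv
      right
      rcases h with rfl | ⟨w, hw, haw⟩
      · exact ⟨b, by simpa [N] using hab, Conn.refl ⟨hb, hbv⟩⟩
      · exact ⟨w, hw, Conn.trans haw (Conn.of_adj hab (Conn.right haw) ⟨hb, hbv⟩)⟩)
    rcases this with h | ⟨w, hw, h⟩
    · exact Or.inl h
    · exact Or.inr (Set.mem_iUnion₂.2 ⟨w, hw, h, hzX⟩)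
  calc (D ∩ X).ncard ≤ ({v} ∪ ⋃ w ∈ N, (K w ∩ X)).ncard :=
        Set.ncard_le_ncard hcover (Set.toFinite _)
    _ ≤ ({v} : Set V).ncard + (⋃ w ∈ N, (K w ∩ X)).ncard := Set.ncard_union_le _ _
    _ ≤ 1 + ∑ w ∈ N, (K w ∩ X).ncard := by
        rw [Set.ncard_singleton]
        exact Nat.add_le_add_left (Finset.set_ncard_biUnion_le N fun w => K w ∩ X) 1
    _ ≤ 1 + N.card * (n - 1) := by
        have := Finset.sum_le_card_nsmul N (fun w => (K w ∩ X).ncard) (n - 1) fun w _ => hKcard w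
        rw [smul_eq_mul] at this
        omega
    _ ≤ 1 + 3 * (n - 1) := by gcongr
    _ ≤ 3 * n := by omega

/-- Iterating `split_one` gives `m` disjoint connected pieces with at least `n` terminals each. -/
theorem split_many (hdeg : ∀ v, (H.neighborSet v).ncard ≤ 3) {n : ℕ} (hn : 1 ≤ n) (X : Set V) :
    ∀ (m : ℕ) (W : Set V), ConnSet H W → 3 * n * m ≤ (W ∩ X).ncard →
    ∃ A : ℕ → Set V, (∀ i < m, ConnSet H (A i) ∧ A i ⊆ W ∧ n ≤ (A i ∩ X).ncard) ∧
      ∀ i < m, ∀ j < m, i ≠ j → Disjoint (A i) (A j) := by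
  intro m
  induction m with
  | zero => exact fun W _ _ => ⟨fun _ => ∅, by simp, by simp⟩
  | succ m ih =>
    intro W hW hX
    obtain ⟨D, hDW, hD, hWD, hDX, hDX'⟩ := split_one hdeg hn hW (X := X) (by nlinarith)
    have hcard : 3 * n * m ≤ ((W \ D) ∩ X).ncard := by
      have h1 : (W ∩ X).ncard ≤ (D ∩ X).ncard + ((W \ D) ∩ X).ncard := by
        refine le_trans (Set.ncard_le_ncard ?_ (Set.toFinite _)) (Set.ncard_union_le _ _)
        intro z hz
        by_cases h : z ∈ D
        · exact Or.inl ⟨h, hz.2⟩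
        · exact Or.inr ⟨⟨hz.1, h⟩, hz.2⟩
      have : 3 * n * (m + 1) = 3 * n * m + 3 * n := by ring
      omega
    obtain ⟨A, hA, hAd⟩ := ih _ hWD hcard
    have hAD : ∀ i < m, Disjoint (A i) D := fun i hi =>
      Set.disjoint_left.2 fun z hz hzD => ((hA i hi).2.1 hz).2 hzD
    refine ⟨fun i => if i = m then D else A i, fun i hi => ?_, fun i hi j hj hij => ?_⟩
    · by_cases h : i = m
      · simpa [h] using ⟨hD, hDW, hDX⟩
      · obtain ⟨h1, h2, h3⟩ := hA i (by omega)
        simpa [h] using ⟨h1, h2.trans Set.sdiff_subset, h3⟩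
    · by_cases h : i = m <;> by_cases h' : j = m
      · omega
      · simpa [h, h'] using (hAD j (by omega)).symm
      · simpa [h, h'] using hAD i (by omega)
      · simpa [h, h'] using hAd i (by omega) j (by omega) hij

end splitting

/-! ### A well-linked set attached to a connected graph of small degree -/

/-- The spanning subgraph of `G` formed by the edges with both ends in `U`. -/
def rest {V : Type} (G : SimpleGraph V) (U : Set V) : SimpleGraph V where
  Adj a b := G.Adj a b ∧ a ∈ U ∧ b ∈ U
  symm := ⟨fun _ _ h => ⟨h.1.symm, h.2.2, h.2.1⟩⟩
  loopless := ⟨fun _ h => G.loopless.irrefl _ h.1⟩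

/-- The neighbours of `C` outside `C`. -/
def nbr {V : Type} (G : SimpleGraph V) (C : Set V) : Set V :=
  {x | x ∉ C ∧ ∃ c ∈ C, G.Adj c x}

/-- `H` is a connected subgraph of `G` with vertex set `W` and maximum degree at most three. -/
structure Mesh {V : Type} (G H : SimpleGraph V) (W : Set V) : Prop where
  le : H ≤ G
  mem : ∀ a b, H.Adj a b → a ∈ W
  conn : ConnSet H W
  deg : ∀ v, (H.neighborSet v).ncard ≤ 3

section meshes

variable {V : Type} {G H : SimpleGraph V} {W C : Set V}

theorem rest_le (U : Set V) : rest G U ≤ G := fun _ _ h => h.1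

theorem Conn.to_rest {S U : Set V} {u v : V} (h : Conn G S u v) (hSU : S ⊆ U) :
    Conn (rest G U) S u v :=
  h.inv (fun z => Conn (rest G U) S u z) (Conn.refl h.left) fun _ _ ha hP hab hb =>
    hP.trans (Conn.of_adj ⟨hab, hSU ha, hSU hb⟩ ha hb)

theorem chain_rest_tail {U : Set V} : ∀ (l : List V) (a : V), (a :: l).IsChain (rest G U).Adj →
    ∀ x ∈ l, x ∈ U
  | [], _, _, x, hx => by simp at hx
  | b :: l, a, h, x, hx => by
    rw [List.isChain_cons_cons] at h
    rcases List.mem_cons.1 hx with rfl | hx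
    · exact h.1.2.2
    · exact chain_rest_tail l b h.2 x hx

/-- If a path meets `S` at most in its last vertex, its other vertices are reached off `S`. -/
theorem LP.conn_prefix {S : Set V} {u v x : V} {l : List V} (h : LP G u v l)
    (hS : ∀ z ∈ l, z ∈ S → z = v) (hx : x ∈ l) (hxS : x ∉ S) : Conn G Sᶜ u x := by
  obtain ⟨l₁, l₂, hl12, h1, h2⟩ := h.split hx
  refine h1.conn fun z hz hzS => ?_
  have hzP : z ∈ l := by
    rw [hl12]; simp only [List.mem_append, List.mem_cons] at hz ⊢; tauto
  have hzt := hS z hzP hzS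
  subst hzt
  have hzv : z ≠ x := fun h => hxS (h ▸ hzS)
  have hz1 : z ∈ l₁ := by
    simp only [List.mem_append, List.mem_singleton] at hz; tauto
  have := h.nodup
  rw [hl12, List.nodup_append] at this
  exact this.2.2 z hz1 z h2.last_mem rfl

theorem Sep.of_sep {Y Z S S' : Set V} (h : Sep G Y Z S) (h' : Sep G Y S S') : Sep G Y Z S' :=
  fun y hy z hz hc => h y hy z hz (hc.comp.mono le_rfl fun w hw hwS => h' y hy w hwS hw)

theorem Mesh.pendant [Finite V] (hM : Mesh G H W) {x v : V} (hx : x ∈ W) (hv : v ∉ W)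
    (hxv : G.Adj x v) (hd : (H.neighborSet x).ncard ≤ 2) :
    ∃ H', Mesh G H' (insert v W) ∧ (H'.neighborSet v).ncard ≤ 1 ∧
      (H'.neighborSet x).ncard ≤ (H.neighborSet x).ncard + 1 ∧
      ∀ y ∈ W, y ≠ x → H'.neighborSet y = H.neighborSet y := by
  classical
  have hne : x ≠ v := hxv.ne
  have hadj : ∀ a b, (H ⊔ SimpleGraph.edge x v).Adj a b ↔
      H.Adj a b ∨ (a = x ∧ b = v) ∨ (a = v ∧ b = x) := by
    intro a b
    rw [SimpleGraph.sup_adj, SimpleGraph.edge_adj]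
    constructor
    · rintro (h | ⟨h, -⟩)
      · exact Or.inl h
      · exact Or.inr h
    · rintro (h | ⟨rfl, rfl⟩ | ⟨rfl, rfl⟩)
      · exact Or.inl h
      · exact Or.inr ⟨Or.inl ⟨rfl, rfl⟩, hne⟩
      · exact Or.inr ⟨Or.inr ⟨rfl, rfl⟩, hne.symm⟩
  have hHv : ∀ a, ¬ H.Adj v a := fun a h => hv (hM.mem _ _ h)
  have hNv : (H ⊔ SimpleGraph.edge x v).neighborSet v = {x} := by
    ext z
    simp only [mem_neighborSet, hadj, Set.mem_singleton_iff]
    constructor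
    · rintro (h | ⟨h, -⟩ | ⟨-, h⟩)
      · exact absurd h (hHv z)
      · exact absurd h.symm hne
      · exact h
    · exact fun h => Or.inr (Or.inr ⟨trivial, h⟩)
  have hNx : (H ⊔ SimpleGraph.edge x v).neighborSet x = insert v (H.neighborSet x) := by
    ext z
    simp only [mem_neighborSet, hadj, Set.mem_insert_iff]
    constructor
    · rintro (h | ⟨-, h⟩ | ⟨h, -⟩)
      · exact Or.inr h
      · exact Or.inl h
      · exact absurd h hne
    · rintro (h | h)
      · exact Or.inr (Or.inl ⟨trivial, h⟩)
      · exact Or.inl h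
  have hNo : ∀ y, y ≠ v → y ≠ x →
      (H ⊔ SimpleGraph.edge x v).neighborSet y = H.neighborSet y := by
    intro y hyv hyx
    ext z
    simp only [mem_neighborSet, hadj]
    tauto
  have hcx := Set.ncard_insert_le v (H.neighborSet x)
  refine ⟨H ⊔ SimpleGraph.edge x v, ⟨?_, ?_, ?_, ?_⟩, ?_, ?_, ?_⟩
  · intro a b h
    rcases (hadj a b).1 h with h | ⟨rfl, rfl⟩ | ⟨rfl, rfl⟩
    · exact hM.le h
    · exact hxv
    · exact hxv.symm
  · intro a b h
    rcases (hadj a b).1 h with h | ⟨rfl, rfl⟩ | ⟨rfl, rfl⟩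
    · exact Or.inr (hM.mem _ _ h)
    · exact Or.inr hx
    · exact Or.inl rfl
  · have := (hM.conn.mono_graph (le_sup_left : H ≤ H ⊔ SimpleGraph.edge x v)).union
      (S' := {v}) (by
        rintro a rfl b rfl
        exact Conn.refl rfl) ⟨x, hx, v, rfl, Or.inr ((hadj x v).2 (Or.inr (Or.inl ⟨rfl, rfl⟩)))⟩
    rwa [Set.union_singleton] at this
  · intro y
    by_cases hyv : y = v
    · subst hyv; rw [hNv]; simp
    by_cases hyx : y = x
    · subst hyx; rw [hNx]; omega
    rw [hNo y hyv hyx]; exact hM.deg y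
  · rw [hNv]; simp
  · rw [hNx]; exact hcx
  · exact fun y hy hyx => hNo y (fun h => hv (h ▸ hy)) hyx

theorem Mesh.path [Finite V] : ∀ (l : List V) {H : SimpleGraph V} {W : Set V} {x : V},
    Mesh G H W → x ∈ W → (H.neighborSet x).ncard ≤ 2 → (x :: l).IsChain G.Adj → l.Nodup →
    (∀ y ∈ l, y ∉ W) →
    ∃ H', Mesh G H' (W ∪ {y | y ∈ l}) ∧ (∀ y, l.getLast? = some y → (H'.neighborSet y).ncard ≤ 1) ∧
      ∀ y ∈ W, y ≠ x → H'.neighborSet y = H.neighborSet y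
  | [], H, W, x, hM, _, _, _, _, _ => ⟨H, by simpa using hM, by simp, fun _ _ _ => rfl⟩
  | b :: l, H, W, x, hM, hx, hd, hc, hnd, hW => by
    rw [List.isChain_cons_cons] at hc
    rw [List.nodup_cons] at hnd
    obtain ⟨H₁, hM₁, hb, -, ho⟩ := hM.pendant hx (hW b (by simp)) hc.1 hd
    obtain ⟨H₂, hM₂, hl, ho₂⟩ := Mesh.path l hM₁ (Set.mem_insert b W) (by omega) hc.2 hnd.2 (by
      intro y hy hyW
      rcases hyW with rfl | hyW
      · exact hnd.1 hy
      · exact hW y (List.mem_cons_of_mem _ hy) hyW)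
    have hset : W ∪ {y | y ∈ b :: l} = insert b W ∪ {y | y ∈ l} := by
      ext z; simp only [Set.mem_union, Set.mem_ofPred_eq, List.mem_cons, Set.mem_insert_iff]; tauto
    rw [hset]
    by_cases hnil : l = []
    · subst hnil
      refine ⟨H₁, by simpa using hM₁, ?_, ho⟩
      intro y hy
      have : b = y := by simpa using hy
      exact this ▸ hb
    · refine ⟨H₂, hM₂, ?_, ?_⟩
      · intro y hy
        refine hl y ?_
        obtain ⟨c, l', rfl⟩ := List.exists_cons_of_ne_nil hnil
        simpa [List.getLast?_cons_cons] using hy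
      · intro y hy hyx
        rw [ho₂ y (Or.inr hy) (fun h => hW b (by simp) (h ▸ hy)), ho y hy hyx]

theorem Mesh.paths [Finite V] (hM : Mesh G H W) (st : V → V) (L : V → List V) (T : Finset V) :
    (∀ s ∈ T, st s ∈ W ∧ (H.neighborSet (st s)).ncard ≤ 2 ∧ LP G (st s) s (st s :: L s) ∧
      L s ≠ [] ∧ ∀ y ∈ L s, y ∉ W) →
    (∀ s ∈ T, ∀ s' ∈ T, s ≠ s' → ∀ y ∈ st s :: L s, y ∉ st s' :: L s') →
    ∃ H', Mesh G H' (W ∪ {y | ∃ s ∈ T, y ∈ L s}) ∧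
      (∀ s ∈ T, (H'.neighborSet s).ncard ≤ 1) ∧
      ∀ y ∈ W, (∀ s ∈ T, y ≠ st s) → H'.neighborSet y = H.neighborSet y := by
  classical
  induction T using Finset.induction_on with
  | empty => exact fun _ _ => ⟨H, by simpa using hM, by simp, fun _ _ _ => rfl⟩
  | insert s T hs ih =>
    intro h1 h2
    obtain ⟨H₁, hM₁, hd₁, ho₁⟩ := ih (fun t ht => h1 t (Finset.mem_insert_of_mem ht))
      (fun t ht t' ht' => h2 t (Finset.mem_insert_of_mem ht) t' (Finset.mem_insert_of_mem ht'))
    obtain ⟨hsW, hsd, hlp, hne, hLW⟩ := h1 s (Finset.mem_insert_self _ _)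
    have hdis : ∀ t ∈ T, ∀ y ∈ st s :: L s, y ∉ st t :: L t := fun t ht =>
      h2 s (Finset.mem_insert_self _ _) t (Finset.mem_insert_of_mem ht) (fun h => hs (h ▸ ht))
    have hss : H₁.neighborSet (st s) = H.neighborSet (st s) := ho₁ _ hsW fun t ht h =>
      hdis t ht (st s) (by simp) (by simp [h])
    obtain ⟨H₂, hM₂, hd₂, ho₂⟩ := Mesh.path (L s) hM₁ (Or.inl hsW) (by rw [hss]; exact hsd)
      hlp.chain (List.nodup_cons.1 hlp.nodup).2 (by
        rintro y hy (hyW | ⟨t, ht, hyt⟩)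
        · exact hLW y hy hyW
        · exact hdis t ht y (List.mem_cons_of_mem _ hy) (List.mem_cons_of_mem _ hyt))
    refine ⟨H₂, ?_, ?_, ?_⟩
    · convert hM₂ using 1
      ext z
      simp only [Set.mem_union, Set.mem_ofPred_eq, Finset.mem_insert, exists_eq_or_imp]
      grind
    · intro t ht
      rcases Finset.mem_insert.1 ht with rfl | ht
      · refine hd₂ t ?_
        have := hlp.last
        obtain ⟨c, l', hc⟩ := List.exists_cons_of_ne_nil hne
        rw [hc] at this ⊢
        simpa [List.getLast?_cons_cons] using this
      · have hlt := (h1 t (Finset.mem_insert_of_mem ht)).2.2.1.last_mem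
        have htL : t ∈ L t := by
          have h3 := (h1 t (Finset.mem_insert_of_mem ht)).2.2.1.last
          obtain ⟨c, l', hc⟩ := List.exists_cons_of_ne_nil (h1 t (Finset.mem_insert_of_mem ht)).2.2.2.1
          rw [hc, List.getLast?_cons_cons] at h3
          rw [hc]
          exact List.mem_of_mem_getLast? (by rw [h3]; rfl)
        rw [ho₂ t (Or.inr ⟨t, ht, htL⟩) (fun h => hdis t ht (st s) (by simp) (h ▸ hlt))]
        exact hd₁ t ht
    · intro y hy hst
      rw [ho₂ y (Or.inl hy) (hst s (Finset.mem_insert_self _ _)),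
        ho₁ y hy fun t ht => hst t (Finset.mem_insert_of_mem ht)]

end meshes

/-- A connected set `C` containing a member of `𝓒`, whose at most `h` outer neighbours belong to a
mesh disjoint from `C`; they have degree at most two there, and one of them at most one. -/
structure MeshState {V : Type} (G : SimpleGraph V) (𝓒 : Set (Set V)) (h : ℕ) (C W : Set V)
    (H : SimpleGraph V) : Prop where
  conn : ConnSet G C
  big : ∃ D ∈ 𝓒, D ⊆ C
  sub : nbr G C ⊆ W
  card : (nbr G C).ncard ≤ h
  disj : Disjoint W C
  mesh : Mesh G H W
  deg2 : ∀ x ∈ nbr G C, (H.neighborSet x).ncard ≤ 2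
  deg1 : ∃ x ∈ nbr G C, (H.neighborSet x).ncard ≤ 1

section meshes

variable {V : Type} [Finite V] {G H : SimpleGraph V} {W C : Set V} {𝓒 : Set (Set V)} {h t : ℕ}

/-- Deleting a small set `S ⊇ nbr C` leaves, inside `C`, a component containing a member of `𝓒`. -/
theorem exists_component (hne : ∀ D ∈ 𝓒, D.Nonempty) (hco : ∀ D ∈ 𝓒, ConnSet G D)
    (h1 : ∀ S : Set V, S.ncard ≤ t → ∃ D ∈ 𝓒, Disjoint D S)
    (h2 : ∀ S : Set V, S.ncard ≤ t → ∀ D ∈ 𝓒, ∀ D' ∈ 𝓒, Disjoint D S → Disjoint D' S →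
      ∀ d ∈ D, ∀ d' ∈ D', Conn G Sᶜ d d')
    (hC : ConnSet G C) (hbig : ∃ D ∈ 𝓒, D ⊆ C) {S : Set V} (hS : nbr G C ⊆ S)
    (hSt : S.ncard ≤ t) :
    ∃ C' ⊆ C, ConnSet G C' ∧ (∃ D ∈ 𝓒, D ⊆ C') ∧ nbr G C' ⊆ S ∧ Disjoint C' S ∧
      ((S ∩ C).Nonempty → (nbr G C' ∩ (S ∩ C)).Nonempty) := by
  obtain ⟨D, hD, hDS⟩ := h1 S hSt
  obtain ⟨D₀, hD₀, hD₀C⟩ := hbig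
  obtain ⟨d, hd⟩ := hne D hD
  obtain ⟨d₀, hd₀⟩ := hne D₀ hD₀
  have step : ∀ a b, a ∈ C → G.Adj a b → b ∉ nbr G C → b ∈ C := by
    intro a b ha hab hb
    by_contra hbC
    exact hb ⟨hbC, a, ha, hab⟩
  have hdC : d ∈ C := by
    have hN : (nbr G C).ncard ≤ t := (Set.ncard_le_ncard hS (Set.toFinite _)).trans hSt
    have := h2 _ hN D₀ hD₀ D hD (Set.disjoint_left.2 fun z hz hz' => hz'.1 (hD₀C hz))
      (hDS.mono_right hS) d₀ hd₀ d hd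
    exact this.inv (fun z => z ∈ C) (hD₀C hd₀) fun a b _ ha hab hb => step a b ha hab hb
  have hdS : d ∈ Sᶜ := Set.disjoint_left.1 hDS hd
  have hsub : {z | Conn G Sᶜ d z} ⊆ C := by
    intro z hz
    exact Conn.inv hz (fun z => z ∈ C) hdC fun a b _ ha hab hb =>
      step a b ha hab fun h => hb (hS h)
  have hN : nbr G {z | Conn G Sᶜ d z} ⊆ S := by
    rintro x ⟨hx, c, hc, hcx⟩
    by_contra hxS
    exact hx (Conn.trans hc (Conn.of_adj hcx (Conn.right hc) hxS))
  refine ⟨{z | Conn G Sᶜ d z}, hsub, connSet_comp, ⟨D, hD, fun z hz => ?_⟩, hN, ?_, ?_⟩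
  · exact (hco D hD d hd z hz).mono le_rfl fun w hw => Set.disjoint_left.1 hDS hw
  · exact Set.disjoint_left.2 fun z hz hzS => Conn.right hz hzS
  · rintro ⟨s, hsS, hsC⟩
    by_contra hemp
    have : Conn G Sᶜ d s := (hC d hdC s hsC).inv (fun z => Conn G Sᶜ d z) (Conn.refl hdS) (by
      intro a b _ ha hab hb
      by_contra hnb
      have hbN : b ∈ nbr G {z | Conn G Sᶜ d z} := ⟨hnb, a, ha, hab⟩
      exact hemp ⟨b, hbN, hN hbN, hb⟩)
    exact this.right hsS

/-- If `C` has fewer than `h` outer neighbours, the mesh can be extended by a pendant edge. -/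
theorem MeshState.grow (hne : ∀ D ∈ 𝓒, D.Nonempty) (hco : ∀ D ∈ 𝓒, ConnSet G D)
    (h1 : ∀ S : Set V, S.ncard ≤ t → ∃ D ∈ 𝓒, Disjoint D S)
    (h2 : ∀ S : Set V, S.ncard ≤ t → ∀ D ∈ 𝓒, ∀ D' ∈ 𝓒, Disjoint D S → Disjoint D' S →
      ∀ d ∈ D, ∀ d' ∈ D', Conn G Sᶜ d d') (hht : h ≤ t)
    (hM : MeshState G 𝓒 h C W H) (hlt : (nbr G C).ncard < h) :
    ∃ C' W' H', MeshState G 𝓒 h C' W' H' ∧ C'.ncard < C.ncard := by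
  obtain ⟨x, hxN, hx1⟩ := hM.deg1
  obtain ⟨-, v, hvC, hvx⟩ := id hxN
  have hcard : (insert v (nbr G C)).ncard ≤ h := (Set.ncard_insert_le _ _).trans hlt
  obtain ⟨C', hC'C, hC', hbig, hN, hd, hmeet⟩ := exists_component hne hco h1 h2 hM.conn hM.big
    (Set.subset_insert v (nbr G C)) (hcard.trans hht)
  have hvC' : v ∉ C' := fun h => Set.disjoint_left.1 hd h (Set.mem_insert _ _)
  have hvN : v ∈ nbr G C' := by
    obtain ⟨y, hy, hyS, hyC⟩ := hmeet ⟨v, Set.mem_insert _ _, hvC⟩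
    rcases hyS with rfl | hyS
    · exact hy
    · exact absurd hyC hyS.1
  have hvW : v ∉ W := fun h => Set.disjoint_left.1 hM.disj h hvC
  obtain ⟨H', hM', hv1, hx2, ho⟩ := hM.mesh.pendant (hM.sub hxN) hvW hvx.symm (by omega)
  refine ⟨C', insert v W, H', ⟨hC', hbig, ?_, ?_, ?_, hM', ?_, ⟨v, hvN, hv1⟩⟩, ?_⟩
  · exact hN.trans (Set.insert_subset_insert hM.sub)
  · exact (Set.ncard_le_ncard hN (Set.toFinite _)).trans hcard
  · refine Set.disjoint_left.2 ?_
    rintro z (rfl | hz) hzC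
    · exact hvC' hzC
    · exact Set.disjoint_left.1 hM.disj hz (hC'C hzC)
  · intro y hy
    rcases hN hy with rfl | hyN
    · omega
    · by_cases hyx : y = x
      · subst hyx; omega
      · rw [ho y (hM.sub hyN) hyx]; exact hM.deg2 y hyN
  · exact Set.ncard_lt_ncard ⟨hC'C, fun h => hvC' (h hvC)⟩ (Set.toFinite _)

/-- If a small set `S` separates `Z` from the smaller piece `C'`, the mesh can be extended by
disjoint paths from `Z` to `S`, so as to contain the outer neighbours of `C'`. -/
theorem MeshState.reroute {C' Y Z : Set V} {S : Finset V} (hM : MeshState G 𝓒 h C W H)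
    (hZ : Z ⊆ nbr G C) (hSZ : S.card < Z.ncard)
    (hsep : Sep (rest G (C ∪ Y ∪ Z)) Z Y S)
    (hlink : Linked (rest G (C ∪ Y ∪ Z)) Z (S : Set V) S.card)
    (hC'C : C' ⊆ C) (hC' : ConnSet G C') (hbig : ∃ D ∈ 𝓒, D ⊆ C') (hN : nbr G C' ⊆ nbr G C ∪ S)
    (hd : Disjoint C' (nbr G C ∪ S)) (hmeet : (nbr G C' ∩ ((nbr G C ∪ S) ∩ C)).Nonempty)
    (hnoZ : ∀ z ∈ Z, ∀ c ∈ C', ¬ Conn (rest G (C ∪ Y ∪ Z)) (S : Set V)ᶜ z c) :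
    ∃ C' W' H', MeshState G 𝓒 h C' W' H' ∧ C'.ncard < C.ncard := by
  classical
  obtain ⟨P, hP, hPd⟩ := hlink.exact
  -- the final segment of `P s` after its last vertex in `Z`
  have tails : ∀ s ∈ S.filter (· ∈ C), ∃ z l, z ∈ Z ∧ z ∉ S ∧ LP G z s (z :: l) ∧ l ≠ [] ∧
      (∀ y ∈ z :: l, y ∈ P s) ∧ ∀ y ∈ l, y ∈ C ∧ y ∉ C' := by
    intro s hs
    obtain ⟨hsS, hsC⟩ := Finset.mem_filter.1 hs
    obtain ⟨⟨a, ha, hl⟩, hT⟩ := hP s hsS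
    obtain ⟨z, hz, l', hl', hsub, hlZ⟩ := LP.shorten _ hl.reverse ha
    have hsz : s ≠ z := fun h => (hZ hz).1 (h ▸ hsC)
    have hr := hl'.reverse
    rcases hm : l'.reverse with _ | ⟨b, m⟩
    · have := hr.head; rw [hm] at this; simp at this
    have hb : b = z := by have := hr.head; rw [hm] at this; simpa using this
    subst hb
    have hmem : ∀ y ∈ b :: m, y ∈ l' := fun y hy => by rw [← List.mem_reverse, hm]; exact hy
    have hmP : ∀ y ∈ b :: m, y ∈ P s := fun y hy => List.mem_reverse.1 (hsub y (hmem y hy))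
    rw [hm] at hr
    have hbS : b ∉ S := fun h => hsz (hT b (hmP b (by simp)) h).symm
    refine ⟨b, m, hz, hbS, hr.mono (rest_le _), ?_, hmP, ?_⟩
    · rintro rfl
      have := hr.last
      simp only [List.getLast?_singleton, Option.some.injEq] at this
      exact hsz this.symm
    · intro y hy
      by_cases hys : y = s
      · subst hys
        exact ⟨hsC, fun h => Set.disjoint_left.1 hd h (Or.inr hsS)⟩
      have hyS : y ∉ (S : Set V) := fun h => hys (hT y (hmP y (List.mem_cons_of_mem _ hy)) h)
      have hcon := hr.conn_prefix (S := (S : Set V)) (fun w hw hwS => hT w (hmP w hw) hwS)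
        (List.mem_cons_of_mem _ hy) hyS
      refine ⟨?_, fun h => hnoZ b hz y h hcon⟩
      rcases chain_rest_tail m b hr.chain y hy with (h | h) | h
      · exact h
      · exact absurd hcon (hsep b hz y h)
      · have := hlZ y (hmem y (List.mem_cons_of_mem _ hy)) h
        subst this
        exact absurd hy (List.nodup_cons.1 hr.nodup).1
  choose! st L htZ htS htL htne htP htC using tails
  have hZW : Z ⊆ W := hZ.trans hM.sub
  obtain ⟨H', hM', hd1, ho⟩ := hM.mesh.paths st L (S.filter (· ∈ C)) (by
      intro s hs
      refine ⟨hZW (htZ s hs), hM.deg2 _ (hZ (htZ s hs)), htL s hs, htne s hs, fun y hy hyW => ?_⟩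
      exact Set.disjoint_left.1 hM.disj hyW (htC s hs y hy).1) (by
      intro s hs s' hs' hne y hy hy'
      exact hPd s (Finset.mem_filter.1 hs).1 s' (Finset.mem_filter.1 hs').1 hne y
        (htP s hs y hy) (htP s' hs' y hy'))
  have hlast : ∀ s ∈ S.filter (· ∈ C), s ∈ L s := by
    intro s hs
    rcases List.mem_cons.1 (htL s hs).last_mem with h | h
    · exact absurd (Finset.mem_filter.1 hs).1 (h ▸ htS s hs)
    · exact h
  have hNZ : ∀ x ∈ nbr G C', x ∈ Z → x ∈ S := by
    rintro x ⟨-, c, hc, hcx⟩ hxZ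
    by_contra hxS
    have hcS : c ∉ S := fun h => Set.disjoint_left.1 hd hc (Or.inr h)
    exact hnoZ x hxZ c hc (Conn.of_adj ⟨hcx.symm, Or.inr hxZ, Or.inl (Or.inl (hC'C hc))⟩ hxS hcS)
  refine ⟨C', _, H', ⟨hC', hbig, ?_, ?_, ?_, hM', ?_, ?_⟩, ?_⟩
  · intro x hx
    by_cases hxC : x ∈ C
    · rcases hN hx with h | h
      · exact absurd hxC h.1
      · have : x ∈ S.filter (· ∈ C) := Finset.mem_filter.2 ⟨h, hxC⟩
        exact Or.inr ⟨x, this, hlast x this⟩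
    · obtain ⟨-, c, hc, hcx⟩ := hx
      exact Or.inl (hM.sub ⟨hxC, c, hC'C hc, hcx⟩)
  · have hsub : nbr G C' ⊆ (nbr G C \ Z) ∪ S := by
      intro x hx
      by_cases hxZ : x ∈ Z
      · exact Or.inr (hNZ x hx hxZ)
      · rcases hN hx with h | h
        · exact Or.inl ⟨h, hxZ⟩
        · exact Or.inr h
    have h3 := (Set.ncard_le_ncard hsub (Set.toFinite _)).trans (Set.ncard_union_le _ _)
    rw [Set.ncard_sdiff hZ (Set.toFinite _), Set.ncard_coe_finset] at h3
    have h4 := Set.ncard_le_ncard hZ (Set.toFinite _)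
    have h5 := hM.card
    omega
  · refine Set.disjoint_left.2 ?_
    rintro z (hz | ⟨s, hs, hz⟩) hzC
    · exact Set.disjoint_left.1 hM.disj hz (hC'C hzC)
    · exact (htC s hs z hz).2 hzC
  · intro x hx
    by_cases hxC : x ∈ C
    · rcases hN hx with h | h
      · exact absurd hxC h.1
      · have := hd1 x (Finset.mem_filter.2 ⟨h, hxC⟩)
        omega
    · have hxN : x ∈ nbr G C := by
        obtain ⟨-, c, hc, hcx⟩ := hx
        exact ⟨hxC, c, hC'C hc, hcx⟩
      rw [ho x (hM.sub hxN) fun s hs h => htS s hs (h ▸ hNZ x hx (h ▸ htZ s hs))]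
      exact hM.deg2 x hxN
  · obtain ⟨x, hx, hxS, hxC⟩ := hmeet
    refine ⟨x, hx, hd1 x (Finset.mem_filter.2 ⟨?_, hxC⟩)⟩
    rcases hxS with h | h
    · exact absurd hxC h.1
    · exact h
  · obtain ⟨x, hx, hxS, hxC⟩ := hmeet
    exact Set.ncard_lt_ncard ⟨hC'C, fun h => Set.disjoint_left.1 hd (h hxC) hxS⟩ (Set.toFinite _)

/-- If two subsets of the outer neighbourhood are not linked through `C`, then `C` can be
replaced by a smaller set. -/
theorem MeshState.shrink {K : ℕ} (hne : ∀ D ∈ 𝓒, D.Nonempty) (hco : ∀ D ∈ 𝓒, ConnSet G D)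
    (h1 : ∀ S : Set V, S.ncard ≤ t → ∃ D ∈ 𝓒, Disjoint D S)
    (h2 : ∀ S : Set V, S.ncard ≤ t → ∀ D ∈ 𝓒, ∀ D' ∈ 𝓒, Disjoint D S → Disjoint D' S →
      ∀ d ∈ D, ∀ d' ∈ D', Conn G Sᶜ d d') (hht : h + K ≤ t)
    (hM : MeshState G 𝓒 h C W H) {Y Z : Set V} (hY : Y ⊆ nbr G C) (hZ : Z ⊆ nbr G C)
    (hYZ : Y.ncard = Z.ncard) (hK : Y.ncard ≤ K)
    (hnl : ¬ Linked (rest G (C ∪ Y ∪ Z)) Y Z Y.ncard) :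
    ∃ C' W' H', MeshState G 𝓒 h C' W' H' ∧ C'.ncard < C.ncard := by
  classical
  obtain ⟨S₀, hS₀, hS₀sep⟩ := (linked_or_sep _ _ _ _).resolve_left hnl
  obtain ⟨S, hS, hmin⟩ := Set.exists_min_image
    {S : Finset V | Sep (rest G (C ∪ Y ∪ Z)) Y Z S} (fun S => S.card) (Set.toFinite _) ⟨S₀, hS₀sep⟩
  have hSc : S.card < Y.ncard := (hmin S₀ hS₀sep).trans_lt hS₀
  have hlY : Linked (rest G (C ∪ Y ∪ Z)) Y (S : Set V) S.card := by
    refine (linked_or_sep _ _ _ _).resolve_right ?_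
    rintro ⟨S', hS', hs⟩
    have := hmin S' (Sep.of_sep hS hs)
    omega
  have hlZ : Linked (rest G (C ∪ Y ∪ Z)) Z (S : Set V) S.card := by
    refine (linked_or_sep _ _ _ _).resolve_right ?_
    rintro ⟨S', hS', hs⟩
    have := hmin S' (Sep.of_sep (Sep.symm hS) hs).symm
    omega
  have hmeetS : ((nbr G C ∪ S) ∩ C).Nonempty := by
    by_contra hemp
    have hCS : ∀ c ∈ C, c ∉ S := fun c hc hcS => hemp ⟨c, Or.inr hcS, hc⟩
    have ex : ∀ A : Set V, S.card < A.ncard → ∃ a ∈ A, a ∉ S := by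
      intro A hA
      rw [← Set.ncard_coe_finset] at hA
      exact Set.exists_mem_notMem_of_ncard_lt_ncard hA (Set.toFinite _)
    obtain ⟨y, hy, hyS⟩ := ex Y hSc
    obtain ⟨z, hz, hzS⟩ := ex Z (by omega)
    obtain ⟨-, c, hc, hcy⟩ := hY hy
    obtain ⟨-, c', hc', hcz⟩ := hZ hz
    have hcc : Conn (rest G (C ∪ Y ∪ Z)) (S : Set V)ᶜ c c' :=
      ((hM.conn c hc c' hc').to_rest (U := C ∪ Y ∪ Z) (fun w hw => Or.inl (Or.inl hw))).mono
        le_rfl hCS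
    refine hS y hy z hz (((Conn.of_adj ?_ hyS (hCS c hc)).trans hcc).trans
      (Conn.of_adj ?_ (hCS c' hc') hzS))
    · exact ⟨hcy.symm, Or.inl (Or.inr hy), Or.inl (Or.inl hc)⟩
    · exact ⟨hcz, Or.inl (Or.inl hc'), Or.inr hz⟩
  have hcard : (nbr G C ∪ S).ncard ≤ t := by
    have h3 := Set.ncard_union_le (nbr G C) S
    rw [Set.ncard_coe_finset] at h3
    have := hM.card
    omega
  obtain ⟨C', hC'C, hC', hbig, hN, hd, hmeet⟩ := exists_component hne hco h1 h2 hM.conn hM.big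
    (Set.subset_union_left (s := nbr G C) (t := S)) hcard
  by_cases hnoZ : ∀ z ∈ Z, ∀ c ∈ C', ¬ Conn (rest G (C ∪ Y ∪ Z)) (S : Set V)ᶜ z c
  · exact hM.reroute hZ (by omega) (Sep.symm hS) hlZ hC'C hC' hbig hN hd (hmeet hmeetS) hnoZ
  · push Not at hnoZ
    obtain ⟨z, hz, c, hc, hzc⟩ := hnoZ
    have hnoY : ∀ y ∈ Y, ∀ c ∈ C', ¬ Conn (rest G (C ∪ Y ∪ Z)) (S : Set V)ᶜ y c := by
      intro y hy c' hc' hyc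
      refine hS y hy z hz ((hyc.trans ?_).trans hzc.symm)
      exact ((hC' c' hc' c hc).to_rest (fun w hw => Or.inl (Or.inl (hC'C hw)))).mono le_rfl
        fun w hw hwS => Set.disjoint_left.1 hd hw (Or.inr hwS)
    have hU : C ∪ Y ∪ Z = C ∪ Z ∪ Y := Set.union_right_comm _ _ _
    rw [hU] at hnoY hlY
    have hS' : Sep (rest G (C ∪ Z ∪ Y)) Y Z S := hU ▸ hS
    exact hM.reroute hY hSc hS' hlY hC'C hC' hbig hN hd (hmeet hmeetS) hnoY

/-- If the members of `𝓒` cannot be hit by few vertices and are not separated by few vertices,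
there is a large set `X` of terminals attached to a connected graph of maximum degree three, any
two small subsets of which are linked through a set `C` off that graph. -/
theorem exists_mesh {K : ℕ} (hne : ∀ D ∈ 𝓒, D.Nonempty) (hco : ∀ D ∈ 𝓒, ConnSet G D)
    (h1 : ∀ S : Set V, S.ncard ≤ h + K → ∃ D ∈ 𝓒, Disjoint D S)
    (h2 : ∀ S : Set V, S.ncard ≤ h + K → ∀ D ∈ 𝓒, ∀ D' ∈ 𝓒, Disjoint D S → Disjoint D' S →
      ∀ d ∈ D, ∀ d' ∈ D', Conn G Sᶜ d d') (hh : 1 ≤ h) :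
    ∃ (C W X : Set V) (H : SimpleGraph V), Disjoint W C ∧ Mesh G H W ∧ X ⊆ W ∧ X.ncard = h ∧
      ∀ Y ⊆ X, ∀ Z ⊆ X, Y.ncard = Z.ncard → Y.ncard ≤ K →
        Linked (rest G (C ∪ Y ∪ Z)) Y Z Y.ncard := by
  classical
  have hex : ∃ n, ∃ C W H, MeshState G 𝓒 h C W H ∧ C.ncard = n := by
    obtain ⟨D, hD, -⟩ := h1 ∅ (by simp)
    obtain ⟨d, hd⟩ := hne D hD
    have hN0 : nbr G {z | Conn G Set.univ d z} = ∅ := by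
      ext x
      simp only [Set.mem_empty_iff_false, iff_false]
      rintro ⟨hx, c, hc, hcx⟩
      exact hx (Conn.trans hc (Conn.of_adj hcx trivial trivial))
    have hdC : d ∈ {z | Conn G Set.univ d z} := Conn.refl trivial
    obtain ⟨C', hC'C, hC', hbig, hN, hdj, hmeet⟩ := exists_component (S := {d}) hne hco h1 h2
      (connSet_comp (G := G) (S := Set.univ) (u := d))
      ⟨D, hD, fun z hz => (hco D hD d hd z hz).mono le_rfl (Set.subset_univ _)⟩
      (by rw [hN0]; exact Set.empty_subset _) (by rw [Set.ncard_singleton]; omega)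
    have hdN : d ∈ nbr G C' := by
      obtain ⟨y, hy, hyd, -⟩ := hmeet ⟨d, rfl, hdC⟩
      rw [Set.mem_singleton_iff] at hyd
      exact hyd ▸ hy
    have hbot : ∀ x : V, ((⊥ : SimpleGraph V).neighborSet x).ncard = 0 := by
      intro x
      rw [Set.ncard_eq_zero (Set.toFinite _)]
      ext z; simp
    refine ⟨_, C', {d}, ⊥, ⟨hC', hbig, hN, ?_, hdj.symm, ⟨bot_le, ?_, ?_, ?_⟩, ?_, ?_⟩, rfl⟩
    · have := Set.ncard_le_ncard hN (Set.toFinite _)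
      rw [Set.ncard_singleton] at this
      omega
    · intro a b hab; exact absurd hab (by simp)
    · rintro a rfl b rfl; exact Conn.refl rfl
    · intro v; rw [hbot]; omega
    · intro v _; rw [hbot]; omega
    · exact ⟨d, hdN, by rw [hbot]; omega⟩
  obtain ⟨C, W, H, hM, hCn⟩ := Nat.find_spec hex
  have hno : ¬ ∃ C' W' H', MeshState G 𝓒 h C' W' H' ∧ C'.ncard < C.ncard := by
    rintro ⟨C', W', H', hM', hlt⟩
    rw [hCn] at hlt
    exact Nat.find_min hex hlt ⟨C', W', H', hM', rfl⟩
  refine ⟨C, W, nbr G C, H, hM.disj, hM.mesh, hM.sub, ?_, ?_⟩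
  · refine le_antisymm hM.card (not_lt.1 fun hlt => hno ?_)
    exact hM.grow hne hco h1 h2 (Nat.le_add_right h K) hlt
  · intro Y hY Z hZ hYZ hK
    by_contra hnl
    exact hno (hM.shrink hne hco h1 h2 le_rfl hY hZ hYZ hK hnl)

end meshes

/-! ### Pseudo-grids -/

/-- Three disjoint paths `Q 0, Q 1, Q 2` (the rows) and `N` disjoint connected sets
`R 0, …, R (N - 1)` (the columns) inside `U`, such that every column meets every row and the
columns are met in order along each row. -/
structure PGrid {V : Type} (G : SimpleGraph V) (N : ℕ) (U : Set V) (Q : Fin 3 → List V)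
    (R : ℕ → Set V) : Prop where
  chain : ∀ r, (Q r).IsChain G.Adj
  nodup : ∀ r, (Q r).Nodup
  rowDisj : ∀ r r', r ≠ r' → ∀ x ∈ Q r, x ∉ Q r'
  conn : ∀ i < N, ConnSet G (R i)
  colDisj : ∀ i < N, ∀ j < N, i ≠ j → Disjoint (R i) (R j)
  meet : ∀ i < N, ∀ r, ∃ x ∈ Q r, x ∈ R i
  order : ∀ r, (Q r).Pairwise fun x y => ∀ i < N, ∀ j < N, x ∈ R i → y ∈ R j → i ≤ j
  rowSub : ∀ r, ∀ x ∈ Q r, x ∈ U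
  colSub : ∀ i < N, R i ⊆ U

section region

variable {V : Type} {K HP : SimpleGraph V}

/-- A path leaving a set closed under `HP` uses an edge outside `HP`. -/
theorem exists_exit_edge {T : Set V} (hT : ∀ a ∈ T, ∀ b, HP.Adj a b → b ∈ T) :
    ∀ (u : List V) (c y : V), c ∈ T → y ∈ u → y ∉ T →
    ∃ l₁ a b l₂, c :: u = l₁ ++ a :: b :: l₂ ∧ ¬ HP.Adj a b ∧ c ∈ l₁ ++ [a] ∧ y ∈ b :: l₂
  | [], _, y, _, hy, _ => by simp at hy
  | d :: u, c, y, hc, hy, hyT => by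
    by_cases h : HP.Adj c d
    · have hd := hT c hc d h
      have hyu : y ∈ u := by
        rcases List.mem_cons.1 hy with rfl | h'
        · exact absurd hd hyT
        · exact h'
      obtain ⟨l₁, a, b, l₂, h1, h2, h3, h4⟩ := exists_exit_edge hT u d y hd hyu hyT
      exact ⟨c :: l₁, a, b, l₂, by rw [h1]; rfl, h2, by simp, h4⟩
    · exact ⟨[], c, d, u, rfl, h, by simp, hy⟩

variable [Finite V]

/-- If deleting the edge `ab` of a linkage destroys its size, the resulting separator cuts every
path of the linkage into an initial and a final part, and connected sets avoiding the separator
respect this cut. -/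
theorem exists_cut {Y Z : Set V} {q : ℕ} {L : Fin q → List V} (hHP : HP ≤ K)
    (hL : ∀ i, ∃ y ∈ Y, ∃ z ∈ Z, LP K y z (L i)) (hLd : ∀ i j, i ≠ j → ∀ x ∈ L i, x ∉ L j)
    {i₀ : Fin q} {l₁ l₂ : List V} {a b : V} (he : L i₀ = l₁ ++ a :: b :: l₂)
    (hab : ¬ HP.Adj a b) (hmin : ¬ Linked (K.deleteEdges {s(a, b)}) Y Z q) :
    ∃ S : Finset V, S.card < q ∧ ∀ T T' : Set V, ConnSet HP T → ConnSet HP T' →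
      (∀ x ∈ T, x ∉ S) → (∀ x ∈ T', x ∉ S) → (∃ x ∈ T, x ∈ l₁ ++ [a]) → (∃ x ∈ T', x ∈ b :: l₂) →
      ∀ i, ∃ m₁ m₂, L i = m₁ ++ m₂ ∧ (∀ v ∈ T, v ∉ m₂) ∧ ∀ v ∈ T', v ∉ m₁ := by
  classical
  obtain ⟨S, hSq, hS⟩ := (linked_or_sep _ _ _ _).resolve_left hmin
  refine ⟨S, hSq, ?_⟩
  set K' := K.deleteEdges {s(a, b)} with hK'
  have hKadj : ∀ u v, K.Adj u v → s(u, v) ≠ s(a, b) → K'.Adj u v := by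
    intro u v huv hne
    rw [hK', SimpleGraph.deleteEdges_adj]
    exact ⟨huv, by simpa using hne⟩
  have hHK : HP ≤ K' := by
    intro u v huv
    refine hKadj u v (hHP huv) fun h => hab ?_
    rw [Sym2.eq_iff] at h
    rcases h with ⟨rfl, rfl⟩ | ⟨rfl, rfl⟩
    · exact huv
    · exact huv.symm
  have toK' : ∀ {u v : V} {l : List V}, LP K u v l → (a ∉ l ∨ b ∉ l) → LP K' u v l := by
    intro u v l h hl
    refine ⟨h.chain.imp_of_mem_imp ?_, h.nodup, h.head, h.last⟩
    intro x y hx hy hxy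
    refine hKadj x y hxy fun h => ?_
    rw [Sym2.eq_iff] at h
    rcases h with ⟨rfl, rfl⟩ | ⟨rfl, rfl⟩
    · exact hl.elim (fun h => h hx) fun h => h hy
    · exact hl.elim (fun h => h hy) fun h => h hx
  have ha0 : a ∈ L i₀ := by rw [he]; simp
  have hLK : ∀ i, i ≠ i₀ → ∃ y ∈ Y, ∃ z ∈ Z, LP K' y z (L i) := by
    intro i hi
    obtain ⟨y, hy, z, hz, hl⟩ := hL i
    exact ⟨y, hy, z, hz, toK' hl (Or.inl (hLd i₀ i hi.symm a ha0))⟩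
  have hmeet : ∀ i, i ≠ i₀ → ∃ s ∈ S, s ∈ L i := by
    intro i hi
    obtain ⟨y, hy, z, hz, hl⟩ := hLK i hi
    by_contra hcon
    push Not at hcon
    exact hS y hy z hz (hl.conn fun x hx hxS => hcon x hxS hx)
  have : Nonempty V := ⟨a⟩
  choose! s hsS hsL using hmeet
  have himg : (Finset.univ.erase i₀).image s = S := by
    apply Finset.eq_of_subset_of_card_le
    · intro x hx
      obtain ⟨i, hi, rfl⟩ := Finset.mem_image.1 hx
      exact hsS i (Finset.ne_of_mem_erase hi)
    · rw [Finset.card_image_of_injOn, Finset.card_erase_of_mem (Finset.mem_univ _),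
        Finset.card_univ, Fintype.card_fin]
      · omega
      · intro i hi j hj hij
        by_contra hne
        have hi' : i ≠ i₀ := by simpa using hi
        have hj' : j ≠ i₀ := by simpa using hj
        exact hLd i j hne (s i) (hsL i hi') (hij ▸ hsL j hj')
  have huniq : ∀ v ∈ S, ∀ i, v ∈ L i → i ≠ i₀ ∧ v = s i := by
    intro v hv i hvi
    rw [← himg] at hv
    obtain ⟨j, hj, rfl⟩ := Finset.mem_image.1 hv
    have hj' := Finset.ne_of_mem_erase hj
    have : i = j := by
      by_contra hne
      exact hLd i j hne _ hvi (hsL j hj')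
    subst this
    exact ⟨hj', rfl⟩
  -- vertices reached from `Y`, resp. reaching `Z`, off the separator
  let A : Set V := {v | ∃ y ∈ Y, Conn K' (S : Set V)ᶜ y v}
  let B : Set V := {v | ∃ z ∈ Z, Conn K' (S : Set V)ᶜ z v}
  have h0A : ∀ x ∈ l₁ ++ [a], x ∈ A := by
    obtain ⟨y, hy, z, hz, hl⟩ := hL i₀
    rw [he] at hl
    intro x hx
    have hx0 : x ∈ L i₀ := by
      rw [he]; simp only [List.mem_append, List.mem_cons] at hx ⊢; tauto
    refine ⟨y, hy, (toK' hl.split_eq.1 (Or.inr ?_)).conn_prefix ?_ hx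
      fun h => (huniq x h i₀ hx0).1 rfl⟩
    · have := hl.nodup
      simp only [List.nodup_append, List.nodup_cons, List.mem_cons, ne_eq] at this
      simp only [List.mem_append, List.mem_cons]
      grind
    · intro w hw hwS
      refine absurd rfl (huniq w hwS i₀ ?_).1
      rw [he]; simp only [List.mem_append, List.mem_cons] at hw ⊢; tauto
  have h0B : ∀ x ∈ b :: l₂, x ∈ B := by
    obtain ⟨y, hy, z, hz, hl⟩ := hL i₀
    rw [he] at hl
    have hl' := hl
    rw [show l₁ ++ a :: b :: l₂ = (l₁ ++ [a]) ++ b :: l₂ by simp] at hl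
    intro x hx
    have hx0 : x ∈ L i₀ := by
      rw [he]; simp only [List.mem_append, List.mem_cons] at hx ⊢; tauto
    refine ⟨z, hz, (toK' hl.split_eq.2 (Or.inl ?_)).reverse.conn_prefix ?_ (List.mem_reverse.2 hx)
      fun h => (huniq x h i₀ hx0).1 rfl⟩
    · have := hl'.nodup
      simp only [List.nodup_append, List.nodup_cons] at this
      exact this.2.1.1
    · intro w hw hwS
      refine absurd rfl (huniq w hwS i₀ ?_).1
      rw [List.mem_reverse] at hw
      rw [he]; simp only [List.mem_append, List.mem_cons] at hw ⊢; tauto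
  have hAB : ∀ x ∈ A, x ∉ B := by
    rintro x ⟨y, hy, h⟩ ⟨z, hz, h'⟩
    exact hS y hy z hz (h.trans h'.symm)
  intro T T' hT hT' hTS hTS' ⟨x, hx, hxl⟩ ⟨x', hx', hxl'⟩ i
  have hTA : ∀ v ∈ T, v ∈ A := by
    intro v hv
    obtain ⟨y, hy, h⟩ := h0A x hxl
    exact ⟨y, hy, h.trans ((hT x hx v hv).mono hHK hTS)⟩
  have hTB : ∀ v ∈ T', v ∈ B := by
    intro v hv
    obtain ⟨y, hy, h⟩ := h0B x' hxl'
    exact ⟨y, hy, h.trans ((hT' x' hx' v hv).mono hHK hTS')⟩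
  by_cases hi : i = i₀
  · subst hi
    refine ⟨l₁ ++ [a], b :: l₂, by rw [he]; simp, fun v hv h => hAB v (hTA v hv) (h0B v h),
      fun v hv h => hAB v (h0A v h) (hTB v hv)⟩
  · obtain ⟨y, hy, z, hz, hl⟩ := hLK i hi
    obtain ⟨m, m', hm, hl1, hl2⟩ := hl.split (hsL i hi)
    have hSi : ∀ w ∈ L i, w ∈ (S : Set V) → w = s i := fun w hw hwS => (huniq w hwS i hw).2
    refine ⟨m ++ [s i], m', by rw [hm]; simp, fun v hv h => ?_, fun v hv h => ?_⟩
    · refine hAB v (hTA v hv) ⟨z, hz, hl2.reverse.conn_prefix (S := S) ?_ (by simp [h]) (hTS v hv)⟩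
      intro w hw
      refine hSi w ?_
      rw [List.mem_reverse] at hw
      rw [hm]; exact List.mem_append_right _ hw
    · refine hAB v ⟨y, hy, hl1.conn_prefix (S := S) ?_ h (hTS' v hv)⟩ (hTB v hv)
      intro w hw
      refine hSi w ?_
      rw [hm]; simp only [List.mem_append, List.mem_cons] at hw ⊢; tauto

/-- An edge-minimal linkage (relative to `HP`), three paths of which are met by many disjoint
components of `HP`, yields a pseudo-grid. The components are ordered along the path `L (ι 0)` and
grouped into `N` blocks of size `q * N`. Between consecutive blocks the linkage has an edge outside
`HP`, so minimality and `exists_cut` provide a separator of fewer than `q` vertices. All these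
separators together meet fewer than `q * N` components, so each block retains a component avoiding
them, and the separators force these `N` columns to appear in the same order on every path. -/
theorem region {Y Z : Set V} {q N : ℕ} {L : Fin q → List V} (hHP : HP ≤ K)
    (hL : ∀ i, ∃ y ∈ Y, ∃ z ∈ Z, LP K y z (L i)) (hLd : ∀ i j, i ≠ j → ∀ x ∈ L i, x ∉ L j)
    (hmin : ∀ a b, K.Adj a b → ¬ HP.Adj a b → ¬ Linked (K.deleteEdges {s(a, b)}) Y Z q)
    (P : Fin (q * N * N) → Set V) (hPc : ∀ j, ConnSet HP (P j))
    (hPcl : ∀ j, ∀ a ∈ P j, ∀ b, HP.Adj a b → b ∈ P j)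
    (hPd : ∀ i j, i ≠ j → Disjoint (P i) (P j)) (ι : Fin 3 → Fin q) (hι : Function.Injective ι)
    (hmeet : ∀ j r, ∃ x ∈ L (ι r), x ∈ P j) :
    ∃ Q R, PGrid K N Set.univ Q R := by
  classical
  choose x₀ hx₀L hx₀P using fun j => hmeet j 0
  let f : Fin (q * N * N) → ℕ := fun j => (L (ι 0)).idxOf (x₀ j)
  have hf : Function.Injective f := by
    intro i j hij
    by_contra hne
    have : x₀ i = x₀ j := (List.idxOf_inj (hx₀L i)).1 hij
    exact Set.disjoint_left.1 (hPd i j hne) (hx₀P i) (this ▸ hx₀P j)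
  let σ := Tuple.sort f
  have hmono : StrictMono (f ∘ σ) :=
    (Tuple.monotone_sort f).strictMono_of_injective (hf.comp σ.injective)
  have hq : 0 < q := (ι 0).pos
  -- the separator between the blocks `i - 1` and `i`
  have cuts : ∀ i, ∃ S : Finset V, S.card < q ∧ (0 < i → i < N → ∀ j j' : Fin (q * N * N),
      j.val < q * N * i → q * N * i ≤ j'.val → (∀ x ∈ P (σ j), x ∉ S) → (∀ x ∈ P (σ j'), x ∉ S) →
      ∀ r, ∃ m₁ m₂, L r = m₁ ++ m₂ ∧ (∀ v ∈ P (σ j), v ∉ m₂) ∧ ∀ v ∈ P (σ j'), v ∉ m₁) := by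
    intro i
    by_cases hi : 0 < i ∧ i < N
    swap
    · exact ⟨∅, by simpa using hq, fun h h' => absurd ⟨h, h'⟩ hi⟩
    obtain ⟨hi0, hiN⟩ := hi
    have hpos : 0 < q * N * i := Nat.mul_pos (Nat.mul_pos hq (by omega)) hi0
    have hlt : q * N * i < q * N * N := by
      apply Nat.mul_lt_mul_of_pos_left hiN
      exact Nat.mul_pos hq (by omega)
    let jm : Fin (q * N * N) := ⟨q * N * i - 1, by omega⟩
    let jp : Fin (q * N * N) := ⟨q * N * i, hlt⟩
    have hlt' : f (σ jm) < f (σ jp) := hmono (by rw [Fin.lt_def]; simp only [jm, jp]; omega)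
    obtain ⟨u₁, u₂, hu⟩ := List.append_of_mem (hx₀L (σ jm))
    have hnd : (L (ι 0)).Nodup := by
      obtain ⟨y, hy, z, hz, hl⟩ := hL (ι 0)
      exact hl.nodup
    have hidx : ∀ (m₁ m₂ : List V) (c d : V), L (ι 0) = m₁ ++ m₂ → c ∈ m₁ → d ∈ L (ι 0) →
        ((L (ι 0)).idxOf d ≤ (L (ι 0)).idxOf c → d ∈ m₁) := by
      intro m₁ m₂ c d hm hc hd hdc
      by_contra hd1
      rw [hm, List.idxOf_append_of_mem hc, List.idxOf_append_of_notMem hd1] at hdc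
      have := List.idxOf_lt_length_of_mem hc
      omega
    have hin : x₀ (σ jp) ∈ u₂ := by
      have hnot : x₀ (σ jp) ∉ u₁ ++ [x₀ (σ jm)] := by
        intro h
        have h1 : (L (ι 0)).idxOf (x₀ (σ jp)) ≤ u₁.length := by
          rw [show L (ι 0) = (u₁ ++ [x₀ (σ jm)]) ++ u₂ by rw [hu]; simp,
            List.idxOf_append_of_mem h]
          have := List.idxOf_lt_length_of_mem h
          simp only [List.length_append, List.length_singleton] at this
          omega
        have h2 : (L (ι 0)).idxOf (x₀ (σ jm)) = u₁.length := by
          have hn := hnd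
          rw [hu] at hn ⊢
          rw [List.idxOf_append_of_notMem, List.idxOf_cons_self, Nat.add_zero]
          intro h'
          rw [List.nodup_append] at hn
          exact hn.2.2 _ h' _ (by simp) rfl
        have : f (σ jp) ≤ f (σ jm) := h1.trans h2.ge
        omega
      have h3 := hx₀L (σ jp)
      rw [hu] at h3
      simp only [List.mem_append, List.mem_cons, List.not_mem_nil, or_false] at h3 hnot
      tauto
    have hjne : σ jm ≠ σ jp := fun h => by
      rw [h] at hlt'; omega
    obtain ⟨l₁, a, b, l₂, h1, h2, h3, h4⟩ := exists_exit_edge (hPcl (σ jm)) u₂ _ _ (hx₀P (σ jm)) hin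
      (fun h => Set.disjoint_left.1 (hPd _ _ hjne) h (hx₀P (σ jp)))
    have he : L (ι 0) = (u₁ ++ l₁) ++ a :: b :: l₂ := by rw [hu, h1]; simp
    have hKab : K.Adj a b := by
      obtain ⟨y, hy, z, hz, hl⟩ := hL (ι 0)
      have := hl.chain
      rw [he, List.isChain_append, List.isChain_cons_cons] at this
      exact this.2.1.1
    obtain ⟨S, hS, hcut⟩ := exists_cut hHP hL hLd he h2 (hmin a b hKab h2)
    have he' : L (ι 0) = ((u₁ ++ l₁) ++ [a]) ++ (b :: l₂) := by rw [he]; simp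
    refine ⟨S, hS, fun _ _ j j' hj hj' hjS hjS' => hcut _ _ (hPc _) (hPc _) hjS hjS'
      ⟨_, hx₀P (σ j), ?_⟩ ⟨_, hx₀P (σ j'), ?_⟩⟩
    · refine hidx _ _ (x₀ (σ jm)) _ he' ?_ (hx₀L _) (hmono.monotone ?_)
      · simp only [List.mem_append] at h3 ⊢; tauto
      · rw [Fin.le_def]; simp only [jm]; omega
    · by_contra hcon
      have hmem : x₀ (σ j') ∈ (u₁ ++ l₁) ++ [a] := by
        have := hx₀L (σ j')
        rw [he'] at this
        exact (List.mem_append.1 this).resolve_right hcon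
      have := hidx _ _ _ (x₀ (σ jp)) he' hmem (hx₀L _) (hmono.monotone (by
        rw [Fin.le_def]; exact hj'))
      have hn := hnd
      rw [he', List.nodup_append] at hn
      exact hn.2.2 _ this _ h4 rfl
  choose S hSq hScut using cuts
  -- in every block some component avoids all separators
  have pick : ∀ i, ∃ j : ℕ, i < N → ∃ h : j < q * N * N, q * N * i ≤ j ∧ j < q * N * (i + 1) ∧
      ∀ k < N, ∀ x ∈ P (σ ⟨j, h⟩), x ∉ S k := by
    intro i
    by_cases hi : i < N
    swap
    · exact ⟨0, fun h => absurd h hi⟩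
    by_contra hcon
    push Not at hcon
    have hb : ∀ k : Fin (q * N), q * N * i + k < q * N * N := by
      intro k
      have h1 : q * N * (i + 1) ≤ q * N * N := Nat.mul_le_mul_left _ hi
      have := k.2
      rw [Nat.mul_add] at h1
      omega
    have hw : ∀ k : Fin (q * N), ∃ x ∈ (Finset.range N).biUnion S,
        x ∈ P (σ ⟨q * N * i + k, hb k⟩) := by
      intro k
      obtain ⟨c, hc, x, hx, hxS⟩ := (hcon (q * N * i + k)).2 (hb k) (by omega)
        (by rw [Nat.mul_add]; have := k.2; omega)
      exact ⟨x, Finset.mem_biUnion.2 ⟨c, Finset.mem_range.2 hc, hxS⟩, hx⟩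
    choose w hwS hwP using hw
    have hcard : ((Finset.range N).biUnion S).card < q * N := by
      have h1 : ((Finset.range N).biUnion S).card ≤ (Finset.range N).card * (q - 1) :=
        Finset.card_biUnion_le_card_mul _ _ _ fun k _ => by have := hSq k; omega
      rw [Finset.card_range] at h1
      have h2 : N * (q - 1) < q * N := by
        rw [Nat.mul_comm q N]
        exact Nat.mul_lt_mul_of_pos_left (by omega) (by omega)
      omega
    have hinj : Function.Injective w := by
      intro k k' hkk
      by_contra hne
      refine Set.disjoint_left.1 (hPd (σ ⟨_, hb k⟩) (σ ⟨_, hb k'⟩) ?_) (hwP k) (hkk ▸ hwP k')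
      intro h
      have := σ.injective h
      simp only [Fin.mk.injEq] at this
      exact hne (Fin.ext (by omega))
    have := Finset.card_le_card_of_injOn (s := Finset.univ) w (fun k _ => hwS k) hinj.injOn
    rw [Finset.card_univ, Fintype.card_fin] at this
    omega
  choose g hg using pick
  let R : ℕ → Set V := fun i => if h : g i < q * N * N then P (σ ⟨g i, h⟩) else ∅
  have hR : ∀ i (hi : i < N), R i = P (σ ⟨g i, (hg i hi).1⟩) := fun i hi => dif_pos (hg i hi).1
  have hglt : ∀ i < N, ∀ j < N, i < j → g i < q * N * j := by
    intro i hi j _ hij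
    obtain ⟨_, _, h, _⟩ := hg i hi
    exact h.trans_le (Nat.mul_le_mul_left _ hij)
  refine ⟨fun r => L (ι r), R, ⟨?_, ?_, ?_, ?_, ?_, ?_, ?_, fun _ _ _ => trivial,
    fun _ _ => Set.subset_univ _⟩⟩
  · intro r
    obtain ⟨y, hy, z, hz, hl⟩ := hL (ι r)
    exact hl.chain
  · intro r
    obtain ⟨y, hy, z, hz, hl⟩ := hL (ι r)
    exact hl.nodup
  · exact fun r r' h => hLd _ _ fun h' => h (hι h')
  · intro i hi; rw [hR i hi]; exact (hPc _).mono_graph hHP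
  · intro i hi j hj hij
    rw [hR i hi, hR j hj]
    apply hPd
    intro h
    have h1 := σ.injective h
    simp only [Fin.mk.injEq] at h1
    obtain ⟨_, h2, _⟩ := hg i hi
    obtain ⟨_, h3, _⟩ := hg j hj
    rcases Nat.lt_or_gt_of_ne hij with h | h
    · have := hglt i hi j hj h; omega
    · have := hglt j hj i hi h; omega
  · intro i hi r; rw [hR i hi]; exact hmeet _ r
  · intro r
    rw [List.pairwise_iff_forall_sublist]
    intro x y hxy i hi j hj hx hy
    by_contra hij
    rw [not_le] at hij
    rw [hR i hi] at hx
    rw [hR j hj] at hy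
    obtain ⟨hgi, h2, _, h4⟩ := hg i hi
    obtain ⟨hgj, _, _, h6⟩ := hg j hj
    obtain ⟨m₁, m₂, hm, hm1, hm2⟩ := hScut i (by omega) hi ⟨g j, hgj⟩ ⟨g i, hgi⟩
      (hglt j hj i hi hij) h2 (h6 i hi) (h4 i hi) (ι r)
    rw [hm, List.sublist_append_iff] at hxy
    obtain ⟨c₁, c₂, hc, hc1, hc2⟩ := hxy
    cases c₁ with
    | nil =>
      rw [List.nil_append] at hc
      rw [← hc] at hc2
      exact hm1 y hy (hc2.subset (by simp))
    | cons d c₁ =>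
      have : x = d := by simpa using (List.cons.inj hc).1
      subst this
      exact hm2 x hx (hc1.subset (by simp))

end region

/-! ### Disjoint connectors -/

/-- The vertex list of a connector, given by its first vertex, its interior and its last vertex. -/
def full {V : Type} (p : V × List V × V) : List V := p.1 :: (p.2.1 ++ [p.2.2])

/-- `p` is a path from `Y` to `Z` with all interior vertices in `C`. -/
structure Connector {V : Type} (G : SimpleGraph V) (C Y Z : Set V) (p : V × List V × V) : Prop where
  left : p.1 ∈ Y
  right : p.2.2 ∈ Z
  chain : (full p).IsChain G.Adj
  nodup : (full p).Nodup
  int : ∀ x ∈ p.2.1, x ∈ C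

section connectors

variable {V : Type}

theorem PGrid.mono_graph {G G' : SimpleGraph V} {N : ℕ} {U : Set V} {Q : Fin 3 → List V}
    {R : ℕ → Set V} (h : PGrid G N U Q R) (hG : G ≤ G') : PGrid G' N U Q R :=
  ⟨fun r => (h.chain r).imp fun _ _ hab => hG hab, h.nodup, h.rowDisj,
    fun i hi => (h.conn i hi).mono_graph hG, h.colDisj, h.meet, h.order, h.rowSub, h.colSub⟩

/-- A linkage can be cut so that its paths meet `Y` and `Z` only in their ends. -/
theorem Linked.proper {G : SimpleGraph V} {Y Z : Set V} {k : ℕ} (h : Linked G Y Z k) :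
    ∃ P : Fin k → List V, (∀ i, ∃ y ∈ Y, ∃ z ∈ Z, LP G y z (P i) ∧ (∀ x ∈ P i, x ∈ Y → x = y) ∧
      ∀ x ∈ P i, x ∈ Z → x = z) ∧ ∀ i j, i ≠ j → ∀ x ∈ P i, x ∉ P j := by
  obtain ⟨P, h1, h2⟩ := h
  have : ∀ i, ∃ l, (∃ y ∈ Y, ∃ z ∈ Z, LP G y z l ∧ (∀ x ∈ l, x ∈ Y → x = y) ∧
      ∀ x ∈ l, x ∈ Z → x = z) ∧ ∀ x ∈ l, x ∈ P i := by
    intro i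
    obtain ⟨y, hy, z, hz, hl⟩ := h1 i
    obtain ⟨z', hz', l', hl', hsub, hlZ⟩ := LP.shorten _ hl hz
    obtain ⟨y', hy', l'', hl'', hsub', hlY⟩ := LP.shorten _ hl'.reverse hy
    have hs : ∀ x ∈ l'', x ∈ l' := fun x hx => List.mem_reverse.1 (hsub' x hx)
    refine ⟨l''.reverse, ⟨y', hy', z', hz', hl''.reverse, ?_, ?_⟩, ?_⟩
    · exact fun x hx hxY => hlY x (List.mem_reverse.1 hx) hxY
    · exact fun x hx hxZ => hlZ x (hs x (List.mem_reverse.1 hx)) hxZ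
    · exact fun x hx => hsub x (hs x (List.mem_reverse.1 hx))
  choose P' hP' hsub using this
  exact ⟨P', hP', fun i j hij x hx hx' => h2 i j hij x (hsub i x hx) (hsub j x hx')⟩

theorem exists_connector {G : SimpleGraph V} {C Y Z : Set V} (hYZ : Disjoint Y Z) {y z : V}
    {l : List V} (hy : y ∈ Y) (hz : z ∈ Z) (hl : LP (rest G (C ∪ Y ∪ Z)) y z l)
    (hlY : ∀ x ∈ l, x ∈ Y → x = y) (hlZ : ∀ x ∈ l, x ∈ Z → x = z) :
    ∃ p, Connector G C Y Z p ∧ full p = l := by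
  have hne : y ≠ z := fun h => Set.disjoint_left.1 hYZ hy (h ▸ hz)
  rcases l with _ | ⟨a, l⟩
  · have := hl.head; simp at this
  have ha : a = y := by have := hl.head; simpa using this
  subst ha
  rcases List.eq_nil_or_concat l with rfl | ⟨m, b, rfl⟩
  · have := hl.last
    simp only [List.getLast?_singleton, Option.some.injEq] at this
    exact absurd this hne
  rw [List.concat_eq_append] at *
  have hb : b = z := by
    have := hl.last
    rw [← List.cons_append, List.getLast?_append] at this
    simpa using this
  subst hb
  refine ⟨(a, m, b), ⟨hy, hz, (hl.mono (rest_le _)).chain, hl.nodup, ?_⟩, rfl⟩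
  intro x hx
  have hx' : x ∈ a :: (m ++ [b]) := by simp [hx]
  have hnd := hl.nodup
  rcases chain_rest_tail _ _ hl.chain x (by simp [hx]) with (h | h) | h
  · exact h
  · have := hlY x hx' h
    subst this
    rw [List.nodup_cons] at hnd
    exact absurd (List.mem_append_left _ hx) hnd.1
  · have := hlZ x hx' h
    subst this
    rw [List.nodup_cons, List.nodup_append] at hnd
    exact absurd rfl (hnd.2.2.2 x hx x (by simp))

/-- Large linkages through `C` between `t` pairs of disjoint sets can be made disjoint from
each other, unless they create a pseudo-grid. In the induction on `t`, the new linkage is chosen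
edge-minimal relative to the connectors already found. If many connectors of one pair meet the same
three paths of it, `region` gives a pseudo-grid. Otherwise, after passing to connectors meeting the
same set of paths, each pair spoils at most two paths of the new linkage, which is why it has
`q + 2 * t` paths. -/
theorem disjoint_links (N t : ℕ) : ∀ q, ∃ K, ∀ (V : Type) [Finite V] [Nonempty V] (G : SimpleGraph V)
    (C : Set V) (Y Z : ℕ → Set V), (∀ e < t, Disjoint (Y e ∪ Z e) C) → (∀ e < t, Disjoint (Y e) (Z e)) →
    (∀ e < t, ∀ e' < t, e ≠ e' → Disjoint (Y e ∪ Z e) (Y e' ∪ Z e')) →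
    (∀ e < t, Linked (rest G (C ∪ Y e ∪ Z e)) (Y e) (Z e) K) →
    (∃ Q R, PGrid G N Set.univ Q R) ∨ ∃ T : ℕ → Fin q → V × List V × V,
      (∀ e < t, ∀ i, Connector G C (Y e) (Z e) (T e i)) ∧
      ∀ e < t, ∀ e' < t, ∀ i i', (e ≠ e' ∨ i ≠ i') → ∀ x ∈ full (T e i), x ∉ full (T e' i') := by
  classical
  induction t with
  | zero =>
    intro q
    refine ⟨0, fun V _ _ G C Y Z _ _ _ _ => ?_⟩
    exact Or.inr ⟨fun _ _ => (Classical.arbitrary V, [], Classical.arbitrary V), by simp, by simp⟩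
  | succ t ih =>
    intro q
    let q₂ := q + 2 * t
    let m := max q (q₂ * N * N)
    obtain ⟨K₁, hK₁⟩ := ih (2 ^ q₂ * m)
    refine ⟨max K₁ q₂, fun V _ _ G C Y Z hC hYZ hdj hlink => ?_⟩
    rcases hK₁ V G C Y Z (fun e he => hC e (by omega)) (fun e he => hYZ e (by omega))
      (fun e he e' he' => hdj e (by omega) e' (by omega))
      (fun e he => (hlink e (by omega)).of_le (le_max_left _ _)) with h | ⟨T, hT, hTd⟩
    · exact Or.inl h
    let HP : SimpleGraph V :=
      { Adj := fun a b => G.Adj a b ∧ ∃ e < t, ∃ i, a ∈ (T e i).2.1 ∧ b ∈ (T e i).2.1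
        symm := ⟨fun a b ⟨h, e, he, i, ha, hb⟩ => ⟨h.symm, e, he, i, hb, ha⟩⟩
        loopless := ⟨fun a h => G.loopless.irrefl _ h.1⟩ }
    have hInn : ∀ e i x, x ∈ (T e i).2.1 → x ∈ full (T e i) := by
      intro e i x hx; simp [full, hx]
    have hHP0 : HP ≤ rest G (C ∪ Y t ∪ Z t) := by
      rintro a b ⟨h, e, he, i, ha, hb⟩
      exact ⟨h, Or.inl (Or.inl ((hT e he i).int a ha)), Or.inl (Or.inl ((hT e he i).int b hb))⟩
    obtain ⟨K, ⟨hHK, hK0, hKl⟩, hKmin⟩ := Set.exists_min_image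
      {K : SimpleGraph V | HP ≤ K ∧ K ≤ rest G (C ∪ Y t ∪ Z t) ∧ Linked K (Y t) (Z t) q₂}
      (fun K => K.edgeSet.ncard) (Set.toFinite _)
      ⟨_, hHP0, le_rfl, (hlink t (by omega)).of_le (le_max_right _ _)⟩
    have hmin : ∀ a b, K.Adj a b → ¬ HP.Adj a b →
        ¬ Linked (K.deleteEdges {s(a, b)}) (Y t) (Z t) q₂ := by
      intro a b hab hHab hl
      have h1 := hKmin (K.deleteEdges {s(a, b)}) ⟨?_, (deleteEdges_le _).trans hK0, hl⟩
      · have h2 : (K.deleteEdges {s(a, b)}).edgeSet.ncard < K.edgeSet.ncard := by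
          rw [SimpleGraph.edgeSet_deleteEdges]
          exact Set.ncard_sdiff_singleton_lt_of_mem (show s(a, b) ∈ K.edgeSet from hab)
            (Set.toFinite _)
        exact absurd h1 (not_le.2 h2)
      · intro u v huv
        rw [SimpleGraph.deleteEdges_adj]
        refine ⟨hHK huv, fun h => hHab ?_⟩
        rw [Set.mem_singleton_iff, Sym2.eq_iff] at h
        rcases h with ⟨rfl, rfl⟩ | ⟨rfl, rfl⟩
        · exact huv
        · exact huv.symm
    obtain ⟨L, hL, hLd⟩ := hKl.proper
    have hcon : ∀ j, ∃ p, Connector G C (Y t) (Z t) p ∧ full p = L j := by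
      intro j
      obtain ⟨y, hy, z, hz, hl, hlY, hlZ⟩ := hL j
      exact exists_connector (hYZ t (by omega)) hy hz (hl.mono hK0) hlY hlZ
    choose p hp hpL using hcon
    -- the rows met by the interior of a connector, and a popular value of this set
    let rows : ℕ → Fin (2 ^ q₂ * m) → Finset (Fin q₂) := fun e i =>
      Finset.univ.filter fun j => ∃ x ∈ (T e i).2.1, x ∈ L j
    have pop : ∀ e, ∃ ρ : Finset (Fin q₂), ∃ φ : Fin m → Fin (2 ^ q₂ * m),
        Function.Injective φ ∧ ∀ i, rows e (φ i) = ρ := by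
      intro e
      obtain ⟨ρ, hρ⟩ := Fintype.exists_le_card_fiber_of_mul_le_card (rows e) (n := m) (by
        rw [Fintype.card_finset, Fintype.card_fin, Fintype.card_fin])
      refine ⟨ρ, Finset.orderEmbOfCardLe _ hρ, (Finset.orderEmbOfCardLe _ hρ).injective, ?_⟩
      intro i
      have := Finset.orderEmbOfCardLe_mem _ hρ i
      simpa using this
    choose ρ φ hφ hρ using pop
    by_cases hbig : ∃ e < t, 3 ≤ (ρ e).card
    · obtain ⟨e, he, h3⟩ := hbig
      left
      have hmn : q₂ * N * N ≤ m := le_max_right _ _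
      suffices key : ∃ Q R, PGrid K N Set.univ Q R by
        obtain ⟨Q, R, hQR⟩ := key
        exact ⟨Q, R, hQR.mono_graph (hK0.trans (rest_le _))⟩
      refine region (N := N) hHK
        (fun i => by obtain ⟨y, hy, z, hz, hl, -⟩ := hL i; exact ⟨y, hy, z, hz, hl⟩) hLd hmin
        (fun j => {x | x ∈ (T e (φ e (Fin.castLE hmn j))).2.1}) ?_ ?_ ?_
        (Finset.orderEmbOfCardLe _ h3) (Finset.orderEmbOfCardLe _ h3).injective ?_
      · intro j
        have hch : ((T e (φ e (Fin.castLE hmn j))).2.1).IsChain G.Adj := by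
          have := (hT e he (φ e (Fin.castLE hmn j))).chain
          unfold full at this
          exact (List.isChain_append.1 (List.isChain_of_isChain_cons this)).1
        refine chain_connSet (hch.imp_of_mem_imp fun a b ha hb hab => ?_)
        exact ⟨hab, e, he, _, ha, hb⟩
      · rintro j a ha b ⟨hab, e', he', i', ha', hb'⟩
        by_cases h : e = e' ∧ φ e (Fin.castLE hmn j) = i'
        · obtain ⟨rfl, rfl⟩ := h
          exact hb'
        · exact absurd (hInn _ _ _ ha') (hTd e he e' he' _ i' (by tauto) a (hInn _ _ _ ha))
      · intro i j hij
        refine Set.disjoint_left.2 fun x hx hx' => hTd e he e he _ _ (Or.inr ?_) x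
          (hInn _ _ _ hx) (hInn _ _ _ hx')
        exact fun h => hij (Fin.castLE_injective hmn (hφ e h))
      · intro j r
        have h1 := Finset.orderEmbOfCardLe_mem _ h3 r
        generalize (ρ e).orderEmbOfCardLe h3 r = a at h1 ⊢
        rw [← hρ e (Fin.castLE hmn j)] at h1
        obtain ⟨x, hx, hxL⟩ := (Finset.mem_filter.1 h1).2
        exact ⟨x, hxL, hx⟩
    · push Not at hbig
      right
      have hgood : q ≤ (Finset.univ \ (Finset.range t).biUnion ρ).card := by
        have h1 : ((Finset.range t).biUnion ρ).card ≤ (Finset.range t).card * 2 :=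
          Finset.card_biUnion_le_card_mul _ _ _ fun e he => by
            have := hbig e (Finset.mem_range.1 he); omega
        have h2 := Finset.le_card_sdiff ((Finset.range t).biUnion ρ) Finset.univ
        rw [Finset.card_range] at h1
        rw [Finset.card_univ, Fintype.card_fin] at h2
        have : q₂ = q + 2 * t := rfl
        omega
      let ψ := Finset.orderEmbOfCardLe _ hgood
      have hψ : ∀ i, ∀ e < t, ψ i ∉ ρ e := by
        intro i e he h
        have := Finset.orderEmbOfCardLe_mem _ hgood i
        rw [Finset.mem_sdiff, Finset.mem_biUnion] at this
        exact this.2 ⟨e, Finset.mem_range.2 he, h⟩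
      have hmq : q ≤ m := le_max_left _ _
      have cross : ∀ e < t, ∀ i i', ∀ x ∈ full (T e (φ e (Fin.castLE hmq i))),
          x ∉ full (p (ψ i')) := by
        intro e he i i' x hx hx'
        have hYZe : x ∈ Y e ∪ Z e → x ∉ Y t ∪ Z t := fun h =>
          Set.disjoint_left.1 (hdj e (by omega) t (by omega) (by omega)) h
        have hCe : x ∈ Y e ∪ Z e → x ∉ C := fun h => Set.disjoint_left.1 (hC e (by omega)) h
        have hx2 : x ∈ C ∨ x ∈ Y t ∪ Z t := by
          simp only [full, List.mem_cons, List.mem_append, List.not_mem_nil, or_false] at hx'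
          rcases hx' with rfl | h | rfl
          · exact Or.inr (Or.inl (hp _).left)
          · exact Or.inl ((hp _).int x h)
          · exact Or.inr (Or.inr (hp _).right)
        have hends : x ∉ Y e ∪ Z e := fun h => hx2.elim (hCe h) (hYZe h)
        have hxi : x ∈ (T e (φ e (Fin.castLE hmq i))).2.1 := by
          simp only [full, List.mem_cons, List.mem_append, List.not_mem_nil, or_false] at hx
          rcases hx with rfl | h | rfl
          · exact absurd (Or.inl (hT e he _).left) hends
          · exact h
          · exact absurd (Or.inr (hT e he _).right) hends
        refine hψ i' e he ?_
        rw [← hρ e (Fin.castLE hmq i)]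
        exact Finset.mem_filter.2 ⟨Finset.mem_univ _, x, hxi, hpL (ψ i') ▸ hx'⟩
      refine ⟨fun e i => if e = t then p (ψ i) else T e (φ e (Fin.castLE hmq i)), ?_, ?_⟩
      · intro e he i
        by_cases h : e = t
        · subst h; simpa using hp (ψ i)
        · simpa [h] using hT e (by omega) _
      · intro e he e' he' i i' hne x hx hx'
        by_cases h : e = t <;> by_cases h' : e' = t
        · subst h; subst h'
          simp only [if_true] at hx hx'
          rw [hpL] at hx hx'
          refine hLd _ _ (fun hh => ?_) x hx hx'
          rcases hne with h | h
          · exact h rfl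
          · exact h (ψ.injective hh)
        · simp only [h, h', if_true, if_false] at hx hx'
          exact cross e' (by omega) i' i x hx' hx
        · simp only [h, h', if_true, if_false] at hx hx'
          exact cross e (by omega) i i' x hx hx'
        · simp only [h, h', if_false] at hx hx'
          refine hTd e (by omega) e' (by omega) _ _ ?_ x hx hx'
          rcases hne with hne | hne
          · exact Or.inl hne
          · by_cases hee : e = e'
            · subst hee
              exact Or.inr fun hh => hne (Fin.castLE_injective hmq (hφ e hh))
            · exact Or.inl hee

end connectors

/-! ### Assembling a pseudo-grid from connected sets and connectors -/

section assembly

variable {V : Type} {G : SimpleGraph V}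

theorem Connector.attach {C Y Z S : Set V} {p : V × List V × V} (h : Connector G C Y Z p)
    (hY : Y ⊆ S) (hS : ConnSet G S) :
    ConnSet G (S ∪ {x | x ∈ p.2.1}) ∧ ∃ x ∈ S ∪ {x | x ∈ p.2.1}, G.Adj x p.2.2 := by
  obtain ⟨a, m, b⟩ := p
  have hc := h.chain
  have ha : a ∈ S := hY h.left
  unfold full at hc
  rcases m with _ | ⟨c, m⟩
  · simp only [List.nil_append, List.isChain_cons_cons] at hc
    exact ⟨by simpa using hS, a, Or.inl ha, hc.1⟩
  · simp only [List.cons_append, List.isChain_cons_cons] at hc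
    rw [← List.cons_append, List.isChain_append] at hc
    refine ⟨hS.union (chain_connSet hc.2.1) ⟨a, ha, c, by simp, Or.inr hc.1⟩,
      (c :: m).getLast (by simp), Or.inr (List.getLast_mem _), ?_⟩
    exact hc.2.2.2 _ (List.getLast_mem_getLast? (by simp)) b (by simp)

/-- A path running through a sequence of disjoint connected sets in order. -/
theorem row_path {N : ℕ} {D : ℕ → Set V} (hD : ∀ i ≤ N, ConnSet G (D i))
    (hdj : ∀ i ≤ N, ∀ j ≤ N, i ≠ j → Disjoint (D i) (D j))
    (hE : ∀ i < N, ∃ x ∈ D i, ∃ y ∈ D (i + 1), G.Adj x y) :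
    ∀ n ≤ N, ∀ v ∈ D n, ∃ u l, LP G u v l ∧ (∀ x ∈ l, ∃ i ≤ n, x ∈ D i) ∧
      (∀ i ≤ n, ∃ x ∈ l, x ∈ D i) ∧
      l.Pairwise fun x y => ∀ i ≤ N, ∀ j ≤ N, x ∈ D i → y ∈ D j → i ≤ j := by
  have huniq : ∀ x, ∀ i ≤ N, ∀ j ≤ N, x ∈ D i → x ∈ D j → i = j := by
    intro x i hi j hj h h'
    by_contra hne
    exact Set.disjoint_left.1 (hdj i hi j hj hne) h h'
  intro n
  induction n with
  | zero =>
    intro _ v hv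
    refine ⟨v, [v], LP.single v, ?_, ?_, by simp⟩
    · intro x hx
      simp only [List.mem_singleton] at hx
      exact ⟨0, le_rfl, hx ▸ hv⟩
    · intro i hi
      obtain rfl : i = 0 := by omega
      exact ⟨v, by simp, hv⟩
  | succ n ih =>
    intro hn v hv
    obtain ⟨x, hx, y, hy, hxy⟩ := hE n (by omega)
    obtain ⟨u, l, hl, h1, h2, h3⟩ := ih (by omega) x hx
    obtain ⟨l', hl', hs⟩ := (hD _ hn y hy v hv).exists_LP
    refine ⟨u, l ++ l', hl.append hl' hxy ?_, ?_, ?_, ?_⟩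
    · intro z hz hz'
      obtain ⟨i, hi, hzi⟩ := h1 z hz
      have := huniq z i (by omega) (n + 1) hn hzi (hs z hz')
      omega
    · intro z hz
      rcases List.mem_append.1 hz with hz | hz
      · obtain ⟨i, hi, hzi⟩ := h1 z hz
        exact ⟨i, by omega, hzi⟩
      · exact ⟨n + 1, le_rfl, hs z hz⟩
    · intro i hi
      rcases Nat.lt_or_ge n i with h | h
      · obtain rfl : i = n + 1 := by omega
        exact ⟨y, List.mem_append_right _ hl'.head_mem, hy⟩
      · obtain ⟨z, hz, hzi⟩ := h2 i h
        exact ⟨z, List.mem_append_left _ hz, hzi⟩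
    · rw [List.pairwise_append]
      refine ⟨h3, ?_, ?_⟩
      · refine List.pairwise_of_forall_mem_list fun a ha b hb i hi j hj hai hbj => ?_
        have e1 := huniq a i hi (n + 1) hn hai (hs a ha)
        have e2 := huniq b j hj (n + 1) hn hbj (hs b hb)
        omega
      · intro a ha b hb i hi j hj hai hbj
        have e2 := huniq b j hj (n + 1) hn hbj (hs b hb)
        obtain ⟨k, hk, hak⟩ := h1 a ha
        have e1 := huniq a i hi k (by omega) hai hak
        omega

/-- Row of the source set of the five connectors belonging to a column: three horizontal ones,
then two vertical ones. -/
def srcRow : Fin 5 → Fin 3 := ![0, 1, 2, 0, 1]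

/-- Row of the target set of the five connectors belonging to a column. -/
def tgtRow : Fin 5 → Fin 3 := ![0, 1, 2, 1, 2]

/-- Column shift from source to target of the five connectors belonging to a column. -/
def colShift : Fin 5 → ℕ := ![1, 1, 1, 0, 0]

/-- Connected sets `A i r` arranged in three rows, joined to their horizontal and vertical
neighbours by connectors through `C` with disjoint interiors, form a pseudo-grid: a row runs through
the sets `A i r` with `r` fixed, and a column consists of the sets `A i r` with `i` fixed together with
the interiors of the five connectors belonging to it. -/
theorem assemble {N : ℕ} {C : Set V} {A : ℕ → Fin 3 → Set V} {p : ℕ → Fin 5 → V × List V × V}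
    (hA : ∀ i ≤ N + 1, ∀ r, ConnSet G (A i r)) (hAC : ∀ i ≤ N + 1, ∀ r, Disjoint (A i r) C)
    (hAd : ∀ i ≤ N + 1, ∀ j ≤ N + 1, ∀ r r', (i ≠ j ∨ r ≠ r') → Disjoint (A i r) (A j r'))
    (hp : ∀ i ≤ N, ∀ s,
      Connector G C (A i (srcRow s)) (A (i + colShift s) (tgtRow s)) (p i s))
    (hpd : ∀ i ≤ N, ∀ j ≤ N, ∀ s s', (i ≠ j ∨ s ≠ s') →
      ∀ x ∈ (p i s).2.1, x ∉ (p j s').2.1) :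
    ∃ Q R, PGrid G (N + 1) Set.univ Q R := by
  let I : ℕ → Fin 5 → Set V := fun i s => {x | x ∈ (p i s).2.1}
  have hII : ∀ i ≤ N, ∀ j ≤ N, ∀ s s', ∀ x, x ∈ I i s → x ∈ I j s' → i = j ∧ s = s' := by
    intro i hi j hj s s' x hx hx'
    by_contra h
    exact hpd i hi j hj s s' (by tauto) x hx hx'
  have hAI : ∀ i ≤ N, ∀ j ≤ N, ∀ r s, ∀ x, x ∈ A i r → x ∈ I j s → False := by
    intro i hi j hj r s x hx hx'
    exact Set.disjoint_left.1 (hAC i (by omega) r) hx ((hp j hj s).int x hx')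
  have hAA : ∀ i ≤ N, ∀ j ≤ N, ∀ r r', ∀ x, x ∈ A i r → x ∈ A j r' → i = j ∧ r = r' := by
    intro i hi j hj r r' x hx hx'
    by_contra h
    exact Set.disjoint_left.1 (hAd i (by omega) j (by omega) r r' (by tauto)) hx hx'
  let hs : Fin 3 → Fin 5 := fun r => Fin.castLE (by omega) r
  have hsi : ∀ r r', hs r = hs r' → r = r' := fun r r' h => Fin.castLE_injective _ h
  have hsrc : ∀ r, srcRow (hs r) = r := by decide
  have htgt : ∀ r, tgtRow (hs r) = r := by decide
  have hcol : ∀ r, colShift (hs r) = 1 := by decide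
  let D : Fin 3 → ℕ → Set V := fun r i => A i r ∪ I i (hs r)
  have hD : ∀ r, ∀ i ≤ N, ConnSet G (D r i) ∧ ∃ x ∈ D r i, ∃ y ∈ A (i + 1) r, G.Adj x y := by
    intro r i hi
    have h := hp i hi (hs r)
    rw [hsrc, htgt, hcol] at h
    obtain ⟨h1, x, hx, hxy⟩ := h.attach subset_rfl (hA i (by omega) r)
    exact ⟨h1, x, hx, _, h.right, hxy⟩
  have hDne : ∀ r, ∀ i ≤ N, ∃ x, x ∈ A i r := by
    intro r i hi
    have h := hp i hi (hs r)
    rw [hsrc] at h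
    exact ⟨_, h.left⟩
  let R : ℕ → Set V := fun i => ((D 0 i ∪ I i 3) ∪ D 1 i) ∪ I i 4 ∪ D 2 i
  have hDR : ∀ r i, D r i ⊆ R i := by
    intro r i x hx
    fin_cases r
    · exact Or.inl (Or.inl (Or.inl (Or.inl hx)))
    · exact Or.inl (Or.inl (Or.inr hx))
    · exact Or.inr hx
  have hRmem : ∀ i x, x ∈ R i → (∃ r, x ∈ A i r) ∨ ∃ s, x ∈ I i s := by
    rintro i x (((((h | h) | h) | (h | h)) | h) | (h | h))
    all_goals first | exact Or.inl ⟨_, h⟩ | exact Or.inr ⟨_, h⟩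
  have hRd : ∀ i ≤ N, ∀ j ≤ N, ∀ x, x ∈ R i → x ∈ R j → i = j := by
    intro i hi j hj x hx hx'
    rcases hRmem i x hx with ⟨r, h⟩ | ⟨s, h⟩ <;> rcases hRmem j x hx' with ⟨r', h'⟩ | ⟨s', h'⟩
    · exact (hAA i hi j hj r r' x h h').1
    · exact (hAI i hi j hj r s' x h h').elim
    · exact (hAI j hj i hi r' s x h' h).elim
    · exact (hII i hi j hj s s' x h h').1
  have hDD : ∀ r r', ∀ i ≤ N, ∀ j ≤ N, ∀ x, x ∈ D r i → x ∈ D r' j → i = j ∧ r = r' := by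
    intro r r' i hi j hj x hx hx'
    rcases hx with h | h <;> rcases hx' with h' | h'
    · exact hAA i hi j hj r r' x h h'
    · exact (hAI i hi j hj r _ x h h').elim
    · exact (hAI j hj i hi r' _ x h' h).elim
    · obtain ⟨h1, h2⟩ := hII i hi j hj _ _ x h h'
      exact ⟨h1, hsi _ _ h2⟩
  have hRc : ∀ i ≤ N, ConnSet G (R i) := by
    intro i hi
    obtain ⟨h1, x, hx, hxy⟩ := (hp i hi 3).attach (S := D 0 i) Set.subset_union_left (hD 0 i hi).1
    have h2 : ConnSet G (D 0 i ∪ I i 3 ∪ D 1 i) :=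
      ConnSet.union h1 (hD 1 i hi).1 ⟨x, hx, _, Or.inl (hp i hi 3).right, Or.inr hxy⟩
    obtain ⟨h3, x', hx', hxy'⟩ := (hp i hi 4).attach (S := D 0 i ∪ I i 3 ∪ D 1 i)
      (fun y hy => Or.inr (Or.inl hy)) h2
    exact ConnSet.union h3 (hD 2 i hi).1 ⟨x', hx', _, Or.inl (hp i hi 4).right, Or.inr hxy'⟩
  have hrow : ∀ r, ∃ l : List V, l.IsChain G.Adj ∧ l.Nodup ∧ (∀ x ∈ l, ∃ i ≤ N, x ∈ D r i) ∧
      (∀ i ≤ N, ∃ x ∈ l, x ∈ D r i) ∧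
      l.Pairwise fun x y => ∀ i ≤ N, ∀ j ≤ N, x ∈ D r i → y ∈ D r j → i ≤ j := by
    intro r
    obtain ⟨v, hv⟩ := hDne r N le_rfl
    obtain ⟨u, l, hl, h1, h2, h3⟩ := row_path (D := D r) (fun i hi => (hD r i hi).1)
      (fun i hi j hj hij => Set.disjoint_left.2 fun x hx hx' =>
        hij (hDD r r i hi j hj x hx hx').1)
      (fun i hi => by
        obtain ⟨-, x, hx, y, hy, hxy⟩ := hD r i hi.le
        exact ⟨x, hx, y, Or.inl hy, hxy⟩) N le_rfl v (Or.inl hv)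
    exact ⟨l, hl.chain, hl.nodup, h1, h2, h3⟩
  choose Q hQc hQn hQD hDQ hQo using hrow
  refine ⟨Q, R, hQc, hQn, ?_, fun i hi => hRc i (by omega), ?_, ?_, ?_, ?_, ?_⟩
  · intro r r' hr x hx hx'
    obtain ⟨i, hi, h⟩ := hQD r x hx
    obtain ⟨j, hj, h'⟩ := hQD r' x hx'
    exact hr (hDD r r' i hi j hj x h h').2
  · intro i hi j hj hij
    exact Set.disjoint_left.2 fun x hx hx' => hij (hRd i (by omega) j (by omega) x hx hx')
  · intro i hi r
    obtain ⟨x, hx, h⟩ := hDQ r i (by omega)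
    exact ⟨x, hx, hDR r i h⟩
  · intro r
    refine (hQo r).imp_of_mem fun {x y} hx hy h i hi j hj hxi hyj => ?_
    obtain ⟨i', hi', h1⟩ := hQD r x hx
    obtain ⟨j', hj', h2⟩ := hQD r y hy
    rw [hRd i (by omega) i' hi' x hxi (hDR r i' h1), hRd j (by omega) j' hj' y hyj (hDR r j' h2)]
    exact h i' hi' j' hj' h1 h2
  · exact fun _ _ _ => trivial
  · exact fun _ _ _ _ => trivial

end assembly

section fromTangle

theorem exists_slots {V : Type} [Finite V] (K : ℕ) : ∀ (t : ℕ) (S : Set V), t * K ≤ S.ncard →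
    ∃ f : ℕ → Set V, (∀ e < t, f e ⊆ S ∧ (f e).ncard = K) ∧
      ∀ e < t, ∀ e' < t, e ≠ e' → Disjoint (f e) (f e') := by
  intro t
  induction t with
  | zero => exact fun S _ => ⟨fun _ => ∅, by simp, by simp⟩
  | succ t ih =>
    intro S hS
    obtain ⟨T, hTS, hT⟩ := Set.exists_subset_card_eq (s := S) (n := K) (by nlinarith)
    have hd : (S \ T).ncard = S.ncard - K := by
      rw [Set.ncard_sdiff hTS (Set.toFinite _), hT]
    obtain ⟨f, hf, hfd⟩ := ih (S \ T) (by rw [hd]; apply Nat.le_sub_of_add_le; nlinarith)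
    have hdT : ∀ e < t, Disjoint (f e) T := fun e he =>
      Set.disjoint_left.2 fun x hx hxT => ((hf e he).1 hx).2 hxT
    refine ⟨fun e => if e = t then T else f e, ?_, ?_⟩
    · intro e he
      by_cases h : e = t
      · simp [h, hTS, hT]
      · simp only [h, if_false]
        exact ⟨(hf e (by omega)).1.trans Set.sdiff_subset, (hf e (by omega)).2⟩
    · intro e he e' he' hne
      by_cases h : e = t <;> by_cases h' : e' = t
      · omega
      · simp only [h, h', if_true, if_false]
        exact (hdT e' (by omega)).symm
      · simp only [h, h', if_true, if_false]
        exact hdT e (by omega)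
      · simp only [h, h', if_false]
        exact hfd e (by omega) e' (by omega) hne

/-- A family of connected sets that is hard to hit and hard to separate forces a large
pseudo-grid. The mesh of `exists_mesh` is split into `3 * (N + 2)` connected pieces, arranged in three
rows, each with enough terminals for all `5 * (N + 1)` connectors between neighbouring pieces; these
are made disjoint by `disjoint_links`. -/
theorem exists_pgrid (N : ℕ) : ∃ t, ∀ (V : Type) [Finite V] (G : SimpleGraph V)
    (𝓒 : Set (Set V)), (∀ D ∈ 𝓒, D.Nonempty) → (∀ D ∈ 𝓒, ConnSet G D) →
    (∀ S : Set V, S.ncard ≤ t → ∃ D ∈ 𝓒, Disjoint D S) →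
    (∀ S : Set V, S.ncard ≤ t → ∀ D ∈ 𝓒, ∀ D' ∈ 𝓒, Disjoint D S → Disjoint D' S →
      ∀ d ∈ D, ∀ d' ∈ D', Conn G Sᶜ d d') →
    ∃ Q R, PGrid G (N + 1) Set.univ Q R := by
  obtain ⟨K, hK⟩ := disjoint_links (N + 1) (5 * (N + 1)) 1
  let t := 5 * (N + 1)
  let n := max 1 (t * K)
  let m := 3 * (N + 2)
  refine ⟨3 * n * m + K, fun V _ G 𝓒 hne hco h1 h2 => ?_⟩
  have hn : 1 ≤ n := le_max_left _ _
  obtain ⟨C, W, X, H, hWC, hM, hXW, hX, hlink⟩ := exists_mesh (h := 3 * n * m) hne hco h1 h2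
    (by have : 1 ≤ m := by simp only [m]; omega
        nlinarith [Nat.mul_le_mul hn this])
  have hV : Nonempty V := by
    obtain ⟨D, hD, -⟩ := h1 ∅ (by simp)
    exact ⟨(hne D hD).some⟩
  obtain ⟨A, hA, hAd⟩ := split_many hM.deg hn X m W hM.conn
    (by rw [Set.inter_eq_self_of_subset_right hXW, hX])
  have hslots : ∀ i, ∃ f : ℕ → Set V, i < m → (∀ e < t, f e ⊆ A i ∩ X ∧ (f e).ncard = K) ∧
      ∀ e < t, ∀ e' < t, e ≠ e' → Disjoint (f e) (f e') := by
    intro i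
    by_cases hi : i < m
    · obtain ⟨f, hf⟩ := exists_slots K t (A i ∩ X) ((le_max_right _ _).trans (hA i hi).2.2)
      exact ⟨f, fun _ => hf⟩
    · exact ⟨fun _ => ∅, fun h => absurd h hi⟩
  choose f hf using hslots
  let σ : ℕ → Fin 5 := fun e => ⟨e % 5, Nat.mod_lt _ (by omega)⟩
  let a : ℕ → ℕ := fun e => 3 * (e / 5) + srcRow (σ e)
  let b : ℕ → ℕ := fun e => 3 * (e / 5 + colShift (σ e)) + tgtRow (σ e)
  have hshift : ∀ s, colShift s ≤ 1 := by decide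
  have ha : ∀ e < t, a e < m := by
    intro e he
    have h1 : e < 5 * (N + 1) := he
    have h2 := (srcRow (σ e)).isLt
    show 3 * (e / 5) + (srcRow (σ e) : ℕ) < 3 * (N + 2)
    omega
  have hb : ∀ e < t, b e < m := by
    intro e he
    have h1 : e < 5 * (N + 1) := he
    have h2 := (tgtRow (σ e)).isLt
    have h3 := hshift (σ e)
    show 3 * (e / 5 + colShift (σ e)) + (tgtRow (σ e) : ℕ) < 3 * (N + 2)
    omega
  have hab : ∀ e, a e ≠ b e := by
    intro e h
    have h1 : ∀ s, (srcRow s : ℕ) ≠ 3 * colShift s + tgtRow s := by decide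
    have h2 : 3 * (e / 5) + (srcRow (σ e) : ℕ) =
      3 * (e / 5 + colShift (σ e)) + (tgtRow (σ e) : ℕ) := h
    exact h1 (σ e) (by omega)
  -- slots of different pieces or with different indices are disjoint
  have hfd : ∀ e < t, ∀ e' < t, ∀ i < m, ∀ j < m, (e ≠ e' ∨ i ≠ j) → Disjoint (f i e) (f j e') := by
    intro e he e' he' i hi j hj hne
    by_cases hij : i = j
    · subst hij
      exact (hf i hi).2 e he e' he' (by tauto)
    · exact (hAd i hi j hj hij).mono (fun x hx => (((hf i hi).1 e he).1 hx).1)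
        (fun x hx => (((hf j hj).1 e' he').1 hx).1)
  have hfX : ∀ e < t, ∀ i < m, f i e ⊆ X := fun e he i hi x hx => (((hf i hi).1 e he).1 hx).2
  have hfC : ∀ e < t, ∀ i < m, Disjoint (f i e) C := fun e he i hi =>
    hWC.mono_left ((hfX e he i hi).trans hXW)
  rcases hK V G C (fun e => f (a e) e) (fun e => f (b e) e)
    (fun e he => Set.disjoint_union_left.2 ⟨hfC e he _ (ha e he), hfC e he _ (hb e he)⟩)
    (fun e he => hfd e he e he _ (ha e he) _ (hb e he) (Or.inr (hab e)))
    (fun e he e' he' hne => by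
      simp only [Set.disjoint_union_left, Set.disjoint_union_right]
      refine ⟨⟨?_, ?_⟩, ?_, ?_⟩
      · exact hfd e he e' he' _ (ha e he) _ (ha e' he') (Or.inl hne)
      · exact hfd e he e' he' _ (hb e he) _ (ha e' he') (Or.inl hne)
      · exact hfd e he e' he' _ (ha e he) _ (hb e' he') (Or.inl hne)
      · exact hfd e he e' he' _ (hb e he) _ (hb e' he') (Or.inl hne))
    (fun e he => by
      have e1 := ((hf _ (ha e he)).1 e he).2
      have e2 := ((hf _ (hb e he)).1 e he).2
      have := hlink _ (hfX e he _ (ha e he)) _ (hfX e he _ (hb e he)) (by rw [e1, e2]) (by rw [e1])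
      rwa [e1] at this) with h | ⟨T, hT, hTd⟩
  · exact h
  · have hidx : ∀ i ≤ N, ∀ s : Fin 5, 5 * i + s < t ∧ (5 * i + (s : ℕ)) / 5 = i ∧
        σ (5 * i + s) = s := by
      intro i hi s
      have := s.isLt
      refine ⟨?_, by omega, ?_⟩
      · show 5 * i + (s : ℕ) < 5 * (N + 1)
        omega
      · apply Fin.ext
        show (5 * i + (s : ℕ)) % 5 = s
        omega
    have htree : ∀ i ≤ N + 1, ∀ r : Fin 3, 3 * i + (r : ℕ) < m := by
      intro i hi r
      have := r.isLt
      show 3 * i + (r : ℕ) < 3 * (N + 2)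
      omega
    refine assemble (C := C) (A := fun i r => A (3 * i + r)) (p := fun i s => T (5 * i + s) 0)
      ?_ ?_ ?_ ?_ ?_
    · exact fun i hi r => (hA _ (htree i hi r)).1.mono_graph hM.le
    · exact fun i hi r => hWC.mono_left (hA _ (htree i hi r)).2.1
    · intro i hi j hj r r' hne
      refine hAd _ (htree i hi r) _ (htree j hj r') fun h => ?_
      have h1 := r.isLt
      have h2 := r'.isLt
      rcases hne with hne | hne
      · omega
      · exact hne (Fin.ext (by omega))
    · intro i hi s
      obtain ⟨hlt, hdiv, hσ⟩ := hidx i hi s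
      have hc := hT _ hlt 0
      have e1 : a (5 * i + s) = 3 * i + srcRow s := by simp only [a, hdiv, hσ]
      have e2 : b (5 * i + s) = 3 * (i + colShift s) + tgtRow s := by simp only [b, hdiv, hσ]
      refine ⟨?_, ?_, hc.chain, hc.nodup, hc.int⟩
      · have := (((hf _ (ha _ hlt)).1 _ hlt).1 hc.left).1
        rwa [e1] at this
      · have := (((hf _ (hb _ hlt)).1 _ hlt).1 hc.right).1
        rwa [e2] at this
    · intro i hi j hj s s' hne x hx hx'
      have h1 := s.isLt
      have h2 := s'.isLt
      refine hTd _ (hidx i hi s).1 _ (hidx j hj s').1 0 0 (Or.inl fun h => ?_) x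
        (by simp [full, hx]) (by simp [full, hx'])
      rcases hne with hne | hne
      · omega
      · exact hne (Fin.ext (by omega))

end fromTangle

/-! ### Weighted paths -/

section weighted

variable {V Γ : Type} [AddCommGroup Γ]

/-- There is a path from `u` to `v` of weight `w` with all its vertices in `S`. -/
def WP (G : SimpleGraph V) (lab : Sym2 V → Γ) (S : Set V) (u v : V) (w : Γ) : Prop :=
  ∃ p : G.Walk u v, p.IsPath ∧ (∀ x ∈ p.support, x ∈ S) ∧ (p.edges.map lab).sum = w

variable {G : SimpleGraph V} {lab : Sym2 V → Γ} {S S' : Set V} {u v a b : V} {w w' : Γ}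

theorem WP.mono (h : WP G lab S u v w) (hS : S ⊆ S') : WP G lab S' u v w := by
  obtain ⟨p, h1, h2, h3⟩ := h
  exact ⟨p, h1, fun x hx => hS (h2 x hx), h3⟩

theorem WP.left (h : WP G lab S u v w) : u ∈ S := by
  obtain ⟨p, h1, h2, h3⟩ := h
  exact h2 u p.start_mem_support

theorem WP.reverse (h : WP G lab S u v w) : WP G lab S v u w := by
  obtain ⟨p, h1, h2, h3⟩ := h
  refine ⟨p.reverse, h1.reverse, by simpa using h2, ?_⟩
  rw [Walk.edges_reverse, List.map_reverse, List.sum_reverse, h3]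

theorem WP.glue (h : WP G lab S u a w) (h' : WP G lab S' a v w')
    (hd : ∀ x ∈ S, x ∈ S' → x = a) : WP G lab (S ∪ S') u v (w + w') := by
  obtain ⟨p, h1, h2, h3⟩ := h
  obtain ⟨q, k1, k2, k3⟩ := h'
  refine ⟨p.append q, ?_, ?_, ?_⟩
  · rw [Walk.isPath_def, Walk.support_append, List.nodup_append]
    refine ⟨h1.support_nodup, k1.support_nodup.tail, ?_⟩
    rintro x hx y hy rfl
    have hxa := hd x (h2 x hx) (k2 x (List.mem_of_mem_tail hy))
    subst hxa
    have := k1.support_nodup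
    rw [← Walk.cons_tail_support, List.nodup_cons] at this
    exact this.1 hy
  · intro x hx
    rcases (Walk.mem_support_append_iff p q).1 hx with h | h
    · exact Or.inl (h2 x h)
    · exact Or.inr (k2 x h)
  · rw [Walk.edges_append, List.map_append, List.sum_append, h3, k3]

theorem WP.edge (h : G.Adj u v) : WP G lab {u, v} u v (lab s(u, v)) := by
  refine ⟨h.toWalk, by simp [h.ne], by simp, by simp⟩

theorem WP.append (h : WP G lab S u a w) (h' : WP G lab S' b v w') (hab : G.Adj a b)
    (hd : Disjoint S S') : WP G lab (S ∪ S') u v (w + lab s(a, b) + w') := by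
  have hb := h'.left
  have ha := h.reverse.left
  have hbS : b ∉ S := fun h => Set.disjoint_left.1 hd h hb
  have h1 := h.glue (WP.edge (lab := lab) hab) (by
    rintro x hx (rfl | rfl)
    · rfl
    · exact absurd hx hbS)
  refine (h1.glue h' ?_).mono ?_
  · rintro x (hx | rfl | rfl) hx'
    · exact absurd hx' (Set.disjoint_left.1 hd hx)
    · exact absurd hx' (Set.disjoint_left.1 hd ha)
    · rfl
  · rintro x ((hx | rfl | rfl) | hx)
    · exact Or.inl hx
    · exact Or.inl ha
    · exact Or.inr hb
    · exact Or.inr hx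

/-- A listed path has a weight, and is cut by each of its vertices into two pieces whose weights
add up to it. -/
theorem LP.exists_weight {l : List V} (h : LP G u v l) (lab : Sym2 V → Γ) :
    ∃ W, WP G lab {z | z ∈ l} u v W ∧
      ∀ x ∈ l, ∃ φ, WP G lab {z | z ∈ l} u x φ ∧ WP G lab {z | z ∈ l} x v (W - φ) := by
  classical
  have hne : l ≠ [] := fun h0 => by have := h.head; simp [h0] at this
  have hu : l.head hne = u := by
    have := h.head; rw [List.head?_eq_some_head hne] at this; simpa using this
  have hv : l.getLast hne = v := by
    have := h.last; rw [List.getLast?_eq_some_getLast hne] at this; simpa using this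
  obtain ⟨p, hp⟩ : ∃ p : G.Walk u v, p.support = l :=
    ⟨(Walk.ofSupport l hne h.chain).copy hu hv, by simp⟩
  have hpp : p.IsPath := by rw [Walk.isPath_def, hp]; exact h.nodup
  refine ⟨(p.edges.map lab).sum, ⟨p, hpp, fun z hz => hp ▸ hz, rfl⟩, fun x hx => ?_⟩
  have hx' : x ∈ p.support := by rw [hp]; exact hx
  refine ⟨((p.takeUntil x hx').edges.map lab).sum,
    ⟨_, hpp.takeUntil hx', fun z hz => ?_, rfl⟩, ⟨_, hpp.dropUntil hx', fun z hz => ?_, ?_⟩⟩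
  · exact hp ▸ p.support_takeUntil_subset_support hx' hz
  · exact hp ▸ p.support_dropUntil_subset_support hx' hz
  · have : (p.edges.map lab).sum = ((p.takeUntil x hx').edges.map lab).sum +
        ((p.dropUntil x hx').edges.map lab).sum := by
      rw [← List.sum_append, ← List.map_append, ← Walk.edges_append, p.take_spec hx']
    rw [this, add_sub_cancel_left]

/-- A path whose ends are adjacent, but which is not just an edge, closes to a cycle. -/
theorem WP.close (h : WP G lab S u a w) (h' : WP G lab S' b v w') (hab : G.Adj a b)
    (hvu : G.Adj v u) (hd : Disjoint S S') (hne : u ≠ a) :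
    ∃ C : GraphCycle G, C.weight lab = w + lab s(a, b) + w' + lab s(v, u) ∧
      ∀ x ∈ C.walk.support, x ∈ S ∪ S' := by
  have hnb : u ≠ b := fun hh => Set.disjoint_left.1 hd h.left (hh ▸ h'.left)
  obtain ⟨p, h1, h2, h3⟩ := h
  obtain ⟨q, k1, k2, k3⟩ := h'
  have hpath : (p.append (Walk.cons hab q)).IsPath := by
    rw [Walk.isPath_def, Walk.support_append, Walk.support_cons, List.tail_cons, List.nodup_append]
    refine ⟨h1.support_nodup, k1.support_nodup, ?_⟩
    rintro x hx y hy rfl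
    exact Set.disjoint_left.1 hd (h2 x hx) (k2 x hy)
  refine ⟨⟨v, Walk.cons hvu (p.append (Walk.cons hab q)),
    (Walk.cons_isCycle_iff _ _).2 ⟨hpath, ?_⟩⟩, ?_, ?_⟩
  · rw [Walk.edges_append, Walk.edges_cons, List.mem_append, List.mem_cons]
    rintro (hh | hh | hh)
    · exact Set.disjoint_left.1 hd (h2 v (p.fst_mem_support_of_mem_edges hh))
        (k2 v q.end_mem_support)
    · rw [Sym2.eq_iff] at hh
      rcases hh with hh | hh
      · exact hnb hh.2
      · exact hne hh.2
    · exact Set.disjoint_left.1 hd (h2 u p.start_mem_support)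
        (k2 u (q.snd_mem_support_of_mem_edges hh))
  · simp only [GraphCycle.weight, Walk.edges_cons, Walk.edges_append, List.map_cons,
      List.map_append, List.sum_append, List.sum_cons, h3, k3]
    abel
  · intro x hx
    simp only [Walk.support_cons, List.mem_cons, Walk.mem_support_append_iff] at hx
    rcases hx with rfl | hx | rfl | hx
    · exact Or.inr (k2 _ q.end_mem_support)
    · exact Or.inl (h2 x hx)
    · exact Or.inl (h2 _ p.end_mem_support)
    · exact Or.inr (k2 x hx)

end weighted

/-! ### Cutting a pseudo-grid into cells -/

/-- A pseudo-grid cut into cells: row `r` consists of consecutive segments `S i r`, running from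
`h i r` to `e i r`, and the connected set `R i` meets the rows in the `i`-th segments only. -/
structure Cells {V : Type} (G : SimpleGraph V) (M : ℕ) (h e : ℕ → Fin 3 → V)
    (S : ℕ → Fin 3 → List V) (R : ℕ → Set V) : Prop where
  path : ∀ i < M, ∀ r, LP G (h i r) (e i r) (S i r)
  adj : ∀ i, i + 1 < M → ∀ r, G.Adj (e i r) (h (i + 1) r)
  rowDisj : ∀ i < M, ∀ r r', r ≠ r' → ∀ x ∈ S i r, x ∉ S i r'
  conn : ∀ i < M, ConnSet G (R i)
  meet : ∀ i < M, ∀ r, ∃ x ∈ S i r, x ∈ R i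
  cellDisj : ∀ i < M, ∀ j < M, i ≠ j →
    Disjoint (R i ∪ {x | ∃ r, x ∈ S i r}) (R j ∪ {x | ∃ r, x ∈ S j r})

/-- The vertex set of the `i`-th cell. -/
def cell {V : Type} (S : ℕ → Fin 3 → List V) (R : ℕ → Set V) (i : ℕ) : Set V :=
  R i ∪ {x | ∃ r, x ∈ S i r}

section cells

variable {V : Type} {G : SimpleGraph V}

/-- A path meeting the disjoint sets `R 0, …, R (N - 1)` in this order can be cut into consecutive
segments, the `i`-th of which meets `R i` and no other `R j`. -/
theorem segments {R : ℕ → Set V} : ∀ (N : ℕ) (l : List V), l.IsChain G.Adj → l.Nodup →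
    (∀ i < N, ∀ j < N, i ≠ j → Disjoint (R i) (R j)) →
    (l.Pairwise fun x y => ∀ i < N, ∀ j < N, x ∈ R i → y ∈ R j → i ≤ j) →
    (∀ i < N, ∃ x ∈ l, x ∈ R i) →
    ∃ s : ℕ → List V, (∀ i < N, s i ≠ [] ∧ (s i).IsChain G.Adj ∧ (s i).Nodup ∧
        (∀ x ∈ s i, x ∈ l) ∧ ∃ x ∈ s i, x ∈ R i) ∧
      (∀ i < N, ∀ j < N, i ≠ j → ∀ x ∈ s i, x ∉ R j ∧ x ∉ s j) ∧
      (∀ i, i + 1 < N → ∀ a ∈ (s i).getLast?, ∀ b ∈ (s (i + 1)).head?, G.Adj a b) ∧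
      (0 < N → (s (N - 1)).getLast? = l.getLast?) := by
  classical
  intro N
  induction N with
  | zero => exact fun l _ _ _ _ _ => ⟨fun _ => [], by simp, by simp, by simp, by simp⟩
  | succ N ih =>
    intro l hc hn hd ho hm
    obtain ⟨l₁, l₂, rfl, hl₁, z, hz, hz2⟩ : ∃ l₁ l₂, l = l₁ ++ l₂ ∧ (∀ x ∈ l₁, x ∉ R N) ∧
        ∃ z ∈ R N, l₂.head? = some z := by
      refine ⟨l.takeWhile (fun x => decide (x ∉ R N)), l.dropWhile (fun x => decide (x ∉ R N)),
        List.takeWhile_append_dropWhile.symm, ?_, ?_⟩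
      · intro x hx
        have := List.mem_takeWhile_imp hx
        simpa using this
      · have hne : l.dropWhile (fun x => decide (x ∉ R N)) ≠ [] := by
          intro h0
          rw [List.dropWhile_eq_nil_iff] at h0
          obtain ⟨x, hx, hxR⟩ := hm N (by omega)
          have := h0 x hx
          simp [hxR] at this
        refine ⟨_, ?_, List.head?_eq_some_head hne⟩
        have := List.head_dropWhile_not (fun x => decide (x ∉ R N)) hne
        simpa using this
    rw [List.isChain_append] at hc
    rw [List.nodup_append] at hn
    rw [List.pairwise_append] at ho
    have hzl : z ∈ l₂ := List.mem_of_mem_head? (by rw [hz2]; rfl)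
    have hl₂ : ∀ x ∈ l₂, ∀ i < N, x ∉ R i := by
      intro x hx i hi hxi
      rcases l₂ with _ | ⟨y, l₂⟩
      · simp at hx
      · obtain rfl : y = z := by simpa using hz2
        rcases List.mem_cons.1 hx with rfl | hx
        · exact Set.disjoint_left.1 (hd i (by omega) N (by omega) (by omega)) hxi hz
        · have := (List.pairwise_cons.1 ho.2.1).1 x hx N (by omega) i (by omega) hz hxi
          omega
    have hm₁ : ∀ i < N, ∃ x ∈ l₁, x ∈ R i := by
      intro i hi
      obtain ⟨x, hx, hxi⟩ := hm i (by omega)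
      rcases List.mem_append.1 hx with h | h
      · exact ⟨x, h, hxi⟩
      · exact absurd hxi (hl₂ x h i hi)
    obtain ⟨s, h1, h2, h3, h4⟩ := ih l₁ hc.1 hn.1
      (fun i hi j hj => hd i (by omega) j (by omega))
      (ho.1.imp fun h i hi j hj => h i (by omega) j (by omega)) hm₁
    have hdl : ∀ x ∈ l₁, x ∉ l₂ := fun x hx hx' => hn.2.2 x hx x hx' rfl
    refine ⟨fun i => if i = N then l₂ else s i, ?_, ?_, ?_, ?_⟩
    · intro i hi
      by_cases hiN : i = N
      · subst hiN
        simp only [if_true]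
        exact ⟨fun h0 => by simp [h0] at hz2, hc.2.1, hn.2.1,
          fun x hx => List.mem_append_right _ hx, z, hzl, hz⟩
      · simp only [hiN, if_false]
        obtain ⟨k1, k2, k3, k4, k5⟩ := h1 i (by omega)
        exact ⟨k1, k2, k3, fun x hx => List.mem_append_left _ (k4 x hx), k5⟩
    · intro i hi j hj hij x hx
      by_cases hiN : i = N <;> by_cases hjN : j = N
      · omega
      · simp only [hiN, hjN, if_true, if_false] at hx ⊢
        exact ⟨hl₂ x hx j (by omega), fun hx' => hdl x ((h1 j (by omega)).2.2.2.1 x hx') hx⟩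
      · simp only [hiN, hjN, if_true, if_false] at hx ⊢
        have := (h1 i (by omega)).2.2.2.1 x hx
        exact ⟨hl₁ x this, hdl x this⟩
      · simp only [hiN, hjN, if_false] at hx ⊢
        exact h2 i (by omega) j (by omega) hij x hx
    · intro i hi a ha b hb
      have hiN : i ≠ N := by omega
      simp only [hiN, if_false] at ha
      by_cases hi' : i + 1 = N
      · simp only [hi', if_true] at hb
        have h5 := h4 (by omega)
        rw [show N - 1 = i by omega] at h5
        exact hc.2.2 a (h5 ▸ ha) b hb
      · simp only [hi', if_false] at hb
        exact h3 i (by omega) a ha b hb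
    · intro _
      simp only [Nat.add_sub_cancel, if_true]
      rw [List.getLast?_append]
      rcases hh : l₂.getLast? with _ | y
      · rw [List.getLast?_eq_none_iff] at hh
        subst hh
        simp at hzl
      · simp

theorem PGrid.cells {M : ℕ} {U : Set V} {Q : Fin 3 → List V} {R : ℕ → Set V}
    (hG : PGrid G (M + 1) U Q R) : ∃ h e S, Cells G (M + 1) h e S R := by
  have := fun r => segments (M + 1) (Q r) (hG.chain r) (hG.nodup r) hG.colDisj (hG.order r)
    (fun i hi => hG.meet i hi r)
  choose s h1 h2 h3 h4 using this
  have : Nonempty V := by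
    obtain ⟨x, -, -⟩ := hG.meet 0 (by omega) 0
    exact ⟨x⟩
  have hd : ∀ i r, ∃ x y, i < M + 1 → (s r i).head? = some x ∧ (s r i).getLast? = some y := by
    intro i r
    by_cases hi : i < M + 1
    · have hne := (h1 r i hi).1
      exact ⟨_, _, fun _ => ⟨List.head?_eq_some_head hne, List.getLast?_eq_some_getLast hne⟩⟩
    · exact ⟨Classical.arbitrary V, Classical.arbitrary V, fun h => absurd h hi⟩
  choose h e he using hd
  refine ⟨h, e, fun i r => s r i, ?_, ?_, ?_, hG.conn, ?_, ?_⟩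
  · intro i hi r
    obtain ⟨-, k2, k3, -, -⟩ := h1 r i hi
    exact ⟨k2, k3, (he i r hi).1, (he i r hi).2⟩
  · intro i hi r
    exact h3 r i hi _ (he i r (by omega)).2 _ (he (i + 1) r hi).1
  · intro i hi r r' hr x hx hx'
    exact hG.rowDisj r r' hr x ((h1 r i hi).2.2.2.1 x hx) ((h1 r' i hi).2.2.2.1 x hx')
  · exact fun i hi r => (h1 r i hi).2.2.2.2
  · intro i hi j hj hij
    refine Set.disjoint_left.2 ?_
    rintro x (hx | ⟨r, hx⟩) (hx' | ⟨r', hx'⟩)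
    · exact Set.disjoint_left.1 (hG.colDisj i hi j hj hij) hx hx'
    · exact (h2 r' j hj i hi hij.symm x hx').1 hx
    · exact (h2 r i hi j hj hij x hx).1 hx'
    · by_cases hr : r = r'
      · subst hr
        exact (h2 r i hi j hj hij x hx).2 hx'
      · exact hG.rowDisj r r' hr x ((h1 r i hi).2.2.2.1 x hx) ((h1 r' j hj).2.2.2.1 x hx')

theorem Cells.shift {M k : ℕ} {h e : ℕ → Fin 3 → V} {S : ℕ → Fin 3 → List V} {R : ℕ → Set V}
    (hC : Cells G (k + M) h e S R) :
    Cells G M (fun i => h (k + i)) (fun i => e (k + i)) (fun i => S (k + i))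
      (fun i => R (k + i)) :=
  ⟨fun i hi => hC.path _ (by omega), fun i hi => hC.adj (k + i) (by omega),
    fun i hi => hC.rowDisj _ (by omega), fun i hi => hC.conn _ (by omega),
    fun i hi => hC.meet _ (by omega),
    fun i hi j hj hij => hC.cellDisj _ (by omega) _ (by omega) (by omega)⟩

theorem Cells.of_le {M M' : ℕ} {h e : ℕ → Fin 3 → V} {S : ℕ → Fin 3 → List V} {R : ℕ → Set V}
    (hC : Cells G M h e S R) (hM : M' ≤ M) : Cells G M' h e S R :=
  ⟨fun i hi => hC.path _ (by omega), fun i hi => hC.adj i (by omega),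
    fun i hi => hC.rowDisj _ (by omega), fun i hi => hC.conn _ (by omega),
    fun i hi => hC.meet _ (by omega),
    fun i hi j hj hij => hC.cellDisj _ (by omega) _ (by omega) hij⟩

end cells

/-! ### Rungs -/

section rungs

variable {V Γ : Type} [AddCommGroup Γ] {G : SimpleGraph V} {lab : Sym2 V → Γ}
  {S : ℕ → Fin 3 → List V} {R : ℕ → Set V}

/-- The vertices of the `i`-th cell that lie on row `a`, on row `b`, or on no row. -/
def two (S : ℕ → Fin 3 → List V) (R : ℕ → Set V) (i : ℕ) (a b : Fin 3) : Set V :=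
  {x | x ∈ S i a} ∪ {x | x ∈ R i ∧ ∀ r, x ∉ S i r} ∪ {x | x ∈ S i b}

/-- The cell `i` contains a path between rows `a` and `b` with no inner vertex on a row. -/
def Touch (G : SimpleGraph V) (lab : Sym2 V → Γ) (S : ℕ → Fin 3 → List V) (R : ℕ → Set V)
    (i : ℕ) (a b : Fin 3) : Prop :=
  ∃ u ∈ S i a, ∃ v ∈ S i b, ∃ ρ, WP G lab ({u, v} ∪ {x | x ∈ R i ∧ ∀ r, x ∉ S i r}) u v ρ

theorem Touch.symm {i : ℕ} {a b : Fin 3} (h : Touch G lab S R i a b) : Touch G lab S R i b a := by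
  obtain ⟨u, hu, v, hv, ρ, h⟩ := h
  exact ⟨v, hv, u, hu, ρ, by rw [Set.pair_comm]; exact h.reverse⟩

/-- For any proper nonempty set `σ` of rows, the column joins a row in `σ` to one outside it. -/
theorem exists_touch {i : ℕ} (hc : ConnSet G (R i)) (hm : ∀ r, ∃ x ∈ S i r, x ∈ R i)
    (σ : Set (Fin 3)) {r₀ r₁ : Fin 3} (h₀ : r₀ ∈ σ) (h₁ : r₁ ∉ σ) :
    ∃ a ∈ σ, ∃ b, b ∉ σ ∧ Touch G lab S R i a b := by
  obtain ⟨x, hx, hxR⟩ := hm r₀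
  obtain ⟨y, hy, hyR⟩ := hm r₁
  obtain ⟨l, hl, hlR⟩ := (hc x hxR y hyR).exists_LP
  obtain ⟨v, ⟨b, hb, hv⟩, l', hl', hsub, hlv⟩ :=
    LP.shorten (T := {z | ∃ b, b ∉ σ ∧ z ∈ S i b}) _ hl ⟨r₁, h₁, hy⟩
  obtain ⟨u, ⟨a, ha, hu⟩, l'', hl'', hsub', hlu⟩ :=
    LP.shorten (T := {z | ∃ b, b ∈ σ ∧ z ∈ S i b}) _ hl'.reverse ⟨r₀, h₀, hx⟩
  have hs : ∀ z ∈ l'', z ∈ l' := fun z hz => List.mem_reverse.1 (hsub' z hz)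
  obtain ⟨ρ, hρ, -⟩ := hl''.reverse.exists_weight lab
  refine ⟨a, ha, b, hb, u, hu, v, hv, ρ, hρ.mono fun z hz => ?_⟩
  have hz : z ∈ l'' := List.mem_reverse.1 hz
  by_cases hzr : ∃ r, z ∈ S i r
  · obtain ⟨r, hr⟩ := hzr
    left
    by_cases hrσ : r ∈ σ
    · exact Or.inl (hlu z hz ⟨r, hrσ, hr⟩)
    · exact Or.inr (hlv z (hs z hz) ⟨r, hrσ, hr⟩)
  · push Not at hzr
    exact Or.inr ⟨hlR z (hsub z (hs z hz)), hzr⟩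

/-- Some row touches both other rows. -/
theorem exists_center {i : ℕ} (hc : ConnSet G (R i)) (hm : ∀ r, ∃ x ∈ S i r, x ∈ R i) :
    ∃ a b c : Fin 3, a ≠ b ∧ b ≠ c ∧ a ≠ c ∧ Touch G lab S R i a b ∧ Touch G lab S R i b c := by
  have key : ∀ a : Fin 3, ∃ b, b ≠ a ∧ Touch G lab S R i a b := by
    intro a
    obtain ⟨r, hr⟩ : ∃ r : Fin 3, r ≠ a := by revert a; decide
    obtain ⟨a', ha', b, hb, h⟩ := exists_touch (lab := lab) hc hm {a} rfl hr
    obtain rfl : a' = a := ha'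
    exact ⟨b, hb, h⟩
  obtain ⟨b, hb, h1⟩ := key 0
  obtain ⟨c, hc0, hcb⟩ : ∃ c : Fin 3, c ≠ 0 ∧ c ≠ b := by
    clear h1
    revert b; decide
  obtain ⟨d, hd, h2⟩ := key c
  have : d = 0 ∨ d = b := by
    clear h1 h2
    revert b c d; decide
  rcases this with rfl | rfl
  · exact ⟨c, 0, b, hc0, hb.symm, hcb, h2, h1⟩
  · exact ⟨0, d, c, hb.symm, hcb.symm, hc0.symm, h1, h2.symm⟩

/-- Row `a` and row `b` of the cell `i` are joined by a rung of weight `ρ` whose ends have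
potentials `α` and `β`. The potential on row `r` is the weight of the row up to a vertex; it is
`P i r` at the start `h i r` and `P i r + W i r` at the end `e i r` of the segment `S i r`. The rung
is recorded through the paths it provides between the ends of the segments. -/
structure Rung (G : SimpleGraph V) (lab : Sym2 V → Γ) (h e : ℕ → Fin 3 → V)
    (S : ℕ → Fin 3 → List V) (R : ℕ → Set V) (P W : ℕ → Fin 3 → Γ) (i : ℕ) (a b : Fin 3)
    (α β ρ : Γ) : Prop where
  start : WP G lab (two S R i a b) (e i a) (e i b)
    ((P i a + W i a) + (P i b + W i b) + (ρ - α - β))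
  cross : WP G lab (two S R i a b) (h i a) (e i b) (-P i a + (P i b + W i b) + (ρ + α - β))
  cross' : WP G lab (two S R i a b) (h i b) (e i a) (-P i b + (P i a + W i a) + (ρ + β - α))
  close : WP G lab (two S R i a b) (h i a) (h i b) (-P i a - P i b + (ρ + α + β))

theorem exists_rung {h e : ℕ → Fin 3 → V} {P W : ℕ → Fin 3 → Γ} {i : ℕ} {a b : Fin 3}
    (hab : ∀ x ∈ S i a, x ∉ S i b)
    (hW : ∀ r, ∀ x ∈ S i r, ∃ φ, WP G lab {z | z ∈ S i r} (h i r) x φ ∧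
      WP G lab {z | z ∈ S i r} x (e i r) (W i r - φ))
    (ht : Touch G lab S R i a b) : ∃ α β ρ, Rung G lab h e S R P W i a b α β ρ := by
  obtain ⟨u, hu, v, hv, ρ, hρ⟩ := ht
  obtain ⟨φ, h1, h2⟩ := hW a u hu
  obtain ⟨ψ, k1, k2⟩ := hW b v hv
  have key : ∀ x y w w', WP G lab {z | z ∈ S i a} x u w → WP G lab {z | z ∈ S i b} v y w' →
      WP G lab (two S R i a b) x y (w + ρ + w') := by
    intro x y w w' hw hw'
    have g1 := hw.glue hρ (by
      rintro z hz ((rfl | rfl) | hz')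
      · rfl
      · exact absurd hv (hab _ hz)
      · exact absurd hz (hz'.2 a))
    refine (g1.glue hw' ?_).mono ?_
    · rintro z (hz | (rfl | rfl) | hz) hz'
      · exact absurd hz' (hab _ hz)
      · exact absurd hz' (hab _ hu)
      · rfl
      · exact absurd hz' (hz.2 b)
    · rintro z ((hz | (rfl | rfl) | hz) | hz)
      · exact Or.inl (Or.inl hz)
      · exact Or.inl (Or.inl hu)
      · exact Or.inr hv
      · exact Or.inl (Or.inr hz)
      · exact Or.inr hz
  refine ⟨P i a + φ, P i b + ψ, ρ, ?_, ?_, ?_, ?_⟩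
  · convert key _ _ _ _ h2.reverse k2 using 1; abel
  · convert key _ _ _ _ h1 k2 using 1; abel
  · convert (key _ _ _ _ h2.reverse k1.reverse).reverse using 1; abel
  · convert key _ _ _ _ h1 k1.reverse using 1; abel

end rungs

/-! ### Routing two strands through a pseudo-grid -/

section routing

variable {V Γ : Type} [AddCommGroup Γ] {G : SimpleGraph V} {lab : Sym2 V → Γ} {M : ℕ}
  {h e : ℕ → Fin 3 → V} {S : ℕ → Fin 3 → List V} {R : ℕ → Set V} {P W : ℕ → Fin 3 → Γ}

/-- `W i r` is the weight of the segment `S i r`, and `P i r` is the weight of row `r` up to the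
start of that segment. -/
structure Potential (G : SimpleGraph V) (lab : Sym2 V → Γ) (M : ℕ) (h e : ℕ → Fin 3 → V)
    (S : ℕ → Fin 3 → List V) (P W : ℕ → Fin 3 → Γ) : Prop where
  seg : ∀ i < M, ∀ r, WP G lab {z | z ∈ S i r} (h i r) (e i r) (W i r)
  cut : ∀ i < M, ∀ r, ∀ x ∈ S i r, ∃ φ, WP G lab {z | z ∈ S i r} (h i r) x φ ∧
      WP G lab {z | z ∈ S i r} x (e i r) (W i r - φ)
  step : ∀ i, i + 1 < M → ∀ r, P (i + 1) r = P i r + W i r + lab s(e i r, h (i + 1) r)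

theorem Cells.potential (hC : Cells G M h e S R) (lab : Sym2 V → Γ) :
    ∃ P W, Potential G lab M h e S P W := by
  have : ∀ i r, ∃ W, i < M → WP G lab {z | z ∈ S i r} (h i r) (e i r) W ∧
      ∀ x ∈ S i r, ∃ φ, WP G lab {z | z ∈ S i r} (h i r) x φ ∧
        WP G lab {z | z ∈ S i r} x (e i r) (W - φ) := by
    intro i r
    by_cases hi : i < M
    · obtain ⟨W, hW⟩ := (hC.path i hi r).exists_weight lab
      exact ⟨W, fun _ => hW⟩
    · exact ⟨0, fun h => absurd h hi⟩
  choose W hW using this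
  exact ⟨fun i r => Nat.rec 0 (fun i x => x + W i r + lab s(e i r, h (i + 1) r)) i, W,
    fun i hi r => (hW i r hi).1, fun i hi r => (hW i r hi).2, fun i hi r => rfl⟩

/-- In the cells up to the `c`-th, there is a path from the end of the `c`-th segment of row `a` to
that of row `b`, whose weight exceeds the potentials of its ends by `w`. -/
def State (G : SimpleGraph V) (lab : Sym2 V → Γ) (e : ℕ → Fin 3 → V) (S : ℕ → Fin 3 → List V)
    (R : ℕ → Set V) (P W : ℕ → Fin 3 → Γ) (c : ℕ) (a b : Fin 3) (w : Γ) : Prop :=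
  WP G lab {x | ∃ i ≤ c, x ∈ cell S R i} (e c a) (e c b) ((P c a + W c a) + (P c b + W c b) + w)

theorem State.symm {c : ℕ} {a b : Fin 3} {w : Γ} (hs : State G lab e S R P W c a b w) :
    State G lab e S R P W c b a w := by
  have := WP.reverse hs
  unfold State
  rwa [add_comm (P c b + W c b)]

theorem two_subset (i : ℕ) (a b : Fin 3) : two S R i a b ⊆ cell S R i := by
  rintro x ((hx | hx) | hx)
  · exact Or.inr ⟨a, hx⟩
  · exact Or.inl hx.1
  · exact Or.inr ⟨b, hx⟩

theorem Cells.disjoint_old (hC : Cells G M h e S R) {c : ℕ} (hc : c + 1 < M) {T : Set V}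
    (hT : T ⊆ cell S R (c + 1)) : Disjoint {x | ∃ i ≤ c, x ∈ cell S R i} T := by
  refine Set.disjoint_left.2 ?_
  rintro x ⟨i, hi, hx⟩ hx'
  exact Set.disjoint_left.1 (hC.cellDisj i (by omega) (c + 1) hc (by omega)) hx (hT hx')

theorem State.extend (hC : Cells G M h e S R) (hP : Potential G lab M h e S P W) {c : ℕ}
    (hc : c + 1 < M) {a b : Fin 3} {w wa wb : Γ} (hs : State G lab e S R P W c a b w)
    {Ta Tb : Set V} {x y : V} (ha : WP G lab Ta (h (c + 1) a) x wa)
    (hb : WP G lab Tb (h (c + 1) b) y wb) (hTa : Ta ⊆ cell S R (c + 1))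
    (hTb : Tb ⊆ cell S R (c + 1)) (hd : Disjoint Ta Tb) :
    WP G lab {x | ∃ i ≤ c + 1, x ∈ cell S R i} x y
      (wa + wb + P (c + 1) a + P (c + 1) b + w) := by
  have h1 := WP.append hs hb (hC.adj c hc b) (hC.disjoint_old hc hTb)
  have h2 := WP.append ha.reverse h1 (hC.adj c hc a).symm
    (Set.disjoint_union_right.2 ⟨(hC.disjoint_old hc hTa).symm, hd⟩)
  have h3 := h2.mono (S' := {x | ∃ i ≤ c + 1, x ∈ cell S R i}) (by
    rintro z (hz | ⟨i, hi, hz⟩ | hz)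
    · exact ⟨c + 1, le_rfl, hTa hz⟩
    · exact ⟨i, by omega, hz⟩
    · exact ⟨c + 1, le_rfl, hTb hz⟩)
  convert h3 using 1
  rw [hP.step c hc a, hP.step c hc b, Sym2.eq_swap (a := h (c + 1) a)]
  abel

theorem State.pass (hC : Cells G M h e S R) (hP : Potential G lab M h e S P W) {c : ℕ}
    (hc : c + 1 < M) {a b : Fin 3} (hab : a ≠ b) {w : Γ} (hs : State G lab e S R P W c a b w) :
    State G lab e S R P W (c + 1) a b w := by
  have := hs.extend hC hP hc (hP.seg _ hc a) (hP.seg _ hc b) (fun x hx => Or.inr ⟨a, hx⟩)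
    (fun x hx => Or.inr ⟨b, hx⟩)
    (Set.disjoint_left.2 fun x hx hx' => hC.rowDisj _ hc a b hab x hx hx')
  unfold State
  convert this using 1
  abel

theorem State.pass_le (hC : Cells G M h e S R) (hP : Potential G lab M h e S P W) {c : ℕ}
    {a b : Fin 3} (hab : a ≠ b) {w : Γ} (hs : State G lab e S R P W c a b w) :
    ∀ n, c + n < M → State G lab e S R P W (c + n) a b w
  | 0, _ => hs
  | n + 1, hn => (State.pass_le hC hP hab hs n (by omega)).pass hC hP hn hab

theorem seg_disjoint_two (hC : Cells G M h e S R) {c : ℕ} (hc : c < M) {a b b' : Fin 3}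
    (hb : a ≠ b) (hb' : a ≠ b') : Disjoint {x | x ∈ S c a} (two S R c b b') := by
  refine Set.disjoint_left.2 ?_
  rintro x hx ((hxb | hxR) | hxb)
  · exact hC.rowDisj _ hc a b hb x hx hxb
  · exact hxR.2 a hx
  · exact hC.rowDisj _ hc a b' hb' x hx hxb

/-- The second strand uses a rung of a later column `c'` to change from row `b` to row `b'`. -/
theorem State.move (hC : Cells G M h e S R) (hP : Potential G lab M h e S P W) {c c' : ℕ}
    (hcc : c < c') (hc' : c' < M) {a b b' : Fin 3} (hab : a ≠ b) (hab' : a ≠ b') {w α β ρ : Γ}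
    (hs : State G lab e S R P W c a b w) (hr : Rung G lab h e S R P W c' b b' α β ρ) :
    State G lab e S R P W c' a b' (w + (ρ + α - β)) := by
  have hs' := State.pass_le hC hP hab hs (c' - 1 - c) (by omega)
  obtain ⟨d, rfl⟩ : ∃ d, c' = d + 1 := ⟨c' - 1, by omega⟩
  rw [show c + (d + 1 - 1 - c) = d by omega] at hs'
  have := hs'.extend hC hP hc' (hP.seg _ hc' a) hr.cross (fun x hx => Or.inr ⟨a, hx⟩)
    (two_subset _ _ _) (seg_disjoint_two hC hc' hab hab')
  unfold State
  convert this using 1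
  abel

theorem Rung.symm {i : ℕ} {a b : Fin 3} {α β ρ : Γ} (hr : Rung G lab h e S R P W i a b α β ρ) :
    Rung G lab h e S R P W i b a β α ρ := by
  have ht : two S R i a b = two S R i b a := by
    unfold two
    rw [Set.union_assoc, Set.union_comm, Set.union_comm {x | x ∈ R i ∧ ∀ r, x ∉ S i r}]
  refine ⟨?_, ?_, ?_, ?_⟩
  · rw [← ht]; convert hr.start.reverse using 1; abel
  · rw [← ht]; convert hr.cross' using 1
  · rw [← ht]; convert hr.cross using 1
  · rw [← ht]; convert hr.close.reverse using 1; abel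

theorem State.start {i : ℕ} {a b : Fin 3} {α β ρ : Γ}
    (hr : Rung G lab h e S R P W i a b α β ρ) : State G lab e S R P W i a b (ρ - α - β) :=
  hr.start.mono fun _ hx => ⟨i, le_rfl, two_subset _ _ _ hx⟩

theorem State.finish (hC : Cells G M h e S R) (hP : Potential G lab M h e S P W) {c c' : ℕ}
    (hcc : c < c') (hc' : c' < M) {a b : Fin 3} (hab : a ≠ b) {w α β ρ : Γ}
    (hs : State G lab e S R P W c a b w) (hr : Rung G lab h e S R P W c' a b α β ρ) :
    ∃ C : GraphCycle G, C.weight lab = w + (ρ + α + β) ∧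
      ∀ x ∈ C.walk.support, ∃ i < M, x ∈ cell S R i := by
  have hs' := State.pass_le hC hP hab hs (c' - 1 - c) (by omega)
  obtain ⟨d, rfl⟩ : ∃ d, c' = d + 1 := ⟨c' - 1, by omega⟩
  rw [show c + (d + 1 - 1 - c) = d by omega] at hs'
  obtain ⟨C, h1, h2⟩ := WP.close hs' hr.close.reverse (hC.adj d hc' b) (hC.adj d hc' a).symm
    (hC.disjoint_old hc' (two_subset _ _ _)) (fun hh => by
      have h1 := (hC.path d (by omega) a).last_mem
      have h2 := (hC.path d (by omega) b).last_mem
      exact hC.rowDisj d (by omega) a b hab _ h1 (hh ▸ h2))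
  refine ⟨C, ?_, fun x hx => ?_⟩
  · rw [h1, hP.step d hc' a, hP.step d hc' b, Sym2.eq_swap (a := h (d + 1) a)]
    abel
  · rcases h2 x hx with ⟨i, hi, hx⟩ | hx
    · exact ⟨i, by omega, hx⟩
    · exact ⟨d + 1, hc', two_subset _ _ _ hx⟩

/-- In columns that look alike, a suitable routing of the two strands has weight zero. Starting
from an `a`–`b` rung, the second strand visits row `c` and returns, which adds `2σ`. One round of four
moves (second strand to row `c`, first strand to row `b` and back, second strand back) adds
`2ρ + 2σ`, all potentials cancelling. Closing with an `a`–`b` rung after `m` rounds gives a cycle of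
weight `(m + 1)(2ρ + 2σ)`, which vanishes for `m + 1 = |Γ|`. -/
theorem homogeneous [Finite Γ] (hC : Cells G M h e S R) (hP : Potential G lab M h e S P W)
    {a b c : Fin 3} (hab : a ≠ b) (hbc : b ≠ c) (hac : a ≠ c) {α β ρ β' γ σ : Γ} (g : ℕ → ℕ)
    (hg : ∀ i j, i < j → j < 4 * Nat.card Γ → g i < g j)
    (hgM : ∀ i < 4 * Nat.card Γ, g i < M)
    (hA : ∀ i < 4 * Nat.card Γ, Rung G lab h e S R P W (g i) a b α β ρ)
    (hB : ∀ i < 4 * Nat.card Γ, Rung G lab h e S R P W (g i) b c β' γ σ) :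
    ∃ C : GraphCycle G, C.weight lab = 0 ∧ ∀ x ∈ C.walk.support, ∃ i < M, x ∈ cell S R i := by
  have hpos : 0 < Nat.card Γ := Nat.card_pos
  have key : ∀ m, m < Nat.card Γ → State G lab e S R P W (g (4 * m + 2)) a b
      (ρ - α - β + (σ + σ) + m • (ρ + ρ + (σ + σ))) := by
    intro m
    induction m with
    | zero =>
      intro _
      have s0 := State.start (hA 0 (by omega))
      have s1 := s0.move hC hP (hg 0 1 (by omega) (by omega)) (hgM 1 (by omega)) hab hac
        (hB 1 (by omega))
      have s2 := s1.move hC hP (hg 1 2 (by omega) (by omega)) (hgM 2 (by omega)) hac hab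
        (hB 2 (by omega)).symm
      convert s2 using 1
      rw [zero_smul]
      abel
    | succ m ih =>
      intro hm
      have s0 := ih (by omega)
      have s1 := s0.move hC hP (hg (4 * m + 2) (4 * m + 3) (by omega) (by omega))
        (hgM _ (by omega)) hab hac (hB (4 * m + 3) (by omega))
      have s2 := s1.symm.move hC hP (hg (4 * m + 3) (4 * m + 4) (by omega) (by omega))
        (hgM _ (by omega)) hac.symm hbc.symm (hA (4 * m + 4) (by omega))
      have s3 := s2.move hC hP (hg (4 * m + 4) (4 * m + 5) (by omega) (by omega))
        (hgM _ (by omega)) hbc.symm hac.symm (hA (4 * m + 5) (by omega)).symm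
      have s4 := s3.symm.move hC hP (hg (4 * m + 5) (4 * m + 6) (by omega) (by omega))
        (hgM _ (by omega)) hac hab (hB (4 * m + 6) (by omega)).symm
      rw [show 4 * (m + 1) + 2 = 4 * m + 6 by ring]
      convert s4 using 1
      rw [succ_nsmul]
      abel
  obtain ⟨m, hm⟩ : ∃ m, Nat.card Γ = m + 1 := ⟨Nat.card Γ - 1, by omega⟩
  obtain ⟨C, h1, h2⟩ := (key m (by omega)).finish hC hP
    (hg (4 * m + 2) (4 * m + 3) (by omega) (by omega)) (hgM _ (by omega)) hab
    (hA (4 * m + 3) (by omega))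
  refine ⟨C, ?_, h2⟩
  have h0 : (m + 1) • (ρ + ρ + (σ + σ)) = 0 := by rw [← hm]; exact card_nsmul_eq_zero'
  rw [h1, ← h0, succ_nsmul]
  abel

/-- Sufficiently many cells contain a zero cycle. -/
theorem exists_zero_cycle (Γ : Type) [AddCommGroup Γ] [Finite Γ] : ∃ M, ∀ (V : Type)
    (G : SimpleGraph V) (lab : Sym2 V → Γ) (h e : ℕ → Fin 3 → V) (S : ℕ → Fin 3 → List V)
    (R : ℕ → Set V), Cells G M h e S R → ∃ C : GraphCycle G, C.weight lab = 0 ∧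
      ∀ x ∈ C.walk.support, ∃ i < M, x ∈ cell S R i := by
  classical
  have := Fintype.ofFinite Γ
  let κ := (Fin 3 × Fin 3 × Fin 3) × (Γ × Γ × Γ) × (Γ × Γ × Γ)
  let L := 4 * Nat.card Γ
  refine ⟨Fintype.card κ * L, fun V G lab h e S R hC => ?_⟩
  obtain ⟨P, W, hP⟩ := hC.potential lab
  have hcol : ∀ i : Fin (Fintype.card κ * L), ∃ z : κ,
      (z.1.1 ≠ z.1.2.1 ∧ z.1.2.1 ≠ z.1.2.2 ∧ z.1.1 ≠ z.1.2.2) ∧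
      Rung G lab h e S R P W i z.1.1 z.1.2.1 z.2.1.1 z.2.1.2.1 z.2.1.2.2 ∧
      Rung G lab h e S R P W i z.1.2.1 z.1.2.2 z.2.2.1 z.2.2.2.1 z.2.2.2.2 := by
    intro i
    obtain ⟨a, b, c, hab, hbc, hac, t1, t2⟩ :=
      exists_center (lab := lab) (hC.conn i i.isLt) (hC.meet i i.isLt)
    obtain ⟨α, β, ρ, r1⟩ := exists_rung (P := P) (hC.rowDisj i i.isLt a b hab)
      (hP.cut i i.isLt) t1
    obtain ⟨β', γ, σ, r2⟩ := exists_rung (P := P) (hC.rowDisj i i.isLt b c hbc)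
      (hP.cut i i.isLt) t2
    exact ⟨((a, b, c), (α, β, ρ), (β', γ, σ)), ⟨hab, hbc, hac⟩, r1, r2⟩
  choose z hne hA hB using hcol
  obtain ⟨y, hy⟩ := Fintype.exists_le_card_fiber_of_mul_le_card z (n := L)
    (by rw [Fintype.card_fin])
  let g := Finset.orderEmbOfCardLe _ hy
  have hgz : ∀ i, z (g i) = y := fun i => (Finset.mem_filter.1
    (Finset.orderEmbOfCardLe_mem _ hy i)).2
  have hL : 0 < L := Nat.mul_pos (by omega) Nat.card_pos
  obtain ⟨n1, n2, n3⟩ := hne (g ⟨0, hL⟩)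
  rw [hgz] at n1 n2 n3
  refine homogeneous (α := y.2.1.1) (β := y.2.1.2.1) (ρ := y.2.1.2.2)
    (β' := y.2.2.1) (γ := y.2.2.2.1) (σ := y.2.2.2.2) hC hP n1 n2 n3
    (fun i => if hi : i < L then (g ⟨i, hi⟩ : ℕ) else 0)
    ?_ ?_ ?_ ?_
  · intro i j hij hj
    have hj' : j < L := hj
    have hi' : i < L := by omega
    simp only [hj', hi', dif_pos]
    exact g.strictMono hij
  · intro i hi
    have hi' : i < L := hi
    simp only [hi', dif_pos]
    exact (g ⟨i, hi'⟩).isLt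
  · intro i hi
    have hi' : i < L := hi
    simp only [hi', dif_pos]
    have := hA (g ⟨i, hi'⟩)
    rwa [hgz] at this
  · intro i hi
    have hi' : i < L := hi
    simp only [hi', dif_pos]
    have := hB (g ⟨i, hi'⟩)
    rwa [hgz] at this

end routing

/-! ### Packing and covering zero cycles -/

/-- There are `k` pairwise vertex-disjoint zero cycles in `G`. -/
def Packs {V Γ : Type} [AddCommGroup Γ] (G : SimpleGraph V) (lab : Sym2 V → Γ) (k : ℕ) : Prop :=
  ∃ C : Fin k → GraphCycle G, (∀ i, (C i).weight lab = 0) ∧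
    ∀ i j : Fin k, i ≠ j → List.Disjoint (C i).walk.support (C j).walk.support

/-- `X` meets every zero cycle of `G`. -/
def Hits {V Γ : Type} [AddCommGroup Γ] (G : SimpleGraph V) (lab : Sym2 V → Γ) (X : Set V) : Prop :=
  ∀ C : GraphCycle G, C.weight lab = 0 → ∃ x ∈ X, x ∈ C.walk.support

section packing

variable {V Γ : Type} [AddCommGroup Γ] {G : SimpleGraph V} {lab : Sym2 V → Γ}

theorem exists_lift {A : Set V} (C : GraphCycle (rest G A)) : ∃ C' : GraphCycle G,
    C'.weight lab = C.weight lab ∧ C'.walk.support = C.walk.support ∧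
      ∀ x ∈ C'.walk.support, x ∈ A := by
  have hle : rest G A ≤ G := fun _ _ h => h.1
  refine ⟨⟨C.base, C.walk.mapLe hle, C.isCycle.mapLe hle⟩, ?_, ?_, ?_⟩
  · simp [GraphCycle.weight]
  · simp
  · intro x hx
    have hx' : x ∈ C.walk.support := by simpa using hx
    obtain ⟨e, he, hxe⟩ := (Walk.mem_support_iff_exists_mem_edges_of_not_nil
      C.isCycle.not_nil).1 hx'
    have h1 := C.walk.edges_subset_edgeSet he
    induction e with
    | _ a b =>
      have h2 : (rest G A).Adj a b := h1
      rcases Sym2.mem_iff.1 hxe with rfl | rfl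
      · exact h2.2.1
      · exact h2.2.2

theorem exists_restrict {A : Set V} (C : GraphCycle G) (hC : ∀ x ∈ C.walk.support, x ∈ A) :
    ∃ C' : GraphCycle (rest G A),
      C'.weight lab = C.weight lab ∧ C'.walk.support = C.walk.support := by
  have h : ∀ e ∈ C.walk.edges, e ∈ (rest G A).edgeSet := by
    intro e he
    induction e with
    | _ a b =>
      exact ⟨C.walk.adj_of_mem_edges he, hC _ (C.walk.fst_mem_support_of_mem_edges he),
        hC _ (C.walk.snd_mem_support_of_mem_edges he)⟩
  exact ⟨⟨C.base, C.walk.transfer _ h, C.isCycle.transfer h⟩, by simp [GraphCycle.weight], by simp⟩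

theorem Packs.succ {A : Set V} {k : ℕ} (h : Packs (rest G A) lab k) (D : GraphCycle G)
    (hD : D.weight lab = 0) (hDA : ∀ x ∈ D.walk.support, x ∉ A) : Packs G lab (k + 1) := by
  obtain ⟨C, h1, h2⟩ := h
  choose C' h3 h4 h5 using fun i => exists_lift (lab := lab) (C i)
  refine ⟨Fin.cons D C', ?_, ?_⟩
  · intro i
    refine Fin.cases hD (fun i => ?_) i
    simp [h3, h1]
  · intro i j
    refine Fin.cases ?_ (fun i => ?_) i <;> refine Fin.cases ?_ (fun j => ?_) j
    · simp
    · intro _ x hx hx'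
      exact hDA x hx (h5 j x hx')
    · intro _ x hx' hx
      exact hDA x hx (h5 i x hx')
    · intro hij
      have := h2 i j fun h => hij (by rw [h])
      rw [← h4, ← h4] at this
      exact this

theorem cycle_connSet (C : GraphCycle G) : ConnSet G {x | x ∈ C.walk.support} :=
  chain_connSet C.walk.isChain_adj_support

/-- A large pseudo-grid splits into `k` consecutive blocks of cells, each containing a zero
cycle. -/
theorem exists_packs_of_pgrid (Γ : Type) [AddCommGroup Γ] [Finite Γ] (k : ℕ) : ∃ N, ∀ (V : Type)
    (G : SimpleGraph V) (lab : Sym2 V → Γ) (U : Set V) (Q : Fin 3 → List V) (R : ℕ → Set V),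
    PGrid G (N + 1) U Q R → Packs G lab k := by
  obtain ⟨M, hM⟩ := exists_zero_cycle Γ
  refine ⟨k * M, fun V G lab U Q R hG => ?_⟩
  obtain ⟨h, e, S, hC⟩ := hG.cells
  have hlt : ∀ j < k, j * M + M ≤ k * M := fun j hj => by
    have := Nat.mul_le_mul_right M (show j + 1 ≤ k from hj)
    rwa [add_mul, one_mul] at this
  choose C h1 h2 using fun j : Fin k => hM V G lab _ _ _ _
    (hC.of_le (M' := j * M + M) (by have := hlt j j.isLt; omega)).shift
  refine ⟨C, h1, ?_⟩
  have key : ∀ i j : Fin k, i < j → ∀ x ∈ (C i).walk.support, x ∉ (C j).walk.support := by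
    intro i j hij x hx hx'
    obtain ⟨a, ha, hxa⟩ := h2 i x hx
    obtain ⟨b, hb, hxb⟩ := h2 j x hx'
    have e1 := hlt i i.isLt
    have e2 := hlt j j.isLt
    have e3 : (i : ℕ) * M + M ≤ j * M := by
      have := Nat.mul_le_mul_right M (show (i : ℕ) + 1 ≤ j from hij)
      rwa [add_mul, one_mul] at this
    exact Set.disjoint_left.1
      (hC.cellDisj (i * M + a) (by omega) (j * M + b) (by omega) (by omega)) hxa hxb
  intro i j hij x hx hx'
  rcases lt_or_gt_of_ne hij with h | h
  · exact key i j h x hx hx'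
  · exact key j i h x hx' hx

/-- The Erdős–Pósa bound, by induction on `k`. If no small set hits all zero cycles, then after
deleting any `t` vertices all the zero cycles left lie in one component: with zero cycles in two
components, either one side packs `k` zero cycles, or both sides have small hitting sets. So the
supports of the zero cycles form a highly connected family, which yields a large pseudo-grid. -/
theorem erdosPosa (Γ : Type) [AddCommGroup Γ] [Finite Γ] (k : ℕ) : ∃ F, ∀ (V : Type) [Finite V]
    (G : SimpleGraph V) (lab : Sym2 V → Γ),
    Packs G lab k ∨ ∃ X : Set V, X.ncard ≤ F ∧ Hits G lab X := by
  induction k with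
  | zero => exact ⟨0, fun V _ G lab => Or.inl ⟨fun i => i.elim0, fun i => i.elim0, fun i => i.elim0⟩⟩
  | succ k ih =>
    obtain ⟨F, hF⟩ := ih
    obtain ⟨N, hN⟩ := exists_packs_of_pgrid Γ (k + 1)
    obtain ⟨t, ht⟩ := exists_pgrid N
    refine ⟨t + (F + F), fun V _ G lab => ?_⟩
    by_contra! hcon
    obtain ⟨hP, hX⟩ := hcon
    suffices h : ∃ Q R, PGrid G (N + 1) Set.univ Q R by
      obtain ⟨Q, R, hQR⟩ := h
      exact hP (hN V G lab _ Q R hQR)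
    refine ht V G {D | ∃ C : GraphCycle G, C.weight lab = 0 ∧
      D = {x | x ∈ C.walk.support}} ?_ ?_ ?_ ?_
    · rintro _ ⟨C, -, rfl⟩
      exact ⟨C.base, C.walk.start_mem_support⟩
    · rintro _ ⟨C, -, rfl⟩
      exact cycle_connSet C
    · intro S hS
      have := hX S (by omega)
      simp only [Hits] at this
      push Not at this
      obtain ⟨C, hC, hCS⟩ := this
      exact ⟨_, ⟨C, hC, rfl⟩, Set.disjoint_left.2 fun x hx hxS => hCS x hxS hx⟩
    · rintro S hS _ ⟨C, hC, rfl⟩ _ ⟨C', hC', rfl⟩ hd hd' d hdC d' hdC'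
      by_contra hnc
      let A : Set V := {z | Conn G Sᶜ d z}
      let B : Set V := Sᶜ \ A
      -- a cycle avoiding `S` lies entirely in `A` or entirely in `B`
      have hsplit : ∀ E : GraphCycle G, (∀ x ∈ E.walk.support, x ∉ S) →
          ∀ y ∈ E.walk.support, ∀ x ∈ E.walk.support, y ∈ A → x ∈ A := by
        intro E hE y hy x hx hyA
        exact Conn.trans hyA ((cycle_connSet E y hy x hx).mono le_rfl hE)
      have hCS : ∀ x ∈ C.walk.support, x ∉ S := fun x hx => Set.disjoint_left.1 hd hx
      have hCS' : ∀ x ∈ C'.walk.support, x ∉ S := fun x hx => Set.disjoint_left.1 hd' hx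
      have hCA : ∀ x ∈ C.walk.support, x ∈ A := fun x hx =>
        hsplit C hCS d hdC x hx (Conn.refl (hCS d hdC))
      have hCA' : ∀ x ∈ C'.walk.support, x ∉ A := fun x hx hxA =>
        hnc (hsplit C' hCS' x hx d' hdC' hxA)
      rcases hF V (rest G A) lab with h | ⟨X, hXF, hXA⟩
      · exact hP (h.succ C' hC' hCA')
      rcases hF V (rest G B) lab with h | ⟨Y, hYF, hYB⟩
      · exact hP (h.succ C hC fun x hx hxB => hxB.2 (hCA x hx))
      refine hX (S ∪ (X ∪ Y)) ?_ ?_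
      · have := Set.ncard_union_le S (X ∪ Y)
        have := Set.ncard_union_le X Y
        omega
      · intro E hE
        by_contra! hmiss
        have hES : ∀ x ∈ E.walk.support, x ∉ S := fun x hx hxS => hmiss x (Or.inl hxS) hx
        by_cases hbase : E.base ∈ A
        · obtain ⟨E', hw, hs⟩ := exists_restrict (lab := lab) (A := A) E fun x hx =>
            hsplit E hES _ E.walk.start_mem_support x hx hbase
          obtain ⟨x, hx, hxE⟩ := hXA E' (hw.trans hE)
          exact hmiss x (Or.inr (Or.inl hx)) (hs ▸ hxE)
        · obtain ⟨E', hw, hs⟩ := exists_restrict (lab := lab) (A := B) E fun x hx =>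
            ⟨hES x hx, fun hxA => hbase (hsplit E hES x hx _ E.walk.start_mem_support hxA)⟩
          obtain ⟨x, hx, hxE⟩ := hYB E' (hw.trans hE)
          exact hmiss x (Or.inr (Or.inr hx)) (hs ▸ hxE)

end packing

end ZeroCycles

/-- Let `Γ` be a finite Abelian group. The cycles of weight
zero (with respect to `Γ`) have the Erdős–Pósa property. -/
theorem zero_cycles_erdosPosa (Γ : Type) [AddCommGroup Γ] [Finite Γ] :
    ∃ f : ℕ → ℕ, ∀ (V : Type) [Fintype V] (G : SimpleGraph V)
        (lab : Sym2 V → Γ) (k : ℕ),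
      (∃ C : Fin k → GraphCycle G, (∀ i, (C i).weight lab = 0) ∧
        ∀ i j : Fin k, i ≠ j →
          List.Disjoint (C i).walk.support (C j).walk.support) ∨
      (∃ X : Finset V, X.card ≤ f k ∧
        ∀ C : GraphCycle G, C.weight lab = 0 → ∃ x ∈ X, x ∈ C.walk.support) := by
  classical
  choose f hf using ZeroCycles.erdosPosa Γ
  refine ⟨f, fun V _ G lab k => (hf k V G lab).imp id ?_⟩
  rintro ⟨X, hX, hit⟩
  refine ⟨X.toFinset, by rwa [← Set.ncard_eq_toFinset_card'], fun C hC => ?_⟩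
  obtain ⟨x, hx, hxC⟩ := hit C hC
  exact ⟨x, Set.mem_toFinset.2 hx, hxC⟩
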